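/- Fix n ≥ 2 and 1 ≤ k ≤ n−1, and let L_k be the modular non-distributive lattice obtained from the distributive lattice D = I(P) (where P is the sum of a chain with an isolated element, with elements of D labeled x_1, …, x_n, y_1, …, y_n so that x_{i+1} ∧ y_{i+1} = x_i ∨ y_i covers x_i and y_i) by inserting one extra element z with x_k ∨ y_k = x_{k+1} ∧ y_{k+1} < z being a new atom of the interval, i.e., z lies strictly between x_k ∨ y_k and x_{k+1} ∧ y_{k+1} making a diamond. Then for the join-meet ideal I = I_{L_k} ⊂ S = K[x_1, …, x_n, y_1, …, y_n, z], the Castelnuovo–Mumford regularity satisfies reg(S/I) = reg(S/in_<(I)) = 3, where in_<(I) is the initial ideal with respect to the lexicographic order induced by x_1 > ⋯ > x_n > y_1 > ⋯ > y_n > z. -/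

import Mathlib

open MvPolynomial

/-- The join-meet ideal `I_L` of a finite lattice `L`, generated by
`x_a x_b − x_{a∧b} x_{a∨b}` for incomparable `a, b ∈ L`. -/
noncomputable def joinMeetIdeal (K : Type*) [Field K] (L : Type*) [Lattice L] :
    Ideal (MvPolynomial L K) :=
  Ideal.span {f | ∃ a b : L, ¬ a ≤ b ∧ ¬ b ≤ a ∧ f = X a * X b - X (a ⊓ b) * X (a ⊔ b)}

def mdeg {σ : Type*} (m : σ →₀ ℕ) : ℕ := m.sum fun _ e => e

/-- A minimal graded free resolution
`⋯ → F_{i+1} → F_i → ⋯ → F_0 → S/I → 0` of `S/I` over `S = K[x_s : s ∈ σ]`.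
`F_i` is free with finite homogeneous basis `B i`, the basis element `b : B i` having
degree `deg i b`; the differentials are graded and have entries in the graded maximal
ideal (minimality); `ε` is a lift of the augmentation `F_0 → S/I`. -/
structure MinGradedFreeRes (K : Type*) [Field K] (σ : Type*) (I : Ideal (MvPolynomial σ K)) where
  B : ℕ → Type
  finB : ∀ i, Finite (B i)
  deg : ∀ i, B i → ℕ
  d : ∀ i, ((B (i + 1)) →₀ MvPolynomial σ K) →ₗ[MvPolynomial σ K] ((B i) →₀ MvPolynomial σ K)
  ε : ((B 0) →₀ MvPolynomial σ K) →ₗ[MvPolynomial σ K] MvPolynomial σ K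
  ε_homog : ∀ b : B 0, (ε (Finsupp.single b 1)).IsHomogeneous (deg 0 b)
  surj : ∀ s : MvPolynomial σ K, ∃ t, ε t - s ∈ I
  exact0 : LinearMap.range (d 0) = Submodule.comap ε (I : Submodule _ _)
  exact : ∀ i, LinearMap.range (d (i + 1)) = LinearMap.ker (d i)
  homog : ∀ i (b : B (i + 1)) (c : B i),
    ∀ m ∈ ((d i (Finsupp.single b 1)) c).support, mdeg m + deg i c = deg (i + 1) b
  minimal : ∀ i (b : B (i + 1)) (c : B i), coeff 0 ((d i (Finsupp.single b 1)) c) = 0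

/-- The graded Betti number `β_{i,j}(S/I)` read off from a minimal graded free resolution:
the number of basis elements of `F_i` of degree `j`. -/
noncomputable def MinGradedFreeRes.betti {K : Type*} [Field K] {σ : Type*}
    {I : Ideal (MvPolynomial σ K)} (F : MinGradedFreeRes K σ I) (i j : ℕ) : ℕ :=
  Nat.card {b : F.B i // F.deg i b = j}

/-- `reg(S/I) = r`: in any minimal graded free resolution all shifts satisfy `j - i ≤ r`,
with equality attained, i.e. `max { j - i : β_{i,j}(S/I) ≠ 0 } = r`. -/
def RegEq {K : Type*} [Field K] {σ : Type*} (I : Ideal (MvPolynomial σ K)) (r : ℕ) : Prop :=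
  Nonempty (MinGradedFreeRes K σ I) ∧
    ∀ F : MinGradedFreeRes K σ I,
      (∀ i (b : F.B i), F.deg i b ≤ i + r) ∧ (∃ i, ∃ b : F.B i, F.deg i b = i + r)

/-!
For the upper bound, `reg ≤ r` is propagated along the exact sequences
`0 → S/(I : f)(-d) → S/I → S/(I + f) → 0`. For the initial ideal, `f` runs through `z`, `y_k`, `x_k`
and `x_{k+1}` until only ideals generated by variables and by the edges `xᵢyⱼ` of a Ferrers graph
are left; their quotients have regularity at most one. The join-meet ideal is
`I₂ + (xⱼ : j > k)(z - y_k) + (yⱼ : j ≤ k)(z - x_{k+1})`, where `I₂` is generated by the `2 × 2`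
minors of the matrix with rows `x` and `y`. Here `f` is `z - y_k`: since `I₂` is toric, the linear
forms involved are nonzerodivisors, and what remains is generated by variables and minors.

For the lower bound, the substitution `x_k, y_{k+1} ↦ a`, `x_{k+1} ↦ p`, `y_k ↦ q`, `z ↦ p + q`, all
other variables going to zero, maps the join-meet ideal into `(p², q², a² - pq)` and the initial
ideal into `(p, q³, a²)`. Comparing a minimal free resolution of `S/I` with the Koszul complex of
these regular sequences forces a generator of degree `6` in homological degree `3`.
-/

namespace LkRegularity

attribute [local instance] MvPolynomial.gradedAlgebra

section GradedModules

universe u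

variable {S : Type u} [CommRing S] (G : ℤ → AddSubgroup S)

/-- The graded pieces of the free module `⨁ S(-deg b)`. A graded module is encoded throughout as
an ambient module together with the family of its graded pieces, which need not span it. -/
def freeGr {ι : Type} (deg : ι → ℤ) (j : ℤ) : AddSubgroup (ι →₀ S) where
  carrier := {f | ∀ b, f b ∈ G (j - deg b)}
  add_mem' hf hg b := add_mem (hf b) (hg b)
  zero_mem' _ := zero_mem _
  neg_mem' hf b := neg_mem (hf b)

variable {M N Q : Type u} [AddCommGroup M] [Module S M] [AddCommGroup N] [Module S N]
  [AddCommGroup Q] [Module S Q]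

/-- The graded pieces of the kernel of `f`. -/
def kerGr (A : ℤ → AddSubgroup M) (f : M →ₗ[S] N) (j : ℤ) : AddSubgroup M :=
  A j ⊓ (LinearMap.ker f).toAddSubgroup

/-- The graded pieces of a product. -/
def prodGr (A : ℤ → AddSubgroup M) (B : ℤ → AddSubgroup N) (j : ℤ) : AddSubgroup (M × N) :=
  (A j).prod (B j)

/-- The graded pieces of the twist `A(-d)`. -/
def shiftGr (A : ℤ → AddSubgroup M) (d j : ℤ) : AddSubgroup M := A (j - d)

variable {G}

theorem mem_kerGr {A : ℤ → AddSubgroup M} {f : M →ₗ[S] N} {j : ℤ} {m : M} :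
    m ∈ kerGr A f j ↔ m ∈ A j ∧ f m = 0 := Iff.rfl

theorem mem_prodGr {A : ℤ → AddSubgroup M} {B : ℤ → AddSubgroup N} {j : ℤ} {x : M × N} :
    x ∈ prodGr A B j ↔ x.1 ∈ A j ∧ x.2 ∈ B j := Iff.rfl

theorem single_mem_freeGr {ι : Type} {deg : ι → ℤ} {j : ℤ} (b : ι) {p : S}
    (hp : p ∈ G (j - deg b)) : Finsupp.single b p ∈ freeGr G deg j := by
  classical
  intro c
  obtain rfl | h := eq_or_ne b c
  · simpa using hp
  · simp [h]

instance [SetLike.GradedMonoid G] {ι : Type} (deg : ι → ℤ) :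
    SetLike.GradedSMul G (freeGr G deg) where
  smul_mem {d j p f} hp hf b := by
    have := SetLike.mul_mem_graded hp (hf b)
    rwa [← add_sub_assoc] at this

theorem smul_mem_graded {A : ℤ → AddSubgroup M} [SetLike.GradedSMul G A] {i j : ℤ} {p : S} {m : M}
    (hp : p ∈ G i) (hm : m ∈ A j) : p • m ∈ A (i + j) :=
  SetLike.GradedSMul.smul_mem hp hm

instance {A : ℤ → AddSubgroup M} [SetLike.GradedSMul G A] (f : M →ₗ[S] N) :
    SetLike.GradedSMul G (kerGr A f) where
  smul_mem {_ _ _ _} hp hm := mem_kerGr.2 ⟨smul_mem_graded hp (mem_kerGr.1 hm).1, by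
    rw [map_smul, (mem_kerGr.1 hm).2, smul_zero]⟩

instance {A : ℤ → AddSubgroup M} {B : ℤ → AddSubgroup N} [SetLike.GradedSMul G A]
    [SetLike.GradedSMul G B] : SetLike.GradedSMul G (prodGr A B) where
  smul_mem {_ _ _ _} hp hm := mem_prodGr.2
    ⟨smul_mem_graded hp (mem_prodGr.1 hm).1, smul_mem_graded hp (mem_prodGr.1 hm).2⟩

instance {A : ℤ → AddSubgroup M} [SetLike.GradedSMul G A] (d : ℤ) :
    SetLike.GradedSMul G (shiftGr A d) where
  smul_mem {i j p m} hp hm := by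
    have := smul_mem_graded (A := A) hp hm
    rwa [← add_sub_assoc] at this

/-- A linear map preserving degrees. -/
def IsGradedHom (A : ℤ → AddSubgroup M) (B : ℤ → AddSubgroup N) (f : M →ₗ[S] N) : Prop :=
  ∀ ⦃j m⦄, m ∈ A j → f m ∈ B j

/-- A linear map preserving degrees and surjective in each degree. -/
structure IsGradedSurj (A : ℤ → AddSubgroup M) (B : ℤ → AddSubgroup N) (f : M →ₗ[S] N) :
    Prop where
  hom : IsGradedHom A B f
  surj : ∀ ⦃j b⦄, b ∈ B j → ∃ a ∈ A j, f a = b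

/-- A linear map preserving degrees and bijective in each degree. -/
structure IsGradedIso (A : ℤ → AddSubgroup M) (B : ℤ → AddSubgroup N) (f : M →ₗ[S] N) : Prop
    extends IsGradedSurj A B f where
  inj : ∀ ⦃j a⦄, a ∈ A j → f a = 0 → a = 0

variable {A : ℤ → AddSubgroup M} {B : ℤ → AddSubgroup N} {C : ℤ → AddSubgroup Q}

theorem IsGradedSurj.comp {f : M →ₗ[S] N} {g : N →ₗ[S] Q} (hg : IsGradedSurj B C g)
    (hf : IsGradedSurj A B f) : IsGradedSurj A C (g ∘ₗ f) where
  hom _ _ hm := hg.hom (hf.hom hm)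
  surj _ c hc := by
    obtain ⟨b, hb, rfl⟩ := hg.surj hc
    obtain ⟨a, ha, rfl⟩ := hf.surj hb
    exact ⟨a, ha, rfl⟩

theorem isGradedHom_freeGr [SetLike.GradedSMul G A] {ι : Type} {deg : ι → ℤ}
    {φ : (ι →₀ S) →ₗ[S] M} (h : ∀ b, φ (Finsupp.single b 1) ∈ A (deg b)) :
    IsGradedHom (freeGr G deg) A φ := by
  intro j f hf
  have hsum : φ f = f.sum fun b p => p • φ (Finsupp.single b 1) := by
    conv_lhs => rw [← Finsupp.sum_single f, map_finsuppSum]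
    exact Finsupp.sum_congr fun b _ => by rw [← map_smul, Finsupp.smul_single_one]
  rw [hsum]
  refine sum_mem fun b _ => ?_
  have := SetLike.GradedSMul.smul_mem (hf b) (h b)
  rwa [vadd_eq_add, sub_add_cancel] at this

theorem single_one_mem_freeGr [SetLike.GradedMonoid G] {ι : Type} (deg : ι → ℤ) (b : ι) :
    Finsupp.single b 1 ∈ freeGr G deg (deg b) :=
  single_mem_freeGr b (by rw [sub_self]; exact SetLike.one_mem_graded G)

theorem IsGradedSurj.exists_lift [SetLike.GradedMonoid G] [SetLike.GradedSMul G B]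
    {g : N →ₗ[S] Q} (hg : IsGradedSurj B C g) {ι : Type} {deg : ι → ℤ} {φ : (ι →₀ S) →ₗ[S] Q}
    (hφ : IsGradedHom (freeGr G deg) C φ) :
    ∃ ψ : (ι →₀ S) →ₗ[S] N, IsGradedHom (freeGr G deg) B ψ ∧ ∀ x, g (ψ x) = φ x := by
  choose e heB he using fun b => hg.surj (hφ (single_one_mem_freeGr deg b))
  refine ⟨Finsupp.linearCombination S e, isGradedHom_freeGr fun b => by simpa using heB b,
    fun x => ?_⟩
  rw [← LinearMap.comp_apply]
  congr 1
  ext b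
  simpa using he b

variable (G)

/-- The module with graded pieces `A` has the first `t` steps of a graded free resolution
`⋯ → F₁ → F₀ → A` with `F_l` generated in degrees at most `l + r`. -/
def RegLE : ℕ → {M : Type u} → [AddCommGroup M] → [Module S M] → (ℤ → AddSubgroup M) → ℤ → Prop
  | 0, _, _, _, _, _ => True
  | t + 1, M, _, _, A, r => ∃ (ι : Type) (deg : ι → ℤ) (φ : (ι →₀ S) →ₗ[S] M),
      (∀ b, deg b ≤ r) ∧ IsGradedSurj (freeGr G deg) A φ ∧
        RegLE t (kerGr (freeGr G deg) φ) (r + 1)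

variable {G} {t : ℕ} {r : ℤ}

theorem RegLE.mono {r' : ℤ} (hr : r ≤ r') (h : RegLE G t A r) : RegLE G t A r' := by
  induction t generalizing M r r' with
  | zero => trivial
  | succ t ih =>
    obtain ⟨ι, deg, φ, hdeg, hφ, hker⟩ := h
    exact ⟨ι, deg, φ, fun b => (hdeg b).trans hr, hφ, ih (by omega) hker⟩

theorem RegLE.of_eq_zero (hA : ∀ j, ∀ a ∈ A j, a = 0) : RegLE G t A r := by
  induction t generalizing M r with
  | zero => trivial
  | succ t ih =>
    exact ⟨Empty, Empty.elim, 0, nofun,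
      ⟨fun j m _ => by simp, fun j b hb => ⟨0, zero_mem _, by simp [hA j b hb]⟩⟩,
      ih fun _ _ _ => Subsingleton.elim _ _⟩

theorem RegLE.of_free {ι : Type} {deg : ι → ℤ} (hdeg : ∀ b, deg b ≤ r) :
    RegLE G t (freeGr G deg) r := by
  cases t with
  | zero => trivial
  | succ t => exact ⟨ι, deg, LinearMap.id, hdeg, ⟨fun _ _ h => h, fun _ b hb => ⟨b, hb, rfl⟩⟩,
      .of_eq_zero fun _ _ h => h.2⟩

theorem kerGr_comp_of_inj {f : N →ₗ[S] Q} {φ : M →ₗ[S] N} (hφ : IsGradedHom A B φ)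
    (hf : ∀ ⦃j b⦄, b ∈ B j → f b = 0 → b = 0) : kerGr A (f ∘ₗ φ) = kerGr A φ := by
  ext j a
  refine and_congr_right fun ha => ⟨fun h => hf (hφ ha) h, fun h => ?_⟩
  exact (congrArg f h).trans (map_zero f)

theorem RegLE.of_iso {f : M →ₗ[S] N} (hf : IsGradedIso A B f) (h : RegLE G t A r) :
    RegLE G t B r := by
  cases t with
  | zero => trivial
  | succ t =>
    obtain ⟨ι, deg, φ, hdeg, hφ, hker⟩ := h
    refine ⟨ι, deg, f ∘ₗ φ, hdeg, hf.toIsGradedSurj.comp hφ, ?_⟩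
    rwa [kerGr_comp_of_inj hφ.hom hf.inj]

theorem RegLE.of_iso_symm [SetLike.GradedMonoid G] [SetLike.GradedSMul G A] {f : M →ₗ[S] N}
    (hf : IsGradedIso A B f) (h : RegLE G t B r) : RegLE G t A r := by
  cases t with
  | zero => trivial
  | succ t =>
    obtain ⟨ι, deg, φ, hdeg, hφ, hker⟩ := h
    obtain ⟨ψ, hψ, hfψ⟩ := hf.exists_lift hφ.hom
    refine ⟨ι, deg, ψ, hdeg, ⟨hψ, fun j a ha => ?_⟩, ?_⟩
    · obtain ⟨x, hx, hxa⟩ := hφ.surj (hf.hom ha)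
      refine ⟨x, hx, (sub_eq_zero.1 (hf.inj (sub_mem ha (hψ hx)) ?_)).symm⟩
      rw [map_sub, hfψ, hxa, sub_self]
    · obtain rfl : f ∘ₗ ψ = φ := LinearMap.ext hfψ
      rwa [kerGr_comp_of_inj hψ hf.inj] at hker

theorem RegLE.shift (d : ℤ) (h : RegLE G t A r) : RegLE G t (shiftGr A d) (r + d) := by
  induction t generalizing M r with
  | zero => trivial
  | succ t ih =>
    obtain ⟨ι, deg, φ, hdeg, hφ, hker⟩ := h
    have hshift : freeGr G (fun b => deg b + d) =
        shiftGr (freeGr G deg) d := by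
      ext j f
      exact forall_congr' fun b => by rw [sub_add_eq_sub_sub_swap]
    refine ⟨ι, fun b => deg b + d, φ, fun b => by linarith [hdeg b], ?_, ?_⟩
    · rw [hshift]
      exact ⟨fun j m hm => hφ.hom hm, fun j b hb => hφ.surj hb⟩
    · rw [hshift, add_right_comm]
      exact ih hker

end GradedModules

section ExactSequences

universe u

variable {S : Type u} [CommRing S] {G : ℤ → AddSubgroup S}
  {M N Q : Type u} [AddCommGroup M] [Module S M] [AddCommGroup N] [Module S N]
  [AddCommGroup Q] [Module S Q]
  {A : ℤ → AddSubgroup M} {B : ℤ → AddSubgroup N} {C : ℤ → AddSubgroup Q} {t : ℕ} {r : ℤ}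

theorem isGradedIso_sum {ι κ : Type} (deg : ι → ℤ) (deg' : κ → ℤ) :
    IsGradedIso (freeGr G (Sum.elim deg deg')) (prodGr (freeGr G deg) (freeGr G deg'))
      (Finsupp.sumFinsuppLEquivProdFinsupp S).toLinearMap := by
  have hmem (j : ℤ) (x : ι ⊕ κ →₀ S) : x ∈ freeGr G (Sum.elim deg deg') j ↔
      Finsupp.sumFinsuppLEquivProdFinsupp S x ∈ prodGr (freeGr G deg) (freeGr G deg') j :=
    Sum.forall
  refine ⟨⟨fun j x hx => (hmem j x).1 hx, fun j y hy => ?_⟩,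
    fun j x _ hx => (LinearEquiv.map_eq_zero_iff _).1 hx⟩
  obtain ⟨x, rfl⟩ := (Finsupp.sumFinsuppLEquivProdFinsupp S).surjective y
  exact ⟨x, (hmem j x).2 hy, rfl⟩

theorem RegLE.of_prod_cover [SetLike.GradedMonoid G] {ι κ : Type} {deg : ι → ℤ} {deg' : κ → ℤ}
    {π : (ι →₀ S) × (κ →₀ S) →ₗ[S] N} (hdeg : ∀ b, deg b ≤ r) (hdeg' : ∀ b, deg' b ≤ r)
    (hπ : IsGradedSurj (prodGr (freeGr G deg) (freeGr G deg')) B π)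
    (hker : RegLE G t (kerGr (prodGr (freeGr G deg) (freeGr G deg')) π) (r + 1)) :
    RegLE G (t + 1) B r := by
  have he := isGradedIso_sum (G := G) deg deg'
  refine ⟨ι ⊕ κ, Sum.elim deg deg', π ∘ₗ (Finsupp.sumFinsuppLEquivProdFinsupp S).toLinearMap,
    Sum.forall.2 ⟨hdeg, hdeg'⟩, hπ.comp he.toIsGradedSurj, ?_⟩
  refine hker.of_iso_symm (f := (Finsupp.sumFinsuppLEquivProdFinsupp S).toLinearMap)
    ⟨⟨fun j x hx => mem_kerGr.2 ⟨he.hom (mem_kerGr.1 hx).1, hx.2⟩, fun j y hy => ?_⟩,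
      fun j x hx => he.inj (mem_kerGr.1 hx).1⟩
  obtain ⟨x, hx, rfl⟩ := he.surj hy.1
  exact ⟨x, ⟨hx, hy.2⟩, rfl⟩

section Horseshoe

variable {F₁ F₂ : Type u} [AddCommGroup F₁] [Module S F₁] [AddCommGroup F₂] [Module S F₂]
  {E₁ : ℤ → AddSubgroup F₁} {E₂ : ℤ → AddSubgroup F₂}
  {g : N →ₗ[S] Q} {α : F₁ →ₗ[S] N} {γ : F₂ →ₗ[S] Q} {ψ : F₂ →ₗ[S] N}

theorem IsGradedSurj.coprod (hg : IsGradedSurj B C g) (hα : IsGradedSurj E₁ (kerGr B g) α)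
    (hγ : IsGradedSurj E₂ C γ) (hψ : IsGradedHom E₂ B ψ) (hgψ : ∀ y, g (ψ y) = γ y) :
    IsGradedSurj (prodGr E₁ E₂) B (α.coprod ψ) where
  hom _ _ hx := add_mem (mem_kerGr.1 (hα.hom hx.1)).1 (hψ hx.2)
  surj j b hb := by
    obtain ⟨y, hy, hyb⟩ := hγ.surj (hg.hom hb)
    obtain ⟨x, hx, hxb⟩ := hα.surj (j := j) (b := b - ψ y)
      (mem_kerGr.2 ⟨sub_mem hb (hψ hy), by rw [map_sub, hgψ, hyb, sub_self]⟩)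
    exact ⟨(x, y), ⟨hx, hy⟩, by rw [LinearMap.coprod_apply, hxb, sub_add_cancel]⟩

theorem IsGradedSurj.snd_ker_coprod (hα : IsGradedSurj E₁ (kerGr B g) α)
    (hψ : IsGradedHom E₂ B ψ) (hgψ : ∀ y, g (ψ y) = γ y) :
    IsGradedSurj (kerGr (prodGr E₁ E₂) (α.coprod ψ)) (kerGr E₂ γ) (LinearMap.snd S F₁ F₂) where
  hom j x hx := by
    obtain ⟨hxE, hx0⟩ := mem_kerGr.1 hx
    have h := congrArg g hx0
    rw [LinearMap.coprod_apply, map_add, (mem_kerGr.1 (hα.hom hxE.1)).2, zero_add, hgψ,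
      map_zero] at h
    exact ⟨hxE.2, h⟩
  surj j y hy := by
    obtain ⟨hyE, hy0⟩ := mem_kerGr.1 hy
    obtain ⟨x, hx, hxy⟩ := hα.surj (j := j) (b := -ψ y)
      (mem_kerGr.2 ⟨neg_mem (hψ hyE), by rw [map_neg, hgψ, hy0, neg_zero]⟩)
    exact ⟨(x, y), mem_kerGr.2 ⟨⟨hx, hyE⟩, by rw [LinearMap.coprod_apply, hxy, neg_add_cancel]⟩,
      rfl⟩

theorem isGradedIso_inl_ker_snd :
    IsGradedIso (kerGr E₁ α) (kerGr (kerGr (prodGr E₁ E₂) (α.coprod ψ)) (LinearMap.snd S F₁ F₂))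
      (LinearMap.inl S F₁ F₂) where
  hom j x hx := mem_kerGr.2 ⟨mem_kerGr.2 ⟨⟨(mem_kerGr.1 hx).1, zero_mem _⟩, by
    simpa using (mem_kerGr.1 hx).2⟩, rfl⟩
  surj := by
    rintro j ⟨x, y⟩ ⟨⟨hx, hxy⟩, rfl : y = 0⟩
    refine ⟨x, mem_kerGr.2 ⟨hx.1, ?_⟩, rfl⟩
    have hxy : α x + ψ 0 = 0 := hxy
    rwa [map_zero, add_zero] at hxy
  inj _ _ _ hx := congrArg Prod.fst hx

end Horseshoe

variable [SetLike.GradedMonoid G] {g : N →ₗ[S] Q}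

theorem RegLE.of_ker_of_surj [SetLike.GradedSMul G B] (hg : IsGradedSurj B C g)
    (hker : RegLE G t (kerGr B g) r) (hC : RegLE G t C r) : RegLE G t B r := by
  induction t generalizing N Q r with
  | zero => trivial
  | succ t ih =>
    obtain ⟨ι, deg, α, hdeg, hα, hkerα⟩ := hker
    obtain ⟨κ, deg', γ, hdeg', hγ, hkerγ⟩ := hC
    obtain ⟨ψ, hψ, hgψ⟩ := hg.exists_lift hγ.hom
    exact .of_prod_cover hdeg hdeg' (hg.coprod hα hγ hψ hgψ)
      (ih (hα.snd_ker_coprod hψ hgψ) (hkerα.of_iso isGradedIso_inl_ker_snd) hkerγ)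

theorem RegLE.of_surj_of_ker (hg : IsGradedSurj B C g)
    (hker : RegLE G t (kerGr B g) (r + 1)) (hB : RegLE G (t + 1) B r) : RegLE G (t + 1) C r := by
  obtain ⟨ι, deg, φ, hdeg, hφ, hkerφ⟩ := hB
  refine ⟨ι, deg, g ∘ₗ φ, hdeg, hg.comp hφ, .of_ker_of_surj (g := φ) (C := kerGr B g)
    ⟨fun j x hx => ⟨hφ.hom hx.1, hx.2⟩, fun j b hb => ?_⟩ ?_ hker⟩
  · obtain ⟨x, hx, rfl⟩ := hφ.surj hb.1
    exact ⟨x, ⟨hx, hb.2⟩, rfl⟩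
  · have : kerGr (kerGr (freeGr G deg) (g ∘ₗ φ)) φ = kerGr (freeGr G deg) φ := by
      ext j x
      exact ⟨fun h => ⟨h.1.1, h.2⟩, fun h => ⟨⟨h.1, (congrArg g h.2).trans (map_zero g)⟩, h.2⟩⟩
    rwa [this]

/- Pulling `g : B → C` back along a free cover `F → C` gives `ker g × F`, which is an extension
of `B` by `ker (F → C)` and also an extension of `ker g` by `F`. -/
theorem RegLE.ker_of_surj [SetLike.GradedSMul G B] (hg : IsGradedSurj B C g)
    (hB : RegLE G t B r) (hC : RegLE G (t + 1) C (r - 1)) : RegLE G t (kerGr B g) r := by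
  obtain ⟨ι, deg, φ, hdeg, hφ, hkerφ⟩ := hC
  rw [sub_add_cancel] at hkerφ
  obtain ⟨ψ, hψ, hgψ⟩ := hg.exists_lift hφ.hom
  have hid : IsGradedIso (kerGr B g) (kerGr B g) (LinearMap.id : N →ₗ[S] N) :=
    ⟨⟨fun _ _ h => h, fun _ b hb => ⟨b, hb, rfl⟩⟩, fun _ _ _ h => h⟩
  have hprod : RegLE G t (prodGr (kerGr B g) (freeGr G deg)) r := by
    refine .of_ker_of_surj (hg.coprod hid.toIsGradedSurj hφ hψ hgψ)
      (hkerφ.of_iso_symm ⟨hid.toIsGradedSurj.snd_ker_coprod hψ hgψ, ?_⟩) hB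
    rintro j ⟨b, x⟩ ⟨_, hbx⟩ (rfl : x = 0)
    have hbx : b + ψ 0 = 0 := hbx
    rw [map_zero, add_zero] at hbx
    exact Prod.ext hbx rfl
  cases t with
  | zero => trivial
  | succ t =>
    refine .of_surj_of_ker (g := LinearMap.fst S N (ι →₀ S))
      (B := prodGr (kerGr B g) (freeGr G deg))
      ⟨fun j x hx => hx.1, fun j b hb => ⟨(b, 0), ⟨hb, zero_mem _⟩, rfl⟩⟩ ?_ hprod
    have hF : RegLE G t (freeGr G deg) (r + 1) := .of_free fun b => by linarith [hdeg b]
    exact hF.of_iso (f := LinearMap.inr S N (ι →₀ S))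
      ⟨⟨fun j x hx => ⟨⟨zero_mem _, hx⟩, rfl⟩,
        fun j b hb => ⟨b.2, hb.1.2, Prod.ext (Eq.symm hb.2) rfl⟩⟩,
        fun j x _ hx => congrArg Prod.snd hx⟩

end ExactSequences

section PolynomialGrading

universe u v

variable {σ : Type u} {K : Type v} [CommRing K]

/-- The standard grading of the polynomial ring, indexed by `ℤ` so that it can be twisted. -/
def polyGr (σ : Type u) (K : Type v) [CommRing K] (d : ℤ) : AddSubgroup (MvPolynomial σ K) where
  carrier := {p | ∀ m, coeff m p ≠ 0 → (m.degree : ℤ) = d}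
  add_mem' {a b} ha hb m hm := by
    by_cases h : coeff m a = 0
    · exact hb m (by rwa [coeff_add, h, zero_add] at hm)
    · exact ha m h
  zero_mem' m hm := absurd (coeff_zero m) hm
  neg_mem' {a} ha m hm := ha m (by simpa using hm)

theorem mem_polyGr {d : ℤ} {p : MvPolynomial σ K} :
    p ∈ polyGr σ K d ↔ ∀ m, coeff m p ≠ 0 → (m.degree : ℤ) = d := Iff.rfl

theorem mem_polyGr_natCast {n : ℕ} {p : MvPolynomial σ K} :
    p ∈ polyGr σ K n ↔ p.IsHomogeneous n := by
  simp only [mem_polyGr, Nat.cast_inj, IsHomogeneous, IsWeightedHomogeneous,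
    Finsupp.degree_eq_weight_one, Pi.one_def]

theorem eq_zero_of_mem_polyGr_neg {d : ℤ} (hd : d < 0) {p : MvPolynomial σ K}
    (hp : p ∈ polyGr σ K d) : p = 0 := by
  ext m
  by_contra h
  have := hp m h
  omega

instance : SetLike.GradedMonoid (polyGr σ K) where
  one_mem := mem_polyGr_natCast.2 (isHomogeneous_one σ K)
  mul_mem i j a b ha hb := by
    obtain hi | hi := lt_or_ge i 0
    · rw [eq_zero_of_mem_polyGr_neg hi ha, zero_mul]
      exact zero_mem _
    obtain hj | hj := lt_or_ge j 0
    · rw [eq_zero_of_mem_polyGr_neg hj hb, mul_zero]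
      exact zero_mem _
    lift i to ℕ using hi
    lift j to ℕ using hj
    rw [← Nat.cast_add]
    exact mem_polyGr_natCast.2 ((mem_polyGr_natCast.1 ha).mul (mem_polyGr_natCast.1 hb))

theorem monomial_mem_polyGr (m : σ →₀ ℕ) (c : K) : monomial m c ∈ polyGr σ K m.degree :=
  mem_polyGr_natCast.2 (isHomogeneous_monomial _ rfl)

theorem X_mem_polyGr (v : σ) : (X v : MvPolynomial σ K) ∈ polyGr σ K 1 :=
  mem_polyGr_natCast.2 (isHomogeneous_X K v)

/-- The homogeneous component of integer degree `j`, zero for `j < 0`. -/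
noncomputable def intComponent (j : ℤ) : MvPolynomial σ K →ₗ[K] MvPolynomial σ K :=
  if 0 ≤ j then homogeneousComponent j.toNat else 0

theorem coeff_intComponent (j : ℤ) (p : MvPolynomial σ K) (m : σ →₀ ℕ) :
    coeff m (intComponent j p) = if (m.degree : ℤ) = j then coeff m p else 0 := by
  unfold intComponent
  split_ifs with h1 h2 h2
  · rw [coeff_homogeneousComponent, if_pos (by omega)]
  · rw [coeff_homogeneousComponent, if_neg (by omega)]
  · omega
  · simp

theorem intComponent_mem (j : ℤ) (p : MvPolynomial σ K) : intComponent j p ∈ polyGr σ K j := by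
  intro m hm
  rw [coeff_intComponent] at hm
  exact (ite_ne_right_iff.1 hm).1

theorem intComponent_of_mem {e : ℤ} {p : MvPolynomial σ K} (hp : p ∈ polyGr σ K e) (j : ℤ) :
    intComponent j p = if e = j then p else 0 := by
  ext m
  rw [coeff_intComponent]
  by_cases h0 : coeff m p = 0
  · rw [h0, ite_self]
    split_ifs <;> simp [h0]
  · rw [hp m h0]
    split_ifs <;> simp

theorem intComponent_self {e : ℤ} {p : MvPolynomial σ K} (hp : p ∈ polyGr σ K e) :
    intComponent e p = p := by
  rw [intComponent_of_mem hp, if_pos rfl]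

theorem intComponent_mul {d : ℤ} {f : MvPolynomial σ K} (hf : f ∈ polyGr σ K d) (j : ℤ)
    (p : MvPolynomial σ K) : intComponent j (f * p) = f * intComponent (j - d) p := by
  induction p using MvPolynomial.induction_on' with
  | monomial m c =>
    have hm := monomial_mem_polyGr (σ := σ) m c
    rw [intComponent_of_mem (SetLike.mul_mem_graded hf hm), intComponent_of_mem hm]
    split_ifs <;> first | rfl | omega | simp
  | add p q hp hq => rw [mul_add, map_add, map_add, hp, hq, mul_add]

theorem intComponent_mem_ideal {I : Ideal (MvPolynomial σ K)}
    (hI : I.IsHomogeneous (homogeneousSubmodule σ K)) {p : MvPolynomial σ K} (hp : p ∈ I) (j : ℤ) :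
    intComponent j p ∈ I := by
  unfold intComponent
  split_ifs
  · exact homogeneousComponent_mem_of_mem hI hp _
  · exact zero_mem _

theorem isHomogeneous_span_of_mem_polyGr {s : Set (MvPolynomial σ K)}
    (h : ∀ p ∈ s, ∃ d, p ∈ polyGr σ K d) :
    (Ideal.span s).IsHomogeneous (homogeneousSubmodule σ K) := by
  refine Ideal.homogeneous_span _ _ fun p hp => ?_
  obtain ⟨d, hd⟩ := h p hp
  obtain hd0 | hd0 := lt_or_ge d 0
  · rw [eq_zero_of_mem_polyGr_neg hd0 hd]
    exact ⟨0, zero_mem _⟩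
  · lift d to ℕ using hd0
    exact ⟨d, mem_polyGr_natCast.1 hd⟩

end PolynomialGrading

section QuotientRegularity

universe u v

variable {σ : Type u} {K : Type v} [CommRing K] {I J : Ideal (MvPolynomial σ K)}

/-- The graded pieces of `S ⧸ I`. -/
noncomputable def quotGr (I : Ideal (MvPolynomial σ K)) (j : ℤ) :
    AddSubgroup (MvPolynomial σ K ⧸ I) :=
  (polyGr σ K j).map (Submodule.mkQ I).toAddMonoidHom

theorem mem_quotGr {j : ℤ} {x : MvPolynomial σ K ⧸ I} :
    x ∈ quotGr I j ↔ ∃ p ∈ polyGr σ K j, Submodule.mkQ I p = x := Iff.rfl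

instance (I : Ideal (MvPolynomial σ K)) : SetLike.GradedSMul (polyGr σ K) (quotGr I) where
  smul_mem {d j p m} hp hm := by
    obtain ⟨f, hf, rfl⟩ := mem_quotGr.1 hm
    exact mem_quotGr.2 ⟨p * f, SetLike.mul_mem_graded hp hf, map_smul (Submodule.mkQ I) p f⟩

theorem mkQ_eq_zero {p : MvPolynomial σ K} : Submodule.mkQ I p = 0 ↔ p ∈ I := by
  rw [Submodule.mkQ_apply, Submodule.Quotient.mk_eq_zero]

variable {f : MvPolynomial σ K} {d : ℤ}

theorem isGradedSurj_quotGr_factor (h : I ≤ J) :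
    IsGradedSurj (quotGr I) (quotGr J) (Submodule.factor h) where
  hom j x hx := by
    obtain ⟨p, hp, rfl⟩ := mem_quotGr.1 hx
    exact mem_quotGr.2 ⟨p, hp, rfl⟩
  surj j x hx := by
    obtain ⟨p, hp, rfl⟩ := mem_quotGr.1 hx
    exact ⟨Submodule.mkQ I p, mem_quotGr.2 ⟨p, hp, rfl⟩, rfl⟩

theorem isGradedIso_mul (hf : f ∈ polyGr σ K d) (hI : I.IsHomogeneous (homogeneousSubmodule σ K))
    (hJ : ∀ p, p ∈ J ↔ f * p ∈ I) :
    IsGradedIso (shiftGr (quotGr J) d)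
      (kerGr (quotGr I) (Submodule.factor (le_sup_left : I ≤ I ⊔ Ideal.span {f})))
      (Submodule.mapQ J I (LinearMap.lsmul _ _ f) fun p hp => (hJ p).1 hp) where
  hom j x hx := by
    obtain ⟨p, hp, rfl⟩ := mem_quotGr.1 hx
    refine mem_kerGr.2 ⟨mem_quotGr.2 ⟨f * p, ?_, rfl⟩, mkQ_eq_zero.2 ?_⟩
    · have := SetLike.mul_mem_graded hf hp
      rwa [add_sub_cancel] at this
    · exact Ideal.mem_sup_right (Ideal.mul_mem_right _ _ (Ideal.mem_span_singleton_self f))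
  surj j x hx := by
    obtain ⟨hx, hx0⟩ := mem_kerGr.1 hx
    obtain ⟨p, hp, rfl⟩ := mem_quotGr.1 hx
    obtain ⟨i, hi, y, hy, hiy⟩ := Submodule.mem_sup.1 (mkQ_eq_zero.1 hx0)
    obtain ⟨q, rfl⟩ := Ideal.mem_span_singleton'.1 hy
    refine ⟨Submodule.mkQ J (intComponent (j - d) q), mem_quotGr.2 ⟨_, intComponent_mem _ _, rfl⟩,
      ?_⟩
    change Submodule.mkQ I (f * _) = _
    have hpj : intComponent j i + intComponent j (f * q) = p := by
      rw [← map_add, mul_comm f, hiy]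
      exact intComponent_self hp
    rw [← intComponent_mul hf, ← sub_eq_zero, ← map_sub, mkQ_eq_zero, ← hpj, sub_add_cancel_right]
    exact neg_mem (intComponent_mem_ideal hI hi j)
  inj j x hx hx0 := by
    obtain ⟨p, -, rfl⟩ := mem_quotGr.1 hx
    exact mkQ_eq_zero.2 ((hJ p).2 (mkQ_eq_zero.1 hx0))

/-- `reg (S ⧸ I) ≤ r`. -/
def QuotRegLE (I : Ideal (MvPolynomial σ K)) (r : ℤ) : Prop :=
  ∀ t, RegLE (polyGr σ K) t (quotGr I) r

variable {r : ℤ}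

theorem QuotRegLE.mono {r' : ℤ} (h : r ≤ r') (hI : QuotRegLE I r) : QuotRegLE I r' :=
  fun t => (hI t).mono h

theorem quotRegLE_top (r : ℤ) : QuotRegLE (⊤ : Ideal (MvPolynomial σ K)) r :=
  fun _ => .of_eq_zero fun _ _ _ => Subsingleton.elim _ _

theorem quotRegLE_bot : QuotRegLE (⊥ : Ideal (MvPolynomial σ K)) 0 := by
  intro t
  have hfree : RegLE (polyGr σ K) t (freeGr (polyGr σ K) fun _ : Unit => 0) 0 :=
    .of_free fun _ => le_rfl
  refine hfree.of_iso (f := Submodule.mkQ ⊥ ∘ₗ Finsupp.lapply ())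
    ⟨⟨fun j x hx => mem_quotGr.2 ⟨x (), by simpa using hx (), rfl⟩, fun j b hb => ?_⟩,
      fun j x _ hx => ?_⟩
  · obtain ⟨p, hp, rfl⟩ := mem_quotGr.1 hb
    exact ⟨Finsupp.single () p, single_mem_freeGr _ (by simpa using hp), by simp⟩
  · exact Finsupp.ext fun _ => (Submodule.mem_bot _).1 (mkQ_eq_zero.1 hx)

variable (hf : f ∈ polyGr σ K d) (hI : I.IsHomogeneous (homogeneousSubmodule σ K))
include hf hI

theorem QuotRegLE.of_colon_of_sup (hJ : ∀ p, p ∈ J ↔ f * p ∈ I) (hcolon : QuotRegLE J (r - d))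
    (hsup : QuotRegLE (I ⊔ Ideal.span {f}) r) : QuotRegLE I r := by
  intro t
  have hshift := (hcolon t).shift d
  rw [sub_add_cancel] at hshift
  exact .of_ker_of_surj (isGradedSurj_quotGr_factor le_sup_left)
    (hshift.of_iso (isGradedIso_mul hf hI hJ)) (hsup t)

theorem QuotRegLE.sup_span_singleton (hJ : ∀ p, p ∈ J ↔ f * p ∈ I) (hr : QuotRegLE I r)
    (hcolon : QuotRegLE J (r - d + 1)) : QuotRegLE (I ⊔ Ideal.span {f}) r := by
  rintro (_ | t)
  · trivial
  have hshift := (hcolon t).shift d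
  rw [show r - d + 1 + d = r + 1 by ring] at hshift
  exact .of_surj_of_ker (isGradedSurj_quotGr_factor le_sup_left)
    (hshift.of_iso (isGradedIso_mul hf hI hJ)) (hr (t + 1))

omit hf in
/- Any a priori bound `r + n` improves to `r + n - 1`, because `(S ⧸ I)(-1)` is the kernel of
`S ⧸ I → S ⧸ (I + (f))`. -/
theorem QuotRegLE.of_sup_span_nonZeroDivisor (hf : f ∈ polyGr σ K 1)
    (hreg : ∀ p, f * p ∈ I → p ∈ I) (hbdd : ∀ t, ∃ r', RegLE (polyGr σ K) t (quotGr I) r')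
    (hsup : QuotRegLE (I ⊔ Ideal.span {f}) r) : QuotRegLE I r := by
  have hiso := isGradedIso_mul (J := I) hf hI fun p => ⟨Ideal.mul_mem_left _ f, hreg p⟩
  have hdescent (t n : ℕ) (h : RegLE (polyGr σ K) t (quotGr I) (r + n)) :
      RegLE (polyGr σ K) t (quotGr I) r := by
    induction n with
    | zero => simpa using h
    | succ n ih =>
      have hker := RegLE.ker_of_surj (isGradedSurj_quotGr_factor le_sup_left) h
        ((hsup (t + 1)).mono (by push_cast; linarith))
      have hback := (hker.of_iso_symm hiso).shift (-1)
      refine ih ?_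
      convert hback using 1
      · ext j x
        rw [shiftGr, shiftGr, sub_neg_eq_add, add_sub_cancel_right]
      · push_cast
        ring
  intro t
  obtain ⟨r', hr'⟩ := hbdd t
  exact hdescent t (r' - r).toNat (hr'.mono (by linarith [Int.self_le_toNat (r' - r)]))

end QuotientRegularity

section FreeModules

universe u v

variable {σ : Type u} {K : Type v} [CommRing K]

theorem intComponent_zero (p : MvPolynomial σ K) : intComponent 0 p = C (coeff 0 p) := by
  rw [intComponent, if_pos le_rfl]
  exact homogeneousComponent_zero _

theorem coeff_zero_of_mem_polyGr {p : MvPolynomial σ K} {d : ℤ} (hp : p ∈ polyGr σ K d)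
    (hd : d ≠ 0) : coeff 0 p = 0 := by
  by_contra h
  exact hd (by simpa using (hp 0 h).symm)

variable {ι κ : Type} {deg : ι → ℤ} {deg' : κ → ℤ}

/-- The component of degree `j` of an element of the graded free module `⨁ S(-deg b)`. -/
noncomputable def freeComponent (deg : ι → ℤ) (j : ℤ) :
    (ι →₀ MvPolynomial σ K) →+ (ι →₀ MvPolynomial σ K) where
  toFun x := Finsupp.onFinset x.support (fun b => intComponent (j - deg b) (x b)) fun b hb => by
    rw [Finsupp.mem_support_iff]
    rintro h
    rw [h, map_zero] at hb
    exact hb rfl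
  map_zero' := by
    ext1 b
    exact map_zero (intComponent (j - deg b))
  map_add' x y := by
    ext1 b
    exact map_add (intComponent (j - deg b)) (x b) (y b)

theorem freeComponent_apply (deg : ι → ℤ) (j : ℤ) (x : ι →₀ MvPolynomial σ K) (b : ι) :
    freeComponent deg j x b = intComponent (j - deg b) (x b) := rfl

theorem freeComponent_mem (deg : ι → ℤ) (j : ℤ) (x : ι →₀ MvPolynomial σ K) :
    freeComponent deg j x ∈ freeGr (polyGr σ K) deg j := fun _ => intComponent_mem _ _

theorem freeComponent_self {j : ℤ} {x : ι →₀ MvPolynomial σ K}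
    (h : x ∈ freeGr (polyGr σ K) deg j) : freeComponent deg j x = x :=
  Finsupp.ext fun b => intComponent_self (h b)

theorem map_single_eq_smul {S M : Type*} [Semiring S] [AddCommMonoid M] [Module S M] {ι : Type*}
    (φ : (ι →₀ S) →ₗ[S] M) (b : ι) (p : S) :
    φ (Finsupp.single b p) = p • φ (Finsupp.single b 1) := by
  rw [← map_smul, Finsupp.smul_single_one]

theorem freeComponent_single (j : ℤ) (b : ι) (p : MvPolynomial σ K) :
    freeComponent deg j (Finsupp.single b p) = Finsupp.single b (intComponent (j - deg b) p) := by
  classical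
  ext1 c
  rw [freeComponent_apply, Finsupp.single_apply, Finsupp.single_apply]
  split_ifs with h
  · rw [h]
  · rw [map_zero]

theorem intComponent_map {φ : (ι →₀ MvPolynomial σ K) →ₗ[MvPolynomial σ K] MvPolynomial σ K}
    (hφ : ∀ b, φ (Finsupp.single b 1) ∈ polyGr σ K (deg b)) (j : ℤ)
    (x : ι →₀ MvPolynomial σ K) : intComponent j (φ x) = φ (freeComponent deg j x) := by
  induction x using Finsupp.induction_linear with
  | zero => simp only [map_zero]
  | add x y hx hy => simp only [map_add, hx, hy]
  | single b p =>
    rw [freeComponent_single, map_single_eq_smul φ b p, map_single_eq_smul φ b (intComponent _ p),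
      smul_eq_mul, smul_eq_mul, mul_comm, intComponent_mul (hφ b), mul_comm]

theorem freeComponent_map
    {φ : (ι →₀ MvPolynomial σ K) →ₗ[MvPolynomial σ K] (κ →₀ MvPolynomial σ K)}
    (hφ : ∀ b, φ (Finsupp.single b 1) ∈ freeGr (polyGr σ K) deg' (deg b)) (j : ℤ)
    (x : ι →₀ MvPolynomial σ K) : freeComponent deg' j (φ x) = φ (freeComponent deg j x) := by
  ext1 c
  have hc (b : ι) : Finsupp.lapply (R := MvPolynomial σ K) c (φ (Finsupp.single b 1)) ∈
      polyGr σ K (deg b - deg' c) := hφ b c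
  rw [freeComponent_apply]
  have := intComponent_map (φ := Finsupp.lapply c ∘ₗ φ) hc (j - deg' c) x
  refine this.trans (congrArg (fun y => φ y c) (Finsupp.ext fun b => ?_))
  rw [freeComponent_apply, freeComponent_apply, sub_sub_sub_cancel_right]

theorem coeff_zero_map
    (φ : (ι →₀ MvPolynomial σ K) →ₗ[MvPolynomial σ K] (κ →₀ MvPolynomial σ K))
    {x : ι →₀ MvPolynomial σ K}
    (h : ∀ b c, coeff 0 (x b) * coeff 0 (φ (Finsupp.single b 1) c) = 0) (c : κ) :
    coeff 0 (φ x c) = 0 := by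
  have hx : φ x = x.sum fun b p => p • φ (Finsupp.single b 1) := by
    conv_lhs => rw [← Finsupp.sum_single x, map_finsuppSum]
    exact Finsupp.sum_congr fun b _ => map_single_eq_smul φ b _
  rw [hx, Finsupp.sum, Finsupp.finsetSum_apply, coeff_sum]
  refine Finset.sum_eq_zero fun b _ => ?_
  simpa only [Finsupp.smul_apply, smul_eq_mul, ← constantCoeff_eq, map_mul] using h b c

section MinimalCover

variable {Q : Type (max u v)} [AddCommGroup Q] [Module (MvPolynomial σ K) Q]
  {A : ℤ → AddSubgroup Q} {φ : (ι →₀ MvPolynomial σ K) →ₗ[MvPolynomial σ K] Q} {r : ℤ}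

theorem deg_le_of_minimal_cover [Nontrivial K] (hφ : IsGradedSurj (freeGr (polyGr σ K) deg) A φ)
    (hmin : ∀ x, φ x = 0 → ∀ b, coeff 0 (x b) = 0) (hA : RegLE (polyGr σ K) 1 A r) (b : ι) :
    deg b ≤ r := by
  by_contra! hlt
  obtain ⟨κ, d, γ, hd, hγ, -⟩ := hA
  obtain ⟨ψ, -, hφψ⟩ := hφ.exists_lift hγ.hom
  obtain ⟨p, hp, hpb⟩ := hγ.surj (hφ.hom (single_one_mem_freeGr deg b))
  have hcoeff := hmin (Finsupp.single b 1 - ψ p)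
    (by rw [map_sub, hφψ, hpb, sub_self]) b
  have hψp : coeff 0 (ψ p b) = 0 := by
    refine coeff_zero_map ψ (fun c _ => ?_) b
    rw [coeff_zero_of_mem_polyGr (hp c) (by linarith [hd c]), zero_mul]
  rw [Finsupp.sub_apply, coeff_sub, hψp, sub_zero, Finsupp.single_eq_same, coeff_zero_one] at hcoeff
  exact one_ne_zero hcoeff

theorem RegLE.ker_of_cover {t : ℕ} (hφ : IsGradedSurj (freeGr (polyGr σ K) deg) A φ)
    (hdeg : ∀ b, deg b ≤ r) (hA : RegLE (polyGr σ K) (t + 1) A r) :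
    RegLE (polyGr σ K) t (kerGr (freeGr (polyGr σ K) deg) φ) (r + 1) :=
  .ker_of_surj hφ (.of_free fun b => (hdeg b).trans (by omega)) (by rwa [add_sub_cancel_right])

end MinimalCover

end FreeModules

section MinimalResolutions

universe u v

variable {σ : Type u} {K : Type v} [Field K] {I : Ideal (MvPolynomial σ K)}
  (F : MinGradedFreeRes K σ I)

/-- The graded pieces of the `i`-th free module of a resolution. -/
noncomputable abbrev termGr (i : ℕ) : ℤ → AddSubgroup (F.B i →₀ MvPolynomial σ K) :=
  freeGr (polyGr σ K) fun b => (F.deg i b : ℤ)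

/-- The graded pieces of the `(i + 1)`-st syzygy module, the image of `F.d i`. -/
noncomputable def syzGr (i : ℕ) (j : ℤ) : AddSubgroup (F.B i →₀ MvPolynomial σ K) :=
  termGr F i j ⊓ (LinearMap.range (F.d i)).toAddSubgroup

theorem d_single_mem_termGr (i : ℕ) (b : F.B (i + 1)) :
    F.d i (Finsupp.single b 1) ∈ termGr F i (F.deg (i + 1) b) := by
  intro c m hm
  have : m.degree + F.deg i c = F.deg (i + 1) b := F.homog i b c m (mem_support_iff.2 hm)
  change (m.degree : ℤ) = F.deg (i + 1) b - F.deg i c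
  omega

theorem coeff_zero_d (i : ℕ) (x : F.B (i + 1) →₀ MvPolynomial σ K) (c : F.B i) :
    coeff 0 (F.d i x c) = 0 :=
  coeff_zero_map (F.d i) (fun b c => by rw [F.minimal, mul_zero]) c

theorem isGradedSurj_augmentation (hI : I.IsHomogeneous (homogeneousSubmodule σ K)) :
    IsGradedSurj (termGr F 0) (quotGr I) (Submodule.mkQ I ∘ₗ F.ε) := by
  have hε (b : F.B 0) : F.ε (Finsupp.single b 1) ∈ polyGr σ K (F.deg 0 b) :=
    mem_polyGr_natCast.2 (F.ε_homog b)
  refine ⟨fun j x hx => mem_quotGr.2 ⟨F.ε x, ?_, rfl⟩, fun j y hy => ?_⟩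
  · rw [← freeComponent_self hx, ← intComponent_map hε]
    exact intComponent_mem _ _
  · obtain ⟨p, hp, rfl⟩ := mem_quotGr.1 hy
    obtain ⟨x, hx⟩ := F.surj p
    refine ⟨freeComponent _ j x, freeComponent_mem _ _ _, ?_⟩
    rw [LinearMap.comp_apply, ← sub_eq_zero, ← map_sub, mkQ_eq_zero, ← intComponent_map hε]
    have := intComponent_mem_ideal hI hx j
    rwa [map_sub, intComponent_self hp] at this

theorem isGradedSurj_d (i : ℕ) : IsGradedSurj (termGr F (i + 1)) (syzGr F i) (F.d i) := by
  have hcomp := freeComponent_map (φ := F.d i) (d_single_mem_termGr F i)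
  refine ⟨fun j x hx => ⟨?_, x, rfl⟩, ?_⟩
  · rw [← freeComponent_self hx, ← hcomp]
    exact freeComponent_mem _ _ _
  · rintro j _ ⟨hx, x, rfl⟩
    exact ⟨freeComponent _ j x, freeComponent_mem _ _ _, by rw [← hcomp, freeComponent_self hx]⟩

theorem range_d_zero : LinearMap.range (F.d 0) = LinearMap.ker (Submodule.mkQ I ∘ₗ F.ε) := by
  rw [F.exact0, LinearMap.ker_comp, Submodule.ker_mkQ]

theorem kerGr_augmentation : kerGr (termGr F 0) (Submodule.mkQ I ∘ₗ F.ε) = syzGr F 0 := by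
  ext j x
  rw [syzGr, range_d_zero, kerGr]

theorem kerGr_d (i : ℕ) : kerGr (termGr F (i + 1)) (F.d i) = syzGr F (i + 1) := by
  ext j x
  rw [syzGr, F.exact, kerGr]

theorem QuotRegLE.deg_le (hI : I.IsHomogeneous (homogeneousSubmodule σ K)) {r : ℤ}
    (hr : QuotRegLE I r) (i : ℕ) (b : F.B i) : (F.deg i b : ℤ) ≤ r + i := by
  have haug := isGradedSurj_augmentation F hI
  have hdeg₀ : ∀ b, (F.deg 0 b : ℤ) ≤ r := by
    refine deg_le_of_minimal_cover haug (fun x hx => ?_) (hr 1)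
    obtain ⟨y, rfl⟩ : x ∈ LinearMap.range (F.d 0) := by rwa [range_d_zero]
    exact coeff_zero_d F 0 y
  have hdeg {s : ℤ} {i : ℕ} (h : RegLE (polyGr σ K) 1 (syzGr F i) s) :
      ∀ b, (F.deg (i + 1) b : ℤ) ≤ s := by
    refine deg_le_of_minimal_cover (isGradedSurj_d F i) (fun x hx => ?_) h
    obtain ⟨y, rfl⟩ : x ∈ LinearMap.range (F.d (i + 1)) := by rwa [F.exact]
    exact coeff_zero_d F (i + 1) y
  have hsyz (i : ℕ) : ∀ t, RegLE (polyGr σ K) t (syzGr F i) (r + i + 1) := by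
    induction i with
    | zero =>
      intro t
      simpa [kerGr_augmentation] using RegLE.ker_of_cover haug hdeg₀ (hr (t + 1))
    | succ i ih =>
      intro t
      simpa [kerGr_d, add_assoc] using
        RegLE.ker_of_cover (isGradedSurj_d F i) (hdeg (ih 1)) (ih (t + 1))
  cases i with
  | zero => simpa using hdeg₀ b
  | succ i => simpa [add_assoc] using hdeg (hsyz i 1) b

theorem exists_deg_le (i : ℕ) : ∃ M : ℕ, ∀ b : F.B i, F.deg i b ≤ M := by
  have := F.finB i
  obtain ⟨M, hM⟩ := (Set.finite_range (F.deg i)).bddAbove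
  exact ⟨M, fun b => hM ⟨b, rfl⟩⟩

theorem exists_regLE_syzGr (t i : ℕ) : ∃ r, RegLE (polyGr σ K) t (syzGr F i) r := by
  induction t generalizing i with
  | zero => exact ⟨0, trivial⟩
  | succ t ih =>
    obtain ⟨M, hM⟩ := exists_deg_le F (i + 1)
    obtain ⟨r, hr⟩ := ih (i + 1)
    refine ⟨max M r, _, _, F.d i, fun b => le_max_of_le_left (by exact_mod_cast hM b),
      isGradedSurj_d F i, ?_⟩
    rw [kerGr_d]
    exact hr.mono (by linarith [le_max_right (M : ℤ) r])

include F in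
theorem exists_regLE_quotGr (hI : I.IsHomogeneous (homogeneousSubmodule σ K)) (t : ℕ) :
    ∃ r, RegLE (polyGr σ K) t (quotGr I) r := by
  cases t with
  | zero => exact ⟨0, trivial⟩
  | succ t =>
    obtain ⟨M, hM⟩ := exists_deg_le F 0
    obtain ⟨r, hr⟩ := exists_regLE_syzGr F t 0
    refine ⟨max M r, _, _, _, fun b => le_max_of_le_left (by exact_mod_cast hM b),
      isGradedSurj_augmentation F hI, ?_⟩
    rw [kerGr_augmentation]
    exact hr.mono (by linarith [le_max_right (M : ℤ) r])

end MinimalResolutions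

section Existence

universe u v

theorem span_succAbove_of_isUnit {S M : Type*} [CommRing S] [AddCommGroup M] [Module S M] {t : ℕ}
    {v : Fin (t + 1) → M} {x : Fin (t + 1) → S} (hx : ∑ i, x i • v i = 0) {b : Fin (t + 1)}
    (hb : IsUnit (x b)) :
    Submodule.span S (Set.range (v ∘ b.succAbove)) = Submodule.span S (Set.range v) := by
  refine le_antisymm (Submodule.span_mono (Set.range_comp_subset_range _ _)) ?_
  rw [Submodule.span_le]
  have hmem (i : Fin t) : v (b.succAbove i) ∈ Submodule.span S (Set.range (v ∘ b.succAbove)) :=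
    Submodule.subset_span ⟨i, rfl⟩
  rintro _ ⟨i, rfl⟩
  rcases eq_or_ne i b with rfl | hi
  · rw [Fin.sum_univ_succAbove _ i, add_eq_zero_iff_eq_neg] at hx
    rw [SetLike.mem_coe, ← Submodule.smul_mem_iff_of_isUnit _ hb, hx]
    exact neg_mem (sum_mem fun l _ => Submodule.smul_mem _ _ (hmem l))
  · obtain ⟨l, rfl⟩ := Fin.exists_succAbove_eq hi
    exact hmem l

section CommRing

variable {σ : Type u} {K : Type v} [CommRing K]

theorem exists_sum_freeComponent {ι : Type} [Finite ι] (deg : ι → ℕ) (x : ι →₀ MvPolynomial σ K) :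
    ∃ J : ℕ, ∑ j ∈ Finset.range J, freeComponent (fun b => (deg b : ℤ)) j x = x := by
  cases nonempty_fintype ι
  refine ⟨1 + ∑ b, ((x b).totalDegree + deg b),
    Finsupp.ext fun b => MvPolynomial.ext _ _ fun m => ?_⟩
  rw [Finsupp.finsetSum_apply, coeff_sum]
  simp only [freeComponent_apply, coeff_intComponent]
  by_cases hm : coeff m (x b) = 0
  · simp only [hm, ite_self, Finset.sum_const_zero]
  have hdeg : m.degree ≤ (x b).totalDegree := le_totalDegree (mem_support_iff.2 hm)
  have hle : (x b).totalDegree + deg b ≤ ∑ b, ((x b).totalDegree + deg b) :=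
    Finset.single_le_sum (f := fun b => (x b).totalDegree + deg b) (fun _ _ => Nat.zero_le _)
      (Finset.mem_univ b)
  rw [Finset.sum_eq_single_of_mem (m.degree + deg b) (Finset.mem_range.2 (by omega))]
  · rw [if_pos (by push_cast; ring)]
  · exact fun j _ hj => if_neg (by omega)

theorem span_homogeneous_mem {ι : Type} [Finite ι] {deg : ι → ℕ}
    {N : Submodule (MvPolynomial σ K) (ι →₀ MvPolynomial σ K)}
    (hN : ∀ x ∈ N, ∀ j, freeComponent (fun b => (deg b : ℤ)) j x ∈ N) :
    Submodule.span (MvPolynomial σ K)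
      {x | x ∈ N ∧ ∃ j : ℕ, x ∈ freeGr (polyGr σ K) (fun b => (deg b : ℤ)) j} = N := by
  refine le_antisymm (Submodule.span_le.2 fun x hx => hx.1) fun x hx => ?_
  obtain ⟨J, hJ⟩ := exists_sum_freeComponent deg x
  rw [← hJ]
  exact sum_mem fun j _ => Submodule.subset_span ⟨hN x hx j, j, freeComponent_mem _ _ _⟩

/-- `v` is a family of homogeneous generators of `N ⊆ ⨁ S(-deg b)`, of degrees `d`. -/
def IsHomogeneousGenerators {ι κ : Type} (deg : ι → ℕ)
    (N : Submodule (MvPolynomial σ K) (ι →₀ MvPolynomial σ K))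
    (v : κ → ι →₀ MvPolynomial σ K) (d : κ → ℕ) : Prop :=
  (∀ b, v b ∈ freeGr (polyGr σ K) (fun b => (deg b : ℤ)) (d b)) ∧
    Submodule.span (MvPolynomial σ K) (Set.range v) = N

theorem exists_isHomogeneousGenerators [IsNoetherianRing K] [Finite σ] {ι : Type} [Finite ι]
    {deg : ι → ℕ} {N : Submodule (MvPolynomial σ K) (ι →₀ MvPolynomial σ K)}
    (hN : ∀ x ∈ N, ∀ j, freeComponent (fun b => (deg b : ℤ)) j x ∈ N) :
    ∃ (t : ℕ) (v : Fin t → ι →₀ MvPolynomial σ K) (d : Fin t → ℕ),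
      IsHomogeneousGenerators deg N v d := by
  have hfg := IsNoetherian.noetherian (Submodule.span (MvPolynomial σ K)
    {x | x ∈ N ∧ ∃ j : ℕ, x ∈ freeGr (polyGr σ K) (fun b => (deg b : ℤ)) j})
  rw [Submodule.fg_span_iff_fg_span_finset_subset] at hfg
  obtain ⟨s, hs, hspan⟩ := hfg
  choose d hd using fun b : Fin s.card => (hs (s.equivFin.symm b).2).2
  refine ⟨s.card, _, d, hd, ?_⟩
  rw [show (Set.range fun b => (s.equivFin.symm b : ι →₀ MvPolynomial σ K)) = s by
    rw [Set.range_comp' (f := s.equivFin.symm) (g := Subtype.val), s.equivFin.symm.range_eq_univ,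
      Set.image_univ, Subtype.range_coe_subtype]
    rfl, ← hspan, span_homogeneous_mem hN]

theorem freeComponent_mem_ker {ι κ : Type} {deg : ι → ℤ} {d : κ → ℤ}
    {D : (κ →₀ MvPolynomial σ K) →ₗ[MvPolynomial σ K] (ι →₀ MvPolynomial σ K)}
    (hD : ∀ b, D (Finsupp.single b 1) ∈ freeGr (polyGr σ K) deg (d b))
    {x : κ →₀ MvPolynomial σ K} (hx : x ∈ LinearMap.ker D) (j : ℤ) :
    freeComponent d j x ∈ LinearMap.ker D := by
  rw [LinearMap.mem_ker] at hx ⊢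
  rw [← freeComponent_map hD, hx, map_zero]

end CommRing

variable {σ : Type u} {K : Type v} [Field K]

/- In degree `d b`, a relation whose `b`-th entry has a nonzero constant term expresses `v b`
through the other generators. -/
theorem coeff_zero_of_minimal_generators {ι : Type} {deg : ι → ℕ}
    {N : Submodule (MvPolynomial σ K) (ι →₀ MvPolynomial σ K)} {t : ℕ}
    {v : Fin t → ι →₀ MvPolynomial σ K} {d : Fin t → ℕ} (hv : IsHomogeneousGenerators deg N v d)
    (hmin : ∀ s < t, ¬ ∃ (w : Fin s → ι →₀ MvPolynomial σ K) (e : Fin s → ℕ),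
      IsHomogeneousGenerators deg N w e)
    {x : Fin t →₀ MvPolynomial σ K}
    (hx : x ∈ LinearMap.ker (Finsupp.linearCombination (MvPolynomial σ K) v)) (b : Fin t) :
    coeff 0 (x b) = 0 := by
  by_contra hc
  obtain _ | t := t
  · exact b.elim0
  have hxb := freeComponent_mem_ker (deg := fun b => (deg b : ℤ)) (d := fun b => (d b : ℤ))
    (fun b => by simpa using hv.1 b) hx (d b)
  rw [LinearMap.mem_ker, Finsupp.linearCombination_apply,
    Finsupp.sum_fintype _ _ (fun i => zero_smul _ (v i))] at hxb
  have hunit : IsUnit (freeComponent (fun b => (d b : ℤ)) (d b) x b) := by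
    rw [freeComponent_apply, sub_self, intComponent_zero]
    exact (isUnit_iff_ne_zero.2 hc).map C
  exact hmin t t.lt_succ_self ⟨v ∘ b.succAbove, d ∘ b.succAbove, fun i => hv.1 _,
    (span_succAbove_of_isUnit hxb hunit).trans hv.2⟩

/-- A graded submodule of a graded free module `F` of finite rank that lies in `𝔪F`: the data from
which a minimal resolution is continued. -/
structure SyzygyData (σ : Type u) (K : Type v) [Field K] where
  rank : ℕ
  deg : Fin rank → ℕ
  submodule : Submodule (MvPolynomial σ K) (Fin rank →₀ MvPolynomial σ K)
  freeComponent_mem : ∀ x ∈ submodule, ∀ j, freeComponent (fun b => (deg b : ℤ)) j x ∈ submodule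
  coeff_zero : ∀ x ∈ submodule, ∀ b, coeff 0 (x b) = 0

theorem SyzygyData.exists_next [Finite σ] (A : SyzygyData σ K) :
    ∃ (A' : SyzygyData σ K) (D : (Fin A'.rank →₀ MvPolynomial σ K) →ₗ[MvPolynomial σ K]
        (Fin A.rank →₀ MvPolynomial σ K)),
      LinearMap.range D = A.submodule ∧ LinearMap.ker D = A'.submodule ∧
        ∀ b, D (Finsupp.single b 1) ∈
          freeGr (polyGr σ K) (fun b => (A.deg b : ℤ)) (A'.deg b) := by
  classical
  have hex := exists_isHomogeneousGenerators A.freeComponent_mem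
  obtain ⟨v, d, hv⟩ := Nat.find_spec hex
  have hD (b) : Finsupp.linearCombination (MvPolynomial σ K) v (Finsupp.single b 1) ∈
      freeGr (polyGr σ K) (fun b => (A.deg b : ℤ)) (d b) := by simpa using hv.1 b
  exact ⟨⟨_, d, LinearMap.ker (Finsupp.linearCombination (MvPolynomial σ K) v),
    fun x hx j => freeComponent_mem_ker hD hx j,
    fun x hx => coeff_zero_of_minimal_generators hv (fun s hs => Nat.find_min hex hs) hx⟩,
    Finsupp.linearCombination (MvPolynomial σ K) v,
    (Finsupp.range_linearCombination _).trans hv.2, rfl, hD⟩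

variable {I : Ideal (MvPolynomial σ K)}

/-- A proper homogeneous ideal, as a submodule of the free module of rank one. -/
noncomputable def SyzygyData.ofIdeal (hI : I.IsHomogeneous (homogeneousSubmodule σ K))
    (hne : I ≠ ⊤) : SyzygyData σ K where
  rank := 1
  deg _ := 0
  submodule := Submodule.comap (Finsupp.lapply 0) I
  freeComponent_mem x hx j := by
    rw [Submodule.mem_comap, Finsupp.lapply_apply, freeComponent_apply]
    exact intComponent_mem_ideal hI hx _
  coeff_zero x hx b := by
    rw [Subsingleton.elim b 0]
    by_contra hc
    refine hne (Ideal.eq_top_of_isUnit_mem _ ?_ ((isUnit_iff_ne_zero.2 hc).map C))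
    rw [← intComponent_zero]
    exact intComponent_mem_ideal hI hx 0

theorem exists_minGradedFreeRes [Finite σ] (hI : I.IsHomogeneous (homogeneousSubmodule σ K))
    (hne : I ≠ ⊤) : Nonempty (MinGradedFreeRes K σ I) := by
  choose next D hrange hker hdeg using SyzygyData.exists_next (K := K) (σ := σ)
  let A : ℕ → SyzygyData σ K := Nat.rec (.ofIdeal hI hne) fun _ => next
  let ε : (Fin 1 →₀ MvPolynomial σ K) →ₗ[MvPolynomial σ K] MvPolynomial σ K := Finsupp.lapply 0
  have hone : (ε (Finsupp.single 0 1)).IsHomogeneous 0 := by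
    simpa only [ε, Finsupp.lapply_apply, Finsupp.single_eq_same] using isHomogeneous_one σ K
  have hsurj (s : MvPolynomial σ K) : ε (Finsupp.single 0 s) - s ∈ I := by simp [ε]
  exact ⟨{
    B := fun i => Fin (A i).rank
    finB := fun _ => inferInstance
    deg := fun i => (A i).deg
    d := fun i => D (A i)
    ε := ε
    ε_homog := fun b => by
      obtain rfl : b = (0 : Fin 1) := Subsingleton.elim (α := Fin 1) _ _
      exact hone
    surj := fun s => ⟨Finsupp.single (0 : Fin 1) s, hsurj s⟩
    exact0 := hrange (A 0)
    exact := fun i => (hrange (A (i + 1))).trans (hker (A i)).symm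
    homog := fun i b c m hm => by
      have hm' : (m.degree : ℤ) = (A (i + 1)).deg b - (A i).deg c :=
        hdeg (A i) b c m (mem_support_iff.1 hm)
      change m.degree + (A i).deg c = (A (i + 1)).deg b
      omega
    minimal := fun i b => (A i).coeff_zero _ (hrange (A i) ▸ LinearMap.mem_range_self _ _) }⟩

theorem QuotRegLE.of_sup_span_linear_nonZeroDivisor [Finite σ] {f : MvPolynomial σ K} {r : ℤ}
    (hI : I.IsHomogeneous (homogeneousSubmodule σ K)) (hf : f ∈ polyGr σ K 1)
    (hreg : ∀ p, f * p ∈ I → p ∈ I) (hsup : QuotRegLE (I ⊔ Ideal.span {f}) r) :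
    QuotRegLE I r := by
  by_cases hne : I = ⊤
  · exact hne ▸ quotRegLE_top r
  obtain ⟨F⟩ := exists_minGradedFreeRes hI hne
  exact .of_sup_span_nonZeroDivisor hI hf hreg (exists_regLE_quotGr F hI) hsup

end Existence

section Comparison

theorem exists_lift_of_forall_mem_range {S E E' : Type*} [CommRing S] [AddCommGroup E] [Module S E]
    [AddCommGroup E'] [Module S E'] {ι : Type*} (κ : E →ₗ[S] E') (α : (ι →₀ S) →ₗ[S] E')
    (h : ∀ x, α x ∈ LinearMap.range κ) : ∃ β : (ι →₀ S) →ₗ[S] E, ∀ x, κ (β x) = α x := by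
  obtain ⟨β, hβ⟩ := Module.projective_lifting_property κ.rangeRestrict
    (α.codRestrict (LinearMap.range κ) h) κ.surjective_rangeRestrict
  exact ⟨β, fun x => congrArg Subtype.val (LinearMap.congr_fun hβ x)⟩

universe u v

variable {σ : Type u} {K : Type v} [Field K] {I : Ideal (MvPolynomial σ K)}
  {ι κ : Type} [Fintype ι] [Fintype κ]

/-- A graded complex `S(-top) → ⨁ S(-c i) → ⨁ S(-a j) → S` of free modules augmented to `S ⧸ I`,
given by the matrices `v`, `A`, `f` of its maps. -/
structure GradedFreeComplex (I : Ideal (MvPolynomial σ K)) (ι κ : Type) [Fintype ι]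
    [Fintype κ] where
  f : ι → MvPolynomial σ K
  A : κ → ι → MvPolynomial σ K
  v : κ → MvPolynomial σ K
  a : ι → ℤ
  c : κ → ℤ
  top : ℤ
  f_mem : ∀ j, f j ∈ I
  sum_A_mul_f : ∀ i, ∑ j, A i j * f j = 0
  sum_v_mul_A : ∀ j, ∑ i, v i * A i j = 0
  f_mem_polyGr : ∀ j, f j ∈ polyGr σ K (a j)
  A_mem_polyGr : ∀ i j, A i j ∈ polyGr σ K (c i - a j)
  v_mem_polyGr : ∀ i, v i ∈ polyGr σ K (top - c i)
  c_ne_top : ∀ i, c i ≠ top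

theorem coeff_zero_of_forall_deg_ne {β : Type} {deg : β → ℕ} {j : ℤ} {x : β →₀ MvPolynomial σ K}
    (hx : x ∈ freeGr (polyGr σ K) (fun b => (deg b : ℤ)) j) (hj : ∀ b, (deg b : ℤ) ≠ j) (b : β) :
    coeff 0 (x b) = 0 :=
  coeff_zero_of_mem_polyGr (hx b) (sub_ne_zero.2 (hj b).symm)

theorem mem_idealOfVars_iff {p : MvPolynomial σ K} : p ∈ idealOfVars σ K ↔ coeff 0 p = 0 := by
  rw [← pow_one (idealOfVars σ K), mem_pow_idealOfVars_iff']
  simp only [Nat.lt_one_iff, Finsupp.degree_eq_zero_iff, forall_eq]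

theorem map_mem_idealOfVars_smul {β E : Type*} [AddCommGroup E] [Module (MvPolynomial σ K) E]
    (φ : (β →₀ MvPolynomial σ K) →ₗ[MvPolynomial σ K] E) {x : β →₀ MvPolynomial σ K}
    (hx : ∀ b, coeff 0 (x b) = 0) :
    φ x ∈ idealOfVars σ K • (⊤ : Submodule (MvPolynomial σ K) E) := by
  rw [← Finsupp.sum_single x, map_finsuppSum]
  refine sum_mem fun b _ => ?_
  simp only [map_single_eq_smul φ b (x b)]
  exact Submodule.smul_mem_smul (mem_idealOfVars_iff.2 (hx b)) trivial

variable (F : MinGradedFreeRes K σ I)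

theorem d_d (i : ℕ) (x : F.B (i + 2) →₀ MvPolynomial σ K) : F.d i (F.d (i + 1) x) = 0 :=
  LinearMap.mem_ker.1 (F.exact i ▸ LinearMap.mem_range_self _ x)

theorem GradedFreeComplex.exists_map (C : GradedFreeComplex I ι κ)
    (hI : I.IsHomogeneous (homogeneousSubmodule σ K)) :
    ∃ (t₀ : F.B 0 →₀ MvPolynomial σ K) (t₁ : ι → F.B 1 →₀ MvPolynomial σ K)
      (t₂ : κ → F.B 2 →₀ MvPolynomial σ K) (t₃ : F.B 3 →₀ MvPolynomial σ K),
      F.ε t₀ - 1 ∈ I ∧ (∀ j, F.d 0 (t₁ j) = C.f j • t₀) ∧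
        (∀ i, F.d 1 (t₂ i) = ∑ j, C.A i j • t₁ j) ∧ F.d 2 t₃ = ∑ i, C.v i • t₂ i ∧
        t₃ ∈ termGr F 3 C.top := by
  have hsmul {i : ℕ} {d e : ℤ} {p : MvPolynomial σ K} {x} (hp : p ∈ polyGr σ K (e - d))
      (hx : x ∈ termGr F i d) : p • x ∈ termGr F i e := by
    simpa only [vadd_eq_add, sub_add_cancel] using smul_mem_graded hp hx
  obtain ⟨t₀, ht₀, hε⟩ := (isGradedSurj_augmentation F hI).surj
    (mem_quotGr.2 ⟨1, SetLike.one_mem_graded (polyGr σ K), rfl⟩)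
  rw [LinearMap.comp_apply, ← sub_eq_zero, ← map_sub, mkQ_eq_zero] at hε
  have h₁ (j) : C.f j • t₀ ∈ syzGr F 0 (C.a j) := by
    refine ⟨hsmul (by simpa using C.f_mem_polyGr j) ht₀, ?_⟩
    rw [F.exact0]
    change F.ε (C.f j • t₀) ∈ I
    rw [map_smul, smul_eq_mul]
    exact Ideal.mul_mem_right _ _ (C.f_mem j)
  choose t₁ ht₁ hd₁ using fun j => (isGradedSurj_d F 0).surj (h₁ j)
  have h₂ (i) : ∑ j, C.A i j • t₁ j ∈ syzGr F 1 (C.c i) := by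
    refine ⟨sum_mem fun j _ => hsmul (C.A_mem_polyGr i j) (ht₁ j), ?_⟩
    rw [F.exact 0]
    change F.d 0 _ = 0
    simp only [map_sum, map_smul, hd₁, smul_smul, ← Finset.sum_smul, C.sum_A_mul_f, zero_smul]
  choose t₂ ht₂ hd₂ using fun i => (isGradedSurj_d F 1).surj (h₂ i)
  have h₃ : ∑ i, C.v i • t₂ i ∈ syzGr F 2 C.top := by
    refine ⟨sum_mem fun i _ => hsmul (C.v_mem_polyGr i) (ht₂ i), ?_⟩
    rw [F.exact 1]
    change F.d 1 _ = 0
    simp only [map_sum, map_smul, hd₂, Finset.smul_sum, smul_smul]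
    rw [Finset.sum_comm]
    simp only [← Finset.sum_smul, C.sum_v_mul_A, zero_smul, Finset.sum_const_zero]
  obtain ⟨t₃, ht₃, hd₃⟩ := (isGradedSurj_d F 2).surj h₃
  exact ⟨t₀, t₁, t₂, t₃, hε, hd₁, hd₂, hd₃, ht₃⟩

variable {E₀ E₁ E₂ E₃ : Type*} [AddCommGroup E₀] [Module (MvPolynomial σ K) E₀] [AddCommGroup E₁]
  [Module (MvPolynomial σ K) E₁] [AddCommGroup E₂] [Module (MvPolynomial σ K) E₂]
  [AddCommGroup E₃] [Module (MvPolynomial σ K) E₃] {κ₁ : E₁ →ₗ[MvPolynomial σ K] E₀}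
  {κ₂ : E₂ →ₗ[MvPolynomial σ K] E₁} {κ₃ : E₃ →ₗ[MvPolynomial σ K] E₂} {θ₀ : E₀}

theorem exists_chainMap (hθ₀ : ∀ p ∈ I, p • θ₀ ∈ LinearMap.range κ₁)
    (hκ₁ : Function.Exact κ₂ κ₁) (hκ₂ : Function.Exact κ₃ κ₂) :
    ∃ (ψ₁ : (F.B 1 →₀ MvPolynomial σ K) →ₗ[MvPolynomial σ K] E₁)
      (ψ₂ : (F.B 2 →₀ MvPolynomial σ K) →ₗ[MvPolynomial σ K] E₂)
      (ψ₃ : (F.B 3 →₀ MvPolynomial σ K) →ₗ[MvPolynomial σ K] E₃),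
      (∀ x, κ₁ (ψ₁ x) = F.ε (F.d 0 x) • θ₀) ∧ (∀ x, κ₂ (ψ₂ x) = ψ₁ (F.d 1 x)) ∧
        ∀ x, κ₃ (ψ₃ x) = ψ₂ (F.d 2 x) := by
  have hε (x) : F.ε (F.d 0 x) ∈ I := by
    have : F.d 0 x ∈ Submodule.comap F.ε I := F.exact0 ▸ LinearMap.mem_range_self _ x
    exact this
  obtain ⟨ψ₁, h₁⟩ := exists_lift_of_forall_mem_range κ₁
    ((LinearMap.toSpanSingleton _ _ θ₀ ∘ₗ F.ε) ∘ₗ F.d 0) fun x => hθ₀ _ (hε x)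
  obtain ⟨ψ₂, h₂⟩ := exists_lift_of_forall_mem_range κ₂ (ψ₁ ∘ₗ F.d 1) fun x =>
    (hκ₁ _).1 <| by
      rw [LinearMap.comp_apply, h₁, LinearMap.comp_apply, d_d, map_zero]
  obtain ⟨ψ₃, h₃⟩ := exists_lift_of_forall_mem_range κ₃ (ψ₂ ∘ₗ F.d 2) fun x =>
    (hκ₂ _).1 <| by
      rw [LinearMap.comp_apply, h₂, LinearMap.comp_apply, d_d, map_zero]
  exact ⟨ψ₁, ψ₂, ψ₃, h₁, h₂, h₃⟩

/- A chain map `C → E` through the minimal resolution `F` is homotopic to `θ`. If `F 3` has no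
generator in degree `C.top`, the first one lands in `𝔪 E₃` there, and so does the homotopy. -/
theorem GradedFreeComplex.exists_deg_eq_top (C : GradedFreeComplex I ι κ)
    (hI : I.IsHomogeneous (homogeneousSubmodule σ K))
    (hθ₀ : ∀ p ∈ I, p • θ₀ ∈ LinearMap.range κ₁) (hκ₁ : Function.Exact κ₂ κ₁)
    (hκ₂ : Function.Exact κ₃ κ₂) (hκ₃ : Function.Injective κ₃) {θ₁ : ι → E₁} {θ₂ : κ → E₂} {θ₃ : E₃}
    (hθ₁ : ∀ j, κ₁ (θ₁ j) = C.f j • θ₀) (hθ₂ : ∀ i, κ₂ (θ₂ i) = ∑ j, C.A i j • θ₁ j)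
    (hθ₃ : κ₃ θ₃ = ∑ i, C.v i • θ₂ i)
    (hnot : θ₃ ∉ idealOfVars σ K • (⊤ : Submodule (MvPolynomial σ K) E₃)) :
    ∃ b : F.B 3, (F.deg 3 b : ℤ) = C.top := by
  by_contra! hdeg
  obtain ⟨t₀, t₁, t₂, t₃, ht₀, ht₁, ht₂, ht₃, htop⟩ := C.exists_map F hI
  obtain ⟨ψ₁, ψ₂, ψ₃, hψ₁, hψ₂, hψ₃⟩ := exists_chainMap F hθ₀ hκ₁ hκ₂
  obtain ⟨h₀, hh₀⟩ := hθ₀ _ ht₀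
  have hA (i) (x : E₁) : ∑ j, C.A i j • C.f j • x = 0 := by
    simp only [smul_smul, ← Finset.sum_smul, C.sum_A_mul_f, zero_smul]
  have hv (x : ι → E₂) : ∑ i, C.v i • ∑ j, C.A i j • x j = 0 := by
    simp only [Finset.smul_sum, smul_smul]
    rw [Finset.sum_comm]
    simp only [← Finset.sum_smul, C.sum_v_mul_A, zero_smul, Finset.sum_const_zero]
  have hhom₁ (j) : ψ₁ (t₁ j) - θ₁ j - C.f j • h₀ ∈ LinearMap.range κ₂ := by
    refine (hκ₁ _).1 ?_
    simp only [map_sub, hψ₁, ht₁, hθ₁, map_smul, hh₀, smul_eq_mul, mul_smul, sub_smul, smul_sub,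
      one_smul, sub_self]
  choose h₁ hh₁ using hhom₁
  have hhom₂ (i) : ψ₂ (t₂ i) - θ₂ i - ∑ j, C.A i j • h₁ j ∈ LinearMap.range κ₃ := by
    refine (hκ₂ _).1 ?_
    simp only [map_sub, hψ₂, ht₂, hθ₂, map_sum, map_smul, hh₁, smul_sub, Finset.sum_sub_distrib,
      hA, sub_zero, sub_self]
  choose h₂ hh₂ using hhom₂
  have hhom₃ : θ₃ = ψ₃ t₃ - ∑ i, C.v i • h₂ i := by
    refine hκ₃ ?_
    simp only [map_sub, hψ₃, ht₃, hθ₃, map_sum, map_smul, hh₂, smul_sub, Finset.sum_sub_distrib,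
      hv, sub_zero, sub_sub_cancel]
  exact hnot (hhom₃ ▸ sub_mem
    (map_mem_idealOfVars_smul ψ₃ (coeff_zero_of_forall_deg_ne htop hdeg))
    (sum_mem fun i _ => Submodule.smul_mem_smul (mem_idealOfVars_iff.2 (coeff_zero_of_mem_polyGr
      (C.v_mem_polyGr i) (sub_ne_zero.2 (C.c_ne_top i).symm))) trivial))

end Comparison

section Koszul

open RingTheory.Sequence

variable {T : Type*} [CommRing T] {g₁ g₂ g₃ : T}

theorem isWeaklyRegular_triple_iff :
    IsWeaklyRegular T [g₁, g₂, g₃] ↔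
      (∀ x, g₁ * x = 0 → x = 0) ∧
        (∀ x, g₂ * x ∈ Ideal.span {g₁} → x ∈ Ideal.span {g₁}) ∧
          ∀ x, g₃ * x ∈ Ideal.span {g₁, g₂} → x ∈ Ideal.span {g₁, g₂} := by
  have hspan : Ideal.ofList [g₁, g₂] = Ideal.span {g₁, g₂} := by
    simp only [Ideal.ofList_cons, Ideal.ofList_nil, sup_bot_eq, Ideal.span_insert]
  rw [isWeaklyRegular_iff_Fin]
  simp only [isSMulRegular_quotient_iff_mem_of_smul_mem]
  refine Fin.forall_fin_succ.trans (and_congr ?_ (Fin.forall_fin_two.trans (and_congr ?_ ?_)))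
  · simp
  · simp
  · change (∀ x, g₃ • x ∈ (Ideal.ofList [g₁, g₂] • ⊤ : Ideal T) →
      x ∈ (Ideal.ofList [g₁, g₂] • ⊤ : Ideal T)) ↔ _
    simp only [hspan, smul_eq_mul, Ideal.mul_top]

variable (g₁ g₂ g₃) in
/-- The differential `T³ → T` of the Koszul complex of `g₁, g₂, g₃`. -/
def koszul₁ : (T × T × T) →ₗ[T] T where
  toFun x := g₁ * x.1 + g₂ * x.2.1 + g₃ * x.2.2
  map_add' x y := by simp only [Prod.fst_add, Prod.snd_add]; ring
  map_smul' r x := by simp only [Prod.smul_fst, Prod.smul_snd, smul_eq_mul, RingHom.id_apply]; ring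

variable (g₁ g₂ g₃) in
/-- The differential `T³ → T³` of the Koszul complex of `g₁, g₂, g₃`, in the basis
`e₂ ∧ e₃, e₃ ∧ e₁, e₁ ∧ e₂` of the source. -/
def koszul₂ : (T × T × T) →ₗ[T] (T × T × T) where
  toFun y := (g₂ * y.2.2 - g₃ * y.2.1, g₃ * y.1 - g₁ * y.2.2, g₁ * y.2.1 - g₂ * y.1)
  map_add' x y := by ext <;> simp only [Prod.fst_add, Prod.snd_add] <;> ring
  map_smul' r x := by
    ext <;> simp only [Prod.smul_fst, Prod.smul_snd, smul_eq_mul, RingHom.id_apply] <;> ring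

variable (g₁ g₂ g₃) in
/-- The differential `T → T³` of the Koszul complex of `g₁, g₂, g₃`. -/
def koszul₃ : T →ₗ[T] (T × T × T) where
  toFun t := (g₁ * t, g₂ * t, g₃ * t)
  map_add' x y := by ext <;> simp only [Prod.fst_add, Prod.snd_add] <;> ring
  map_smul' r x := by
    ext <;> simp only [Prod.smul_fst, Prod.smul_snd, smul_eq_mul, RingHom.id_apply] <;> ring

theorem koszul₁_apply (x : T × T × T) :
    koszul₁ g₁ g₂ g₃ x = g₁ * x.1 + g₂ * x.2.1 + g₃ * x.2.2 :=
  rfl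

theorem koszul₂_apply (y : T × T × T) :
    koszul₂ g₁ g₂ g₃ y =
      (g₂ * y.2.2 - g₃ * y.2.1, g₃ * y.1 - g₁ * y.2.2, g₁ * y.2.1 - g₂ * y.1) :=
  rfl

theorem koszul₃_apply (t : T) : koszul₃ g₁ g₂ g₃ t = (g₁ * t, g₂ * t, g₃ * t) :=
  rfl

theorem exact_koszul₂_koszul₁ (h : IsWeaklyRegular T [g₁, g₂, g₃]) :
    Function.Exact (koszul₂ g₁ g₂ g₃) (koszul₁ g₁ g₂ g₃) := by
  obtain ⟨hreg₁, hreg₂, hreg₃⟩ := isWeaklyRegular_triple_iff.1 h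
  refine fun x => ⟨fun hx => ?_, ?_⟩
  · obtain ⟨x₁, x₂, x₃⟩ := x
    replace hx : g₁ * x₁ + g₂ * x₂ + g₃ * x₃ = 0 := hx
    obtain ⟨a, b, hab⟩ := Ideal.mem_span_pair.1 <| hreg₃ x₃ <|
      Ideal.mem_span_pair.2 ⟨-x₁, -x₂, by linear_combination -hx⟩
    obtain ⟨c, hc⟩ := Ideal.mem_span_singleton.1 <| hreg₂ (x₂ + g₃ * b) <|
      Ideal.mem_span_singleton.2 ⟨-(x₁ + g₃ * a), by linear_combination hx + g₃ * hab⟩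
    have hx₁ : x₁ + g₃ * a + g₂ * c = 0 := hreg₁ _ (by
      linear_combination hx + g₃ * hab - g₂ * hc)
    refine ⟨(-b, a, -c), ?_⟩
    simp only [koszul₂_apply, Prod.mk.injEq]
    exact ⟨by linear_combination -hx₁, by linear_combination -hc, by linear_combination hab⟩
  · rintro ⟨y, rfl⟩
    simp only [koszul₁_apply, koszul₂_apply]
    ring

theorem exact_koszul₃_koszul₂ (h : IsWeaklyRegular T [g₁, g₂, g₃]) :
    Function.Exact (koszul₃ g₁ g₂ g₃) (koszul₂ g₁ g₂ g₃) := by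
  obtain ⟨hreg₁, hreg₂, -⟩ := isWeaklyRegular_triple_iff.1 h
  refine fun y => ⟨fun hy => ?_, ?_⟩
  · obtain ⟨y₁, y₂, y₃⟩ := y
    simp only [koszul₂_apply, Prod.mk_eq_zero] at hy
    obtain ⟨-, hy₂, hy₃⟩ := hy
    obtain ⟨t, ht⟩ := Ideal.mem_span_singleton.1 <| hreg₂ y₁ <|
      Ideal.mem_span_singleton.2 ⟨y₂, by linear_combination -hy₃⟩
    have hyt₂ : y₂ - g₂ * t = 0 := hreg₁ _ (by linear_combination hy₃ + g₂ * ht)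
    have hyt₃ : y₃ - g₃ * t = 0 := hreg₁ _ (by linear_combination -hy₂ + g₃ * ht)
    refine ⟨t, ?_⟩
    simp only [koszul₃_apply, Prod.mk.injEq]
    exact ⟨ht.symm, (sub_eq_zero.1 hyt₂).symm, (sub_eq_zero.1 hyt₃).symm⟩
  · rintro ⟨t, rfl⟩
    simp only [koszul₂_apply, koszul₃_apply, Prod.mk_eq_zero]
    exact ⟨by ring, by ring, by ring⟩

theorem koszul₃_injective (h : IsWeaklyRegular T [g₁, g₂, g₃]) :
    Function.Injective (koszul₃ g₁ g₂ g₃) := by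
  refine (injective_iff_map_eq_zero _).2 fun t ht => ?_
  exact (isWeaklyRegular_triple_iff.1 h).1 t (congrArg Prod.fst ht)

theorem isWeaklyRegular_map_C_append_monic {R : Type*} [CommRing R] {rs : List R}
    (h : IsWeaklyRegular R rs) {f : Polynomial R} (hf : f.Monic) :
    IsWeaklyRegular (Polynomial R) (rs.map Polynomial.C ++ [f]) := by
  refine (isWeaklyRegular_append_iff _ _ _).2 ⟨h.of_flat, ?_⟩
  rw [isWeaklyRegular_singleton_iff, isSMulRegular_quotient_iff_mem_of_smul_mem, smul_eq_mul,
    Ideal.mul_top, ← Ideal.map_ofList]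
  have hmem (g : Polynomial R) : g ∈ (Ideal.ofList rs).map Polynomial.C ↔
      g.map (Ideal.Quotient.mk (Ideal.ofList rs)) = 0 := by
    rw [← Polynomial.coe_mapRingHom, ← RingHom.mem_ker, Polynomial.ker_mapRingHom, Ideal.mk_ker]
  intro x hx
  rw [hmem] at hx ⊢
  rw [smul_eq_mul, Polynomial.map_mul] at hx
  exact (hf.map _).mul_right_eq_zero_iff.1 hx

universe u v

variable {σ : Type u} {K : Type v} [Field K] {I : Ideal (MvPolynomial σ K)}
  {F : MinGradedFreeRes K σ I}

theorem GradedFreeComplex.exists_deg_eq_top_of_koszul (C : GradedFreeComplex I (Fin 3) (Fin 3))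
    (hI : I.IsHomogeneous (homogeneousSubmodule σ K)) (π : MvPolynomial σ K →+* T)
    (hreg : IsWeaklyRegular T [g₁, g₂, g₃]) (hπI : I ≤ (Ideal.span {g₁, g₂, g₃}).comap π)
    (hproper : (idealOfVars σ K).map π ≠ ⊤) {θ₁ θ₂ : Fin 3 → T × T × T}
    (hθ₁ : ∀ j, koszul₁ g₁ g₂ g₃ (θ₁ j) = π (C.f j))
    (hθ₂ : ∀ i, koszul₂ g₁ g₂ g₃ (θ₂ i) = ∑ j, π (C.A i j) • θ₁ j)
    (hθ₃ : koszul₃ g₁ g₂ g₃ 1 = ∑ i, π (C.v i) • θ₂ i) : ∃ b : F.B 3, (F.deg 3 b : ℤ) = C.top := by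
  let _ : Algebra (MvPolynomial σ K) T := π.toAlgebra
  refine C.exists_deg_eq_top F hI (κ₁ := (koszul₁ g₁ g₂ g₃).restrictScalars _)
    (κ₂ := (koszul₂ g₁ g₂ g₃).restrictScalars _) (κ₃ := (koszul₃ g₁ g₂ g₃).restrictScalars _)
    (θ₀ := 1) (θ₁ := θ₁) (θ₂ := θ₂) (θ₃ := 1) ?_ (exact_koszul₂_koszul₁ hreg)
    (exact_koszul₃_koszul₂ hreg) (koszul₃_injective hreg) ?_ hθ₂ hθ₃ ?_
  · intro p hp
    obtain ⟨a, y, hy, hpy⟩ := Ideal.mem_span_insert.1 (hπI hp)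
    obtain ⟨b, c, rfl⟩ := Ideal.mem_span_pair.1 hy
    refine ⟨(a, b, c), ?_⟩
    change _ = π p * 1
    rw [mul_one, hpy, LinearMap.restrictScalars_apply, koszul₁_apply]
    ring
  · intro j
    change _ = π (C.f j) * 1
    rw [mul_one, ← hθ₁, LinearMap.restrictScalars_apply]
  · rw [Ideal.smul_top_eq_map]
    exact fun h => hproper ((Ideal.eq_top_iff_one _).2 h)

end Koszul

section Labelling

/-- The variables `σ` of a polynomial ring are listed without repetition as
`x₁, …, xₙ, y₁, …, yₙ, z`, like the elements of `L_k`. -/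
structure IsLabelling {σ : Type*} {n : ℕ} (xs ys : Fin n → σ) (z : σ) : Prop where
  x_injective : Function.Injective xs
  y_injective : Function.Injective ys
  x_ne_y : ∀ i j, xs i ≠ ys j
  x_ne_z : ∀ i, xs i ≠ z
  y_ne_z : ∀ i, ys i ≠ z
  cases : ∀ v, (∃ i, v = xs i) ∨ (∃ i, v = ys i) ∨ v = z

namespace IsLabelling

variable {σ : Type*} {n : ℕ} {xs ys : Fin n → σ} {z : σ}

theorem forall_of (h : IsLabelling xs ys z) {P : σ → Prop} (hx : ∀ i, P (xs i))
    (hy : ∀ i, P (ys i)) (hz : P z) (v : σ) : P v := by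
  rcases h.cases v with ⟨i, rfl⟩ | ⟨i, rfl⟩ | rfl
  exacts [hx i, hy i, hz]

theorem exists_extend (h : IsLabelling xs ys z) {T : Type*} (f g : Fin n → T) (c : T) :
    ∃ w : σ → T, (∀ i, w (xs i) = f i) ∧ (∀ i, w (ys i) = g i) ∧ w z = c := by
  have hy (i) : ¬∃ j, xs j = ys i := fun ⟨j, hj⟩ => h.x_ne_y j i hj
  have hxz : ¬∃ j, xs j = z := fun ⟨j, hj⟩ => h.x_ne_z j hj
  have hyz : ¬∃ j, ys j = z := fun ⟨j, hj⟩ => h.y_ne_z j hj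
  refine ⟨Function.extend xs f (Function.extend ys g fun _ => c), h.x_injective.extend_apply _ _,
    fun i => ?_, ?_⟩
  · rw [Function.extend_apply' _ _ _ (hy i), h.y_injective.extend_apply]
  · rw [Function.extend_apply' _ _ _ hxz, Function.extend_apply' _ _ _ hyz]

end IsLabelling

end Labelling

section LowerBound

universe u v

/-- The polynomial ring over `K` in the three variables `Trivariate.p`, `Trivariate.q` and
`Trivariate.a`, over which the Koszul complexes of the lower bound live. -/
abbrev Trivariate (K : Type v) [Field K] : Type v :=
  Polynomial (Polynomial (Polynomial K))

namespace Trivariate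

variable (K : Type v) [Field K]

/-- The innermost variable. -/
noncomputable def p : Trivariate K := Polynomial.C (Polynomial.C Polynomial.X)

/-- The middle variable. -/
noncomputable def q : Trivariate K := Polynomial.C Polynomial.X

/-- The outermost variable. -/
noncomputable def a : Trivariate K := Polynomial.X

/-- Evaluation at the origin. -/
noncomputable def constantCoeff : Trivariate K →+* K :=
  (Polynomial.constantCoeff.comp Polynomial.constantCoeff).comp Polynomial.constantCoeff

@[simp]
theorem constantCoeff_p : constantCoeff K (p K) = 0 := by simp [constantCoeff, p]

@[simp]
theorem constantCoeff_q : constantCoeff K (q K) = 0 := by simp [constantCoeff, q]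

@[simp]
theorem constantCoeff_a : constantCoeff K (a K) = 0 := by simp [constantCoeff, a]

theorem isWeaklyRegular_pow (s t : ℕ) (c : Polynomial (Polynomial K)) :
    RingTheory.Sequence.IsWeaklyRegular (Trivariate K)
      [p K ^ s, q K ^ t, a K ^ 2 - Polynomial.C c] := by
  simpa [p, q, a] using isWeaklyRegular_map_C_append_monic
    (isWeaklyRegular_map_C_append_monic (isWeaklyRegular_map_C_append_monic
      (RingTheory.Sequence.IsWeaklyRegular.nil K K) (Polynomial.monic_X_pow s))
        (Polynomial.monic_X_pow t)) (Polynomial.monic_X_pow_sub_C c two_ne_zero)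

theorem isWeaklyRegular_binomial : RingTheory.Sequence.IsWeaklyRegular (Trivariate K)
    [p K ^ 2, q K ^ 2, a K ^ 2 - p K * q K] := by
  have hpq : p K * q K = Polynomial.C (Polynomial.C Polynomial.X * Polynomial.X) := by
    rw [map_mul, p, q]
  exact hpq ▸ isWeaklyRegular_pow K 2 2 _

theorem isWeaklyRegular_monomial : RingTheory.Sequence.IsWeaklyRegular (Trivariate K)
    [p K, q K ^ 3, a K ^ 2] := by
  have hzero : a K ^ 2 - Polynomial.C 0 = a K ^ 2 := by
    rw [Polynomial.C_0]
    exact sub_zero (a K ^ 2)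
  have h := isWeaklyRegular_pow K 1 3 0
  rwa [pow_one, hzero] at h

end Trivariate

variable {σ : Type u} {K : Type v} [Field K] {I : Ideal (MvPolynomial σ K)}

section Specialization

open RingTheory.Sequence (IsWeaklyRegular)

variable {x x' y y' z : σ} {T : Type v} [CommRing T] [Algebra K T] {w : σ → T} {p q a : T}

/-- The Koszul complex on the relations of the diamond with middle elements `x'`, `y`, `z` and
the relation of the square through `x`, `y'`. -/
noncomputable def binomialComplex (hxz : X x' * X z - X x' * X y ∈ I)
    (hyz : X y * X z - X x' * X y ∈ I) (hxy : X x * X y' - X x' * X y ∈ I) :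
    GradedFreeComplex I (Fin 3) (Fin 3) :=
  let f : Fin 3 → MvPolynomial σ K :=
    ![X x' * X z - X x' * X y, X y * X z - X x' * X y, X x * X y' - X x' * X y]
  have hquad (u v : σ) : (X u * X v : MvPolynomial σ K) ∈ polyGr σ K 2 :=
    SetLike.mul_mem_graded (X_mem_polyGr u) (X_mem_polyGr v)
  have hf (j) : f j ∈ polyGr σ K 2 := by
    fin_cases j <;> exact sub_mem (hquad _ _) (hquad _ _)
  { f := f
    A := ![![0, f 2, -f 1], ![-f 2, 0, f 0], ![f 1, -f 0, 0]]
    v := f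
    a := fun _ => 2
    c := fun _ => 4
    top := 6
    f_mem := by simp [Fin.forall_fin_succ, f, hxz, hyz, hxy]
    sum_A_mul_f := by simp [Fin.forall_fin_succ, Fin.sum_univ_three, mul_comm]
    sum_v_mul_A := by simp [Fin.forall_fin_succ, Fin.sum_univ_three, mul_comm]
    f_mem_polyGr := hf
    A_mem_polyGr := by norm_num [Fin.forall_fin_succ, hf]
    v_mem_polyGr := hf
    c_ne_top := by norm_num }

theorem exists_deg_eq_six_of_binomials (hI : I.IsHomogeneous (homogeneousSubmodule σ K))
    (hxz : X x' * X z - X x' * X y ∈ I) (hyz : X y * X z - X x' * X y ∈ I)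
    (hxy : X x * X y' - X x' * X y ∈ I)
    (hwx : w x = a) (hwx' : w x' = p) (hwy : w y = q) (hwy' : w y' = a) (hwz : w z = p + q)
    (hreg : IsWeaklyRegular T [p ^ 2, q ^ 2, a ^ 2 - p * q])
    (hwI : I ≤ (Ideal.span {p ^ 2, q ^ 2, a ^ 2 - p * q}).comap (aeval w).toRingHom)
    (hproper : (idealOfVars σ K).map (aeval w).toRingHom ≠ ⊤)
    (F : MinGradedFreeRes K σ I) : ∃ b : F.B 3, F.deg 3 b = 6 := by
  obtain ⟨b, hb⟩ := (binomialComplex hxz hyz hxy).exists_deg_eq_top_of_koszul (F := F) hI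
    (aeval w).toRingHom hreg hwI hproper
    (θ₁ := ![(1, 0, 0), (0, 1, 0), (0, 0, 1)]) (θ₂ := ![(1, 0, 0), (0, 1, 0), (0, 0, 1)])
    (fun j => by
      fin_cases j <;> simp [binomialComplex, koszul₁_apply, hwx, hwx', hwy, hwy', hwz] <;> ring)
    (fun i => by
      fin_cases i <;> ext <;>
        simp [binomialComplex, koszul₂_apply, Fin.sum_univ_three, hwx, hwx', hwy, hwy', hwz] <;>
        ring)
    (by
      ext <;>
        simp [binomialComplex, koszul₃_apply, Fin.sum_univ_three, hwx, hwx', hwy, hwy', hwz] <;>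
        ring)
  have hb : (F.deg 3 b : ℤ) = 6 := hb
  exact ⟨b, by exact_mod_cast hb⟩

/-- The complex on `x y'`, `x' y`, `y² z` that specializes to the Koszul complex of a regular
sequence: these three monomials belong to the initial ideal of the join-meet ideal. -/
noncomputable def monomialComplex (hxy : X x * X y' ∈ I) (hyx : X x' * X y ∈ I)
    (hyz : X y * X y * X z ∈ I) : GradedFreeComplex I (Fin 3) (Fin 3) :=
  have hlin (u : σ) : (X u : MvPolynomial σ K) ∈ polyGr σ K 1 := X_mem_polyGr u
  have hquad (u v : σ) : (X u * X v : MvPolynomial σ K) ∈ polyGr σ K 2 :=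
    SetLike.mul_mem_graded (hlin u) (hlin v)
  have hcub (u v t : σ) : (X u * X v * X t : MvPolynomial σ K) ∈ polyGr σ K 3 :=
    SetLike.mul_mem_graded (hquad u v) (hlin t)
  { f := ![X x * X y', X x' * X y, X y * X y * X z]
    A := ![![0, X y * X z, -X x'], ![X x' * X y, -(X x * X y'), 0],
      ![X y * X y * X z, 0, -(X x * X y')]]
    v := ![X x * X y', X y * X z, -X x']
    a := ![2, 2, 3]
    c := ![4, 4, 5]
    top := 6
    f_mem := by simp [Fin.forall_fin_succ, hxy, hyx, hyz]
    sum_A_mul_f := fun i => by fin_cases i <;> simp [Fin.sum_univ_three] <;> ring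
    sum_v_mul_A := fun j => by fin_cases j <;> simp [Fin.sum_univ_three] <;> ring
    f_mem_polyGr := by simp [Fin.forall_fin_succ, hquad, hcub]
    A_mem_polyGr := by norm_num [Fin.forall_fin_succ, hlin, hquad, hcub]
    v_mem_polyGr := by norm_num [Fin.forall_fin_succ, hlin, hquad]
    c_ne_top := by norm_num [Fin.forall_fin_succ] }

theorem exists_deg_eq_six_of_monomials (hI : I.IsHomogeneous (homogeneousSubmodule σ K))
    (hxy : X x * X y' ∈ I) (hyx : X x' * X y ∈ I) (hyz : X y * X y * X z ∈ I)
    (hwx : w x = a) (hwx' : w x' = p) (hwy : w y = q) (hwy' : w y' = a) (hwz : w z = p + q)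
    (hreg : IsWeaklyRegular T [p, q ^ 3, a ^ 2])
    (hwI : I ≤ (Ideal.span {p, q ^ 3, a ^ 2}).comap (aeval w).toRingHom)
    (hproper : (idealOfVars σ K).map (aeval w).toRingHom ≠ ⊤)
    (F : MinGradedFreeRes K σ I) : ∃ b : F.B 3, F.deg 3 b = 6 := by
  obtain ⟨b, hb⟩ := (monomialComplex hxy hyx hyz).exists_deg_eq_top_of_koszul (F := F) hI
    (aeval w).toRingHom hreg hwI hproper
    (θ₁ := ![(0, 0, 1), (q, 0, 0), (q ^ 2, 1, 0)]) (θ₂ := ![(0, 0, 1), (0, q, 0), (-1, q ^ 2, 0)])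
    (fun j => by
      fin_cases j <;> simp [monomialComplex, koszul₁_apply, hwx, hwx', hwy, hwy', hwz] <;> ring)
    (fun i => by
      fin_cases i <;> ext <;>
        simp [monomialComplex, koszul₂_apply, Fin.sum_univ_three, hwx, hwx', hwy, hwy', hwz] <;>
        ring)
    (by
      ext <;>
        simp [monomialComplex, koszul₃_apply, Fin.sum_univ_three, hwx, hwx', hwy, hwy', hwz] <;>
        ring)
  have hb : (F.deg 3 b : ℤ) = 6 := hb
  exact ⟨b, by exact_mod_cast hb⟩

end Specialization

variable {n : ℕ} {xs ys : Fin n → σ} {z : σ} {κ l : Fin n}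

/-- The values of the variables under which the two ideals of the theorem specialize to complete
intersections: only the five variables of the diamond survive. -/
structure IsKoszulWeight {T : Type*} [CommRing T] (p q a : T) (xs ys : Fin n → σ) (z : σ)
    (κ l : Fin n) (w : σ → T) : Prop where
  x_left : w (xs κ) = a
  x_right : w (xs l) = p
  y_left : w (ys κ) = q
  y_right : w (ys l) = a
  map_z : w z = p + q
  x_eq_zero : ∀ i, i ≠ κ → i ≠ l → w (xs i) = 0
  y_eq_zero : ∀ i, i ≠ κ → i ≠ l → w (ys i) = 0

theorem IsLabelling.exists_isKoszulWeight {T : Type*} [CommRing T] (h : IsLabelling xs ys z)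
    (hne : κ ≠ l) (p q a : T) : ∃ w : σ → T, IsKoszulWeight p q a xs ys z κ l w := by
  obtain ⟨w, hx, hy, hz⟩ := h.exists_extend (fun i => if i = κ then a else if i = l then p else 0)
    (fun i => if i = κ then q else if i = l then a else 0) (p + q)
  exact ⟨w, by simp [hx], by simp [hx, hne.symm], by simp [hy], by simp [hy, hne.symm], hz,
    fun i hκ hl => by simp [hx, hκ, hl], fun i hκ hl => by simp [hy, hκ, hl]⟩

namespace IsKoszulWeight

variable {w : σ → Trivariate K}
  (hw : IsKoszulWeight (Trivariate.p K) (Trivariate.q K) (Trivariate.a K) xs ys z κ l w)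
  (h : IsLabelling xs ys z)
include hw h

theorem constantCoeff_eq_zero (v : σ) : Trivariate.constantCoeff K (w v) = 0 := by
  refine h.forall_of (P := fun v => Trivariate.constantCoeff K (w v) = 0) (fun i => ?_)
    (fun i => ?_) ?_ v
  · rcases eq_or_ne i κ with rfl | hκ
    · simp [hw.x_left]
    rcases eq_or_ne i l with rfl | hl
    · simp [hw.x_right]
    · simp [hw.x_eq_zero i hκ hl]
  · rcases eq_or_ne i κ with rfl | hκ
    · simp [hw.y_left]
    rcases eq_or_ne i l with rfl | hl
    · simp [hw.y_right]
    · simp [hw.y_eq_zero i hκ hl]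
  · simp [hw.map_z]

theorem map_idealOfVars_ne_top :
    (idealOfVars σ K).map (aeval w : MvPolynomial σ K →ₐ[K] Trivariate K).toRingHom ≠ ⊤ := by
  refine fun htop => RingHom.ker_ne_top (Trivariate.constantCoeff K) (top_le_iff.1 ?_)
  rw [← htop, idealOfVars, Ideal.map_span, Ideal.span_le]
  rintro _ ⟨_, ⟨v, rfl⟩, rfl⟩
  simpa using hw.constantCoeff_eq_zero h v

theorem exists_deg_eq_six_of_binomials
    (hI : I.IsHomogeneous (homogeneousSubmodule σ K))
    (hxz : X (xs l) * X z - X (xs l) * X (ys κ) ∈ I)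
    (hyz : X (ys κ) * X z - X (xs l) * X (ys κ) ∈ I)
    (hxy : X (xs κ) * X (ys l) - X (xs l) * X (ys κ) ∈ I)
    (hwI : I ≤ (Ideal.span {Trivariate.p K ^ 2, Trivariate.q K ^ 2,
      Trivariate.a K ^ 2 - Trivariate.p K * Trivariate.q K}).comap (aeval w).toRingHom)
    (F : MinGradedFreeRes K σ I) : ∃ b : F.B 3, F.deg 3 b = 6 :=
  LkRegularity.exists_deg_eq_six_of_binomials hI hxz hyz hxy hw.x_left hw.x_right hw.y_left
    hw.y_right hw.map_z (Trivariate.isWeaklyRegular_binomial K) hwI (hw.map_idealOfVars_ne_top h) F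

theorem exists_deg_eq_six_of_monomials
    (hI : I.IsHomogeneous (homogeneousSubmodule σ K))
    (hxy : X (xs κ) * X (ys l) ∈ I) (hyx : X (xs l) * X (ys κ) ∈ I)
    (hyz : X (ys κ) * X (ys κ) * X z ∈ I)
    (hwI : I ≤ (Ideal.span {Trivariate.p K, Trivariate.q K ^ 3, Trivariate.a K ^ 2}).comap
      (aeval w).toRingHom)
    (F : MinGradedFreeRes K σ I) : ∃ b : F.B 3, F.deg 3 b = 6 :=
  LkRegularity.exists_deg_eq_six_of_monomials hI hxy hyx hyz hw.x_left hw.x_right hw.y_left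
    hw.y_right hw.map_z (Trivariate.isWeaklyRegular_monomial K) hwI (hw.map_idealOfVars_ne_top h) F

end IsKoszulWeight

end LowerBound

section MonomialIdeals

universe u v

variable {σ : Type u} {K : Type v} [CommRing K] {U : Set (σ →₀ ℕ)} {r : ℤ}

/-- The ideal spanned by the monomials with exponent in `U`. -/
noncomputable def monomialIdeal (K : Type v) [CommRing K] (U : Set (σ →₀ ℕ)) :
    Ideal (MvPolynomial σ K) :=
  Ideal.span ((fun m => monomial m 1) '' U)

/-- The exponents of the colon of a monomial ideal by the variable `v`. -/
def colonVar (U : Set (σ →₀ ℕ)) (v : σ) : Set (σ →₀ ℕ) :=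
  {m | m + Finsupp.single v 1 ∈ U}

/-- The exponents of the sum of a monomial ideal with the ideal generated by the variable `v`. -/
def insertVar (U : Set (σ →₀ ℕ)) (v : σ) : Set (σ →₀ ℕ) :=
  {m | m ∈ U ∨ 1 ≤ m v}

theorem mem_colonVar {v : σ} {m : σ →₀ ℕ} : m ∈ colonVar U v ↔ m + Finsupp.single v 1 ∈ U :=
  Iff.rfl

theorem mem_insertVar {v : σ} {m : σ →₀ ℕ} : m ∈ insertVar U v ↔ m ∈ U ∨ 1 ≤ m v :=
  Iff.rfl

theorem isUpperSet_colonVar (hU : IsUpperSet U) (v : σ) : IsUpperSet (colonVar U v) :=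
  fun _ _ h hm => hU (by gcongr) hm

theorem isUpperSet_insertVar (hU : IsUpperSet U) (v : σ) : IsUpperSet (insertVar U v) :=
  fun _ _ h hm => hm.imp (hU h) fun h1 => h1.trans (h v)

theorem mem_monomialIdeal (hU : IsUpperSet U) {p : MvPolynomial σ K} :
    p ∈ monomialIdeal K U ↔ ∀ m ∈ p.support, m ∈ U := by
  rw [monomialIdeal, mem_ideal_span_monomial_image]
  exact forall₂_congr fun m _ =>
    ⟨fun ⟨_, hs, hle⟩ => hU hle hs, fun hm => ⟨m, hm, le_rfl⟩⟩

theorem isHomogeneous_monomialIdeal (U : Set (σ →₀ ℕ)) :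
    (monomialIdeal K U).IsHomogeneous (homogeneousSubmodule σ K) := by
  apply isHomogeneous_span_of_mem_polyGr
  rintro _ ⟨m, -, rfl⟩
  exact ⟨_, monomial_mem_polyGr m 1⟩

theorem mem_monomialIdeal_colonVar (hU : IsUpperSet U) (v : σ) (p : MvPolynomial σ K) :
    p ∈ monomialIdeal K (colonVar U v) ↔ X v * p ∈ monomialIdeal K U := by
  classical
  rw [mem_monomialIdeal hU, mem_monomialIdeal (isUpperSet_colonVar hU v), mul_comm, support_mul_X]
  simp [mem_colonVar]

theorem monomial_mem_of_le {J : Ideal (MvPolynomial σ K)} {e m : σ →₀ ℕ} (h : e ≤ m)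
    (he : monomial e (1 : K) ∈ J) : monomial m (1 : K) ∈ J :=
  J.mem_of_dvd (monomial_dvd_monomial.2 ⟨.inr h, one_dvd 1⟩) he

theorem monomialIdeal_insertVar (U : Set (σ →₀ ℕ)) (v : σ) :
    monomialIdeal K (insertVar U v) = monomialIdeal K U ⊔ Ideal.span {X v} := by
  apply le_antisymm
  · rw [monomialIdeal, Ideal.span_le]
    rintro _ ⟨m, hm | hm, rfl⟩
    · exact Ideal.mem_sup_left (Ideal.subset_span ⟨m, hm, rfl⟩)
    · exact Ideal.mem_sup_right (monomial_mem_of_le (Finsupp.single_le_iff.2 hm)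
        (Ideal.mem_span_singleton_self _))
  · refine sup_le (Ideal.span_mono (Set.image_mono fun m hm => .inl hm)) ?_
    rw [Ideal.span_le, Set.singleton_subset_iff]
    exact Ideal.subset_span ⟨Finsupp.single v 1, .inr (by simp), rfl⟩

theorem QuotRegLE.of_colonVar_of_insertVar (hU : IsUpperSet U) (v : σ)
    (hcolon : QuotRegLE (monomialIdeal K (colonVar U v)) (r - 1))
    (hinsert : QuotRegLE (monomialIdeal K (insertVar U v)) r) :
    QuotRegLE (monomialIdeal K U) r :=
  .of_colon_of_sup (X_mem_polyGr v) (isHomogeneous_monomialIdeal U)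
    (mem_monomialIdeal_colonVar hU v) hcolon (monomialIdeal_insertVar (K := K) U v ▸ hinsert)

/-- The exponents of the ideal generated by the variables in `S`. -/
def varExponents (S : Set σ) : Set (σ →₀ ℕ) :=
  {m | ∃ v ∈ S, 1 ≤ m v}

theorem isUpperSet_varExponents (S : Set σ) : IsUpperSet (varExponents S) :=
  fun _ _ h ⟨v, hv, h1⟩ => ⟨v, hv, h1.trans (h v)⟩

theorem colonVar_varExponents {S : Set σ} {v : σ} (hv : v ∉ S) :
    colonVar (varExponents S) v = varExponents S := by
  ext m
  refine exists_congr fun w => and_congr_right fun hw => ?_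
  rw [Finsupp.add_apply, Finsupp.single_eq_of_ne (ne_of_mem_of_not_mem hw hv), add_zero]

theorem varExponents_insert (v : σ) (S : Set σ) :
    varExponents (insert v S) = insertVar (varExponents S) v := by
  ext m
  simp only [varExponents, insertVar, Set.mem_ofPred_eq, Set.mem_insert_iff, exists_eq_or_imp]
  exact or_comm

theorem quotRegLE_varExponents [Finite σ] (S : Set σ) :
    QuotRegLE (monomialIdeal K (varExponents S)) 0 := by
  induction S, S.toFinite using Set.Finite.induction_on with
  | empty => simpa [monomialIdeal, varExponents] using quotRegLE_bot
  | @insert v S hv hS ih =>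
    rw [varExponents_insert, monomialIdeal_insertVar]
    refine .sup_span_singleton (X_mem_polyGr v) (isHomogeneous_monomialIdeal _)
      (J := monomialIdeal K (varExponents S)) (fun p => ?_) ih (by simpa using ih)
    rw [← mem_monomialIdeal_colonVar (isUpperSet_varExponents S), colonVar_varExponents hv]

end MonomialIdeals

section FerrersIdeals

universe u v

variable {σ : Type u} {K : Type v} [CommRing K] {n : ℕ} {xs ys : Fin n → σ} {S : Set σ}
  {E : Fin n → Fin n → Prop}

/-- The exponents of the ideal generated by the variables in `S` and the products `x_i y_j` with
`E i j`. If the rows `E i` form a chain, this is a Ferrers ideal up to variables. -/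
def ferrersExponents (xs ys : Fin n → σ) (S : Set σ) (E : Fin n → Fin n → Prop) :
    Set (σ →₀ ℕ) :=
  {m | m ∈ varExponents S ∨ ∃ i j, E i j ∧ 1 ≤ m (xs i) ∧ 1 ≤ m (ys j)}

theorem isUpperSet_ferrersExponents (xs ys : Fin n → σ) (S : Set σ) (E : Fin n → Fin n → Prop) :
    IsUpperSet (ferrersExponents xs ys S E) :=
  fun _ _ h hm => hm.imp (isUpperSet_varExponents S h)
    fun ⟨i, j, hE, hi, hj⟩ => ⟨i, j, hE, hi.trans (h _), hj.trans (h _)⟩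

theorem ferrersExponents_eq_varExponents (hS : ∀ i, xs i ∈ S) :
    ferrersExponents xs ys S E = varExponents S :=
  Set.ext fun _ => ⟨fun hm => hm.elim id fun ⟨i, _, _, hi, _⟩ => ⟨xs i, hS i, hi⟩, .inl⟩

theorem insertVar_ferrersExponents (v : σ) :
    insertVar (ferrersExponents xs ys S E) v = ferrersExponents xs ys (insert v S) E := by
  ext m
  simp only [ferrersExponents, varExponents_insert, insertVar, Set.mem_ofPred_eq]
  exact or_right_comm

theorem colonVar_ferrersExponents (hxy : ∀ i j, xs i ≠ ys j) {i₀ : Fin n} (hi₀ : xs i₀ ∉ S)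
    (hmax : ∀ i, xs i ∉ S → ∀ j, E i j → E i₀ j) :
    colonVar (ferrersExponents xs ys S E) (xs i₀) = varExponents (S ∪ ys '' {j | E i₀ j}) := by
  ext m
  constructor
  · rintro (⟨v, hv, h⟩ | ⟨i, j, hE, hi, hj⟩)
    · have hne := ne_of_mem_of_not_mem hv hi₀
      exact ⟨v, .inl hv, by simpa [hne] using h⟩
    · by_cases hiS : xs i ∈ S
      · have hne := ne_of_mem_of_not_mem hiS hi₀
        exact ⟨xs i, .inl hiS, by simpa [hne] using hi⟩
      · exact ⟨ys j, .inr ⟨j, hmax i hiS j hE, rfl⟩, by simpa [(hxy i₀ j).symm] using hj⟩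
  · rintro ⟨v, hv | ⟨j, hj, rfl⟩, h⟩
    · exact .inl ⟨v, hv, h.trans (by simp)⟩
    · exact .inr ⟨i₀, j, hj, by simp, h.trans (by simp)⟩

theorem exists_maximal_row (hE : ∀ i i', (∀ j, E i j → E i' j) ∨ (∀ j, E i' j → E i j))
    {s : Set (Fin n)} (hs : s.Nonempty) : ∃ i₀ ∈ s, ∀ i ∈ s, ∀ j, E i j → E i₀ j := by
  obtain ⟨i₀, hi₀⟩ := s.toFinite.exists_maximalFor (fun i => {j | E i j}) _ hs
  exact ⟨i₀, hi₀.1, fun i hi => (hE i i₀).elim id fun h => hi₀.2 hi h⟩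

theorem quotRegLE_ferrersExponents [Finite σ] (hxy : ∀ i j, xs i ≠ ys j)
    (hE : ∀ i i', (∀ j, E i j → E i' j) ∨ (∀ j, E i' j → E i j)) (S : Set σ) :
    QuotRegLE (monomialIdeal K (ferrersExponents xs ys S E)) 1 := by
  induction hs : {i | xs i ∉ S} using WellFoundedLT.induction generalizing S with
  | ind s ih =>
  subst hs
  rcases {i | xs i ∉ S}.eq_empty_or_nonempty with hempty | hne
  · rw [ferrersExponents_eq_varExponents (by simpa [Set.eq_empty_iff_forall_notMem] using hempty)]
    exact (quotRegLE_varExponents S).mono zero_le_one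
  obtain ⟨i₀, hi₀, hmax⟩ := exists_maximal_row hE hne
  refine .of_colonVar_of_insertVar (isUpperSet_ferrersExponents _ _ _ _) (xs i₀) ?_ ?_
  · rw [colonVar_ferrersExponents hxy hi₀ hmax]
    exact quotRegLE_varExponents _
  · rw [insertVar_ferrersExponents]
    have hsub : {i | xs i ∉ insert (xs i₀) S} ⊆ {i | xs i ∉ S} := fun i hi hiS => hi (.inr hiS)
    exact ih _ ((Set.ssubset_iff_of_subset hsub).2 ⟨i₀, hi₀, by simp⟩) _ rfl

end FerrersIdeals

section InitialIdeal

universe u v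

variable {n : ℕ} {κ l : Fin n} {A B : Fin n → Prop} {D Z : Prop}

/-- A monomial is divisible by a generator of the initial ideal of the join-meet ideal of `L_k`,
expressed through the variables dividing it: `A i` stands for `x_i`, `B i` for `y_i`, `D` for
`y_k ^ 2` and `Z` for `z`. The indices `κ` and `l` are `k` and `k + 1`. -/
inductive LkSupport (κ l : Fin n) (A B : Fin n → Prop) (D Z : Prop) : Prop
  | x_y {i j} : i < j → A j → B i → LkSupport κ l A B D Z
  | x_yRight {i} : i < κ → A i → B l → LkSupport κ l A B D Z
  | xLeft_y {j} : l ≤ j → A κ → B j → LkSupport κ l A B D Z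
  | x_xRight_y {i j} : i < κ → l < j → A i → A l → B j → LkSupport κ l A B D Z
  | x_yLeft_y {i j} : i < κ → l < j → A i → B κ → B j → LkSupport κ l A B D Z
  | y_yLeft_z {i} : i < κ → B i → B κ → Z → LkSupport κ l A B D Z
  | yLeft_sq_z : D → Z → LkSupport κ l A B D Z
  | xRight_z : A l → Z → LkSupport κ l A B D Z

/-- The analogue of `LkSupport` for `ferrersExponents`, with `Sx`, `Sy`, `Sz` describing the
variables among the generators. -/
def FerrersSupport (Sx Sy : Fin n → Prop) (Sz : Prop) (E : Fin n → Fin n → Prop)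
    (A B : Fin n → Prop) (Z : Prop) : Prop :=
  (∃ i, A i ∧ Sx i) ∨ (∃ i, B i ∧ Sy i) ∨ (Sz ∧ Z) ∨ ∃ i, A i ∧ ∃ j, B j ∧ E i j

theorem lkSupport_iff : LkSupport κ l A B D Z ↔
    (∃ j, A j ∧ ∃ i, B i ∧ i < j) ∨ (∃ i, A i ∧ i < κ ∧ B l) ∨ (∃ j, B j ∧ l ≤ j ∧ A κ) ∨
      (∃ i, A i ∧ i < κ ∧ A l ∧ ∃ j, B j ∧ l < j) ∨ (∃ i, A i ∧ i < κ ∧ B κ ∧ ∃ j, B j ∧ l < j) ∨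
      (∃ i, B i ∧ i < κ ∧ B κ ∧ Z) ∨ (D ∧ Z) ∨ (A l ∧ Z) := by
  grind [LkSupport]

theorem LkSupport.mono {A' B' : Fin n → Prop} {D' Z' : Prop} (hA : ∀ i, A i → A' i)
    (hB : ∀ i, B i → B' i) (hD : D → D') (hZ : Z → Z') (h : LkSupport κ l A B D Z) :
    LkSupport κ l A' B' D' Z' := by
  rw [lkSupport_iff] at h ⊢
  grind

section Leaves

variable (hκl : (κ : ℕ) + 1 = l)
include hκl

theorem lkSupport_colon_z_yLeft : LkSupport κ l A (fun i => κ = i ∨ B i) (B κ) True ↔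
    FerrersSupport (κ < ·) (· ≤ κ) False (fun i j => i ≤ κ ∧ κ < j) A B Z := by
  simp only [lkSupport_iff, FerrersSupport, Fin.lt_def, Fin.le_def, Fin.ext_iff]; grind

theorem lkSupport_insert_z_colon_xLeft : LkSupport κ l (fun i => κ = i ∨ A i) B D Z ∨ Z ↔
    FerrersSupport (fun _ => False) (· ≠ κ) True (fun i j => j = κ ∧ κ < i) A B Z := by
  simp only [lkSupport_iff, FerrersSupport, Fin.lt_def, Fin.le_def, Fin.ext_iff]; grind

theorem lkSupport_insert_z_insert_xLeft_colon_yLeft :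
    (LkSupport κ l A (fun i => κ = i ∨ B i) (B κ) Z ∨ Z) ∨ A κ ↔
      FerrersSupport (κ ≤ ·) (fun _ => False) True (fun i j => i < κ ∧ (j < i ∨ l ≤ j)) A B Z := by
  simp only [lkSupport_iff, FerrersSupport, Fin.lt_def, Fin.le_def, Fin.ext_iff]; grind

theorem lkSupport_insert_z_insert_xLeft_insert_yLeft_colon_xRight :
    ((LkSupport κ l (fun i => l = i ∨ A i) B D Z ∨ Z) ∨ A κ) ∨ B κ ↔
      FerrersSupport (κ = ·) (· ≤ κ) True (fun i j => (i < κ ∨ j < i) ∧ l ≤ j) A B Z := by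
  simp only [lkSupport_iff, FerrersSupport, Fin.lt_def, Fin.le_def, Fin.ext_iff]; grind

theorem lkSupport_insert_z_insert_xLeft_insert_yLeft_insert_xRight :
    (((LkSupport κ l A B D Z ∨ Z) ∨ A κ) ∨ B κ) ∨ A l ↔
      FerrersSupport (fun i => i = κ ∨ i = l) (· = κ) True (fun i j => j < i ∨ j = l) A B Z := by
  simp only [lkSupport_iff, FerrersSupport, Fin.lt_def, Fin.le_def, Fin.ext_iff]; grind

variable (hD : D → B κ)
include hD

theorem lkSupport_colon_z_insert_yLeft_colon_xLeft :
    (LkSupport κ l (fun i => κ = i ∨ A i) B D True ∨ B κ) ↔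
      FerrersSupport (· = l) (fun _ => True) False (fun _ _ => False) A B Z := by
  simp only [lkSupport_iff, FerrersSupport, Fin.lt_def, Fin.le_def, Fin.ext_iff]; grind

theorem lkSupport_colon_z_insert_yLeft_insert_xLeft : (LkSupport κ l A B D True ∨ B κ) ∨ A κ ↔
    FerrersSupport (fun i => i = κ ∨ i = l) (· = κ) False (fun i j => j < i ∨ j = l) A B Z := by
  simp only [lkSupport_iff, FerrersSupport, Fin.lt_def, Fin.le_def, Fin.ext_iff]; grind

end Leaves

variable {σ : Type u} {K : Type v} [CommRing K] {xs ys : Fin n → σ} {z : σ}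

/-- The exponents of the initial ideal of the join-meet ideal of `L_k`. -/
def lkExponents (xs ys : Fin n → σ) (z : σ) (κ l : Fin n) : Set (σ →₀ ℕ) :=
  {m | LkSupport κ l (fun i => 1 ≤ m (xs i)) (fun i => 1 ≤ m (ys i)) (2 ≤ m (ys κ)) (1 ≤ m z)}

theorem mem_lkExponents {m : σ →₀ ℕ} : m ∈ lkExponents xs ys z κ l ↔
    LkSupport κ l (fun i => 1 ≤ m (xs i)) (fun i => 1 ≤ m (ys i)) (2 ≤ m (ys κ)) (1 ≤ m z) :=
  Iff.rfl

theorem isUpperSet_lkExponents (xs ys : Fin n → σ) (z : σ) (κ l : Fin n) :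
    IsUpperSet (lkExponents xs ys z κ l) :=
  fun _ _ h hm => hm.mono (fun i h1 => h1.trans (h (xs i))) (fun i h1 => h1.trans (h (ys i)))
    (fun h1 => h1.trans (h (ys κ))) (fun h1 => h1.trans (h z))

theorem one_le_add_single_one_apply {m : σ →₀ ℕ} {v w : σ} :
    1 ≤ (m + Finsupp.single v 1 : σ →₀ ℕ) w ↔ v = w ∨ 1 ≤ m w := by
  classical
  rw [Finsupp.add_apply, Finsupp.single_apply]
  split_ifs with h <;> simp [h]

theorem two_le_add_single_one_apply_of_ne {m : σ →₀ ℕ} {v w : σ} (h : v ≠ w) :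
    2 ≤ (m + Finsupp.single v 1 : σ →₀ ℕ) w ↔ 2 ≤ m w := by
  simp [h]

theorem two_le_add_single_one_apply_self {m : σ →₀ ℕ} {v : σ} :
    2 ≤ (m + Finsupp.single v 1 : σ →₀ ℕ) v ↔ 1 ≤ m v := by
  simp

theorem QuotRegLE.of_mem_iff_ferrersSupport [Finite σ] (hxy : ∀ i j, xs i ≠ ys j)
    {U : Set (σ →₀ ℕ)} {Sx Sy : Fin n → Prop} {Sz : Prop} {E : Fin n → Fin n → Prop}
    (hU : ∀ m, m ∈ U ↔ FerrersSupport Sx Sy Sz E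
      (fun i => 1 ≤ m (xs i)) (fun i => 1 ≤ m (ys i)) (1 ≤ m z))
    (hE : ∀ i i', (∀ j, E i j → E i' j) ∨ (∀ j, E i' j → E i j)) {r : ℤ} (hr : 1 ≤ r) :
    QuotRegLE (monomialIdeal K U) r := by
  suffices U = ferrersExponents xs ys
      ({v | ∃ i, Sx i ∧ xs i = v} ∪ {v | ∃ i, Sy i ∧ ys i = v} ∪ {v | Sz ∧ z = v}) E by
    rw [this]
    exact (quotRegLE_ferrersExponents hxy hE _).mono hr
  ext m
  rw [hU]
  simp only [FerrersSupport, ferrersExponents, varExponents, Set.mem_ofPred_eq, Set.mem_union]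
  grind

variable [Finite σ] (h : IsLabelling xs ys z) (hκl : (κ : ℕ) + 1 = l)
include h hκl

theorem quotRegLE_colonVar_z_lkExponents :
    QuotRegLE (monomialIdeal K (colonVar (lkExponents xs ys z κ l) z)) 2 := by
  have hU := isUpperSet_colonVar (isUpperSet_lkExponents xs ys z κ l) z
  have hD (m : σ →₀ ℕ) (h2 : 2 ≤ m (ys κ)) : 1 ≤ m (ys κ) := one_le_two.trans h2
  refine .of_colonVar_of_insertVar hU (ys κ) ?_ <|
    .of_colonVar_of_insertVar (isUpperSet_insertVar hU _) (xs κ) ?_ ?_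
  · refine .of_mem_iff_ferrersSupport h.x_ne_y (z := z) (fun m => .trans ?_
      (lkSupport_colon_z_yLeft hκl)) (by grind) (by norm_num)
    simp only [mem_colonVar, mem_lkExponents, one_le_add_single_one_apply,
      two_le_add_single_one_apply_self, two_le_add_single_one_apply_of_ne, h.y_injective.eq_iff,
      h.y_ne_z, (h.x_ne_y _ _).symm, (h.x_ne_z _).symm, (h.y_ne_z _).symm, ne_eq, not_false_iff,
      false_or, true_or]
  · refine .of_mem_iff_ferrersSupport h.x_ne_y (z := z) (fun m => .trans ?_
      (lkSupport_colon_z_insert_yLeft_colon_xLeft hκl (hD m))) (by grind) (by norm_num)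
    simp only [mem_colonVar, mem_insertVar, mem_lkExponents, one_le_add_single_one_apply,
      two_le_add_single_one_apply_of_ne, h.x_injective.eq_iff, h.x_ne_y, h.x_ne_z,
      (h.x_ne_z _).symm, (h.y_ne_z _).symm, ne_eq, not_false_iff, false_or, true_or]
  · refine .of_mem_iff_ferrersSupport h.x_ne_y (z := z) (fun m => .trans ?_
      (lkSupport_colon_z_insert_yLeft_insert_xLeft hκl (hD m))) (by grind) (by norm_num)
    simp only [mem_colonVar, mem_insertVar, mem_lkExponents, one_le_add_single_one_apply,
      two_le_add_single_one_apply_of_ne, (h.x_ne_z _).symm, (h.y_ne_z _).symm, ne_eq, not_false_iff,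
      false_or, true_or]

theorem quotRegLE_insertVar_z_lkExponents :
    QuotRegLE (monomialIdeal K (insertVar (lkExponents xs ys z κ l) z)) 3 := by
  have hlκ : l ≠ κ := fun h => by simp [h] at hκl
  have hU := isUpperSet_insertVar (isUpperSet_lkExponents xs ys z κ l) z
  have hUx := isUpperSet_insertVar hU (xs κ)
  have hUxy := isUpperSet_insertVar hUx (ys κ)
  refine .of_colonVar_of_insertVar hU (xs κ) ?_ <| .of_colonVar_of_insertVar hUx (ys κ) ?_ <|
    .of_colonVar_of_insertVar hUxy (xs l) ?_ ?_
  · refine .of_mem_iff_ferrersSupport h.x_ne_y (z := z) (fun m => .trans ?_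
      (lkSupport_insert_z_colon_xLeft (D := 2 ≤ m (ys κ)) hκl)) (by grind) (by norm_num)
    simp only [mem_colonVar, mem_insertVar, mem_lkExponents, one_le_add_single_one_apply,
      two_le_add_single_one_apply_of_ne, h.x_injective.eq_iff, h.x_ne_y, h.x_ne_z, ne_eq,
      not_false_iff, false_or]
  · refine .of_mem_iff_ferrersSupport h.x_ne_y (z := z) (fun m => .trans ?_
      (lkSupport_insert_z_insert_xLeft_colon_yLeft hκl)) (by grind) (by norm_num)
    simp only [mem_colonVar, mem_insertVar, mem_lkExponents, one_le_add_single_one_apply,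
      two_le_add_single_one_apply_self, h.y_injective.eq_iff, h.y_ne_z, (h.x_ne_y _ _).symm,
      false_or]
  · refine .of_mem_iff_ferrersSupport h.x_ne_y (z := z) (fun m => .trans ?_
      (lkSupport_insert_z_insert_xLeft_insert_yLeft_colon_xRight (D := 2 ≤ m (ys κ)) hκl))
      (by grind) (by norm_num)
    simp only [mem_colonVar, mem_insertVar, mem_lkExponents, one_le_add_single_one_apply,
      two_le_add_single_one_apply_of_ne, h.x_injective.eq_iff, h.x_ne_y, h.x_ne_z, hlκ, ne_eq,
      not_false_iff, false_or]
  · refine .of_mem_iff_ferrersSupport h.x_ne_y (z := z) (fun m => .trans ?_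
      (lkSupport_insert_z_insert_xLeft_insert_yLeft_insert_xRight (D := 2 ≤ m (ys κ)) hκl))
      (by grind) (by norm_num)
    simp only [mem_insertVar, mem_lkExponents]

theorem quotRegLE_lkExponents : QuotRegLE (monomialIdeal K (lkExponents xs ys z κ l)) 3 :=
  .of_colonVar_of_insertVar (isUpperSet_lkExponents _ _ _ _ _) z
    (quotRegLE_colonVar_z_lkExponents h hκl) (quotRegLE_insertVar_z_lkExponents h hκl)

end InitialIdeal

section InitialIdealGenerators

universe u v

variable {σ : Type u} {K : Type v} [CommRing K] {n : ℕ} {xs ys : Fin n → σ} {z : σ} {κ l : Fin n}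

/-- The ideal generated by the initial monomials of the Gröbner basis of the join-meet ideal of
`L_k`; counting from `0`, the indices `κ` and `l` of `x_k` and `x_{k+1}` are `k - 1` and `k`. -/
noncomputable def lkInitialIdeal (K : Type v) [CommRing K] (xs ys : Fin n → σ) (z : σ)
    (κ l : Fin n) : Ideal (MvPolynomial σ K) :=
  Ideal.span
    ({f | ∃ i j : Fin n, i < j ∧ f = (X (xs j) * X (ys i) : MvPolynomial σ K)} ∪
      {f | ∃ i : Fin n, (i : ℕ) + 1 < (l : ℕ) ∧ f = X (xs i) * X (ys l)} ∪
      {f | ∃ j : Fin n, (l : ℕ) ≤ (j : ℕ) ∧ f = X (xs κ) * X (ys j)} ∪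
      {f | ∃ i j : Fin n, (i : ℕ) + 1 < (l : ℕ) ∧ (l : ℕ) < (j : ℕ) ∧
        f = X (xs i) * X (xs l) * X (ys j)} ∪
      {f | ∃ i j : Fin n, (i : ℕ) + 1 < (l : ℕ) ∧ (l : ℕ) < (j : ℕ) ∧
        f = X (xs i) * X (ys κ) * X (ys j)} ∪
      {f | ∃ i : Fin n, (i : ℕ) < (l : ℕ) ∧ f = X (ys i) * X (ys κ) * X z} ∪
      {X (xs l) * X z})

theorem X_mul_X_eq_monomial (a b : σ) : (X a * X b : MvPolynomial σ K) =
    monomial (Finsupp.single a 1 + Finsupp.single b 1) 1 := by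
  simp [X, monomial_mul]

theorem X_mul_X_mul_X_eq_monomial (a b c : σ) : (X a * X b * X c : MvPolynomial σ K) =
    monomial (Finsupp.single a 1 + Finsupp.single b 1 + Finsupp.single c 1) 1 := by
  simp [X, monomial_mul]

theorem add_single_one_le {e m : σ →₀ ℕ} {v : σ} (he : e ≤ m) (hv : e v < m v) :
    e + Finsupp.single v 1 ≤ m := by
  classical
  intro w
  rw [Finsupp.add_apply, Finsupp.single_apply]
  split_ifs with h
  · exact h ▸ hv
  · exact he w

theorem X_mul_X_mem_monomialIdeal {U : Set (σ →₀ ℕ)} {a b : σ}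
    (h : Finsupp.single a 1 + Finsupp.single b 1 ∈ U) : X a * X b ∈ monomialIdeal K U :=
  Ideal.subset_span ⟨_, h, (X_mul_X_eq_monomial a b).symm⟩

theorem X_mul_X_mul_X_mem_monomialIdeal {U : Set (σ →₀ ℕ)} {a b c : σ}
    (h : Finsupp.single a 1 + Finsupp.single b 1 + Finsupp.single c 1 ∈ U) :
    X a * X b * X c ∈ monomialIdeal K U :=
  Ideal.subset_span ⟨_, h, (X_mul_X_mul_X_eq_monomial a b c).symm⟩

theorem monomial_mem_of_X_mul_X_mem {J : Ideal (MvPolynomial σ K)} {m : σ →₀ ℕ} {a b : σ}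
    (hab : a ≠ b) (ha : 1 ≤ m a) (hb : 1 ≤ m b) (h : X a * X b ∈ J) :
    monomial m (1 : K) ∈ J := by
  refine monomial_mem_of_le (add_single_one_le (Finsupp.single_le_iff.2 ha) ?_)
    (X_mul_X_eq_monomial (K := K) a b ▸ h)
  rw [Finsupp.single_eq_of_ne hab.symm]
  exact hb

theorem monomial_mem_of_X_mul_X_mul_X_mem {J : Ideal (MvPolynomial σ K)} {m : σ →₀ ℕ} {a b c : σ}
    (hab : a ≠ b) (hac : a ≠ c) (hbc : b ≠ c) (ha : 1 ≤ m a) (hb : 1 ≤ m b) (hc : 1 ≤ m c)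
    (h : X a * X b * X c ∈ J) : monomial m (1 : K) ∈ J := by
  refine monomial_mem_of_le (add_single_one_le (add_single_one_le (Finsupp.single_le_iff.2 ha) ?_)
    ?_) (X_mul_X_mul_X_eq_monomial (K := K) a b c ▸ h)
  · rw [Finsupp.single_eq_of_ne hab.symm]
    exact hb
  · rw [Finsupp.add_apply, Finsupp.single_eq_of_ne hac.symm, Finsupp.single_eq_of_ne hbc.symm]
    exact hc

theorem monomial_mem_of_X_mul_X_self_mul_X_mem {J : Ideal (MvPolynomial σ K)} {m : σ →₀ ℕ}
    {a c : σ} (hac : a ≠ c) (ha : 2 ≤ m a) (hc : 1 ≤ m c) (h : X a * X a * X c ∈ J) :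
    monomial m (1 : K) ∈ J := by
  refine monomial_mem_of_le (add_single_one_le (add_single_one_le
    (Finsupp.single_le_iff.2 (one_le_two.trans ha)) ?_) ?_)
    (X_mul_X_mul_X_eq_monomial (K := K) a a c ▸ h)
  · rwa [Finsupp.single_eq_same]
  · rw [Finsupp.add_apply, Finsupp.single_eq_of_ne hac.symm]
    exact hc

theorem lkInitialIdeal_le_monomialIdeal (hκl : (κ : ℕ) + 1 = l) :
    lkInitialIdeal K xs ys z κ l ≤ monomialIdeal K (lkExponents xs ys z κ l) := by
  have hfst (a b c : σ) : 1 ≤ (fun₀ | a => 1) a + (fun₀ | b => 1) a + (fun₀ | c => 1) a :=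
    le_add_right (le_add_right (by simp))
  have hsnd (a b c : σ) : 1 ≤ (fun₀ | a => 1) b + (fun₀ | b => 1) b + (fun₀ | c => 1) b :=
    le_add_right (le_add_left (by simp))
  have hthd (a b c : σ) : 1 ≤ (fun₀ | a => 1) c + (fun₀ | b => 1) c + (fun₀ | c => 1) c :=
    le_add_left (by simp)
  rw [lkInitialIdeal, Ideal.span_le]
  rintro f ((((((⟨i, j, hij, rfl⟩ | ⟨i, hi, rfl⟩) | ⟨j, hj, rfl⟩) | ⟨i, j, hi, hj, rfl⟩) |
    ⟨i, j, hi, hj, rfl⟩) | ⟨i, hi, rfl⟩) | rfl)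
  · exact X_mul_X_mem_monomialIdeal (.x_y hij (by simp) (by simp))
  · exact X_mul_X_mem_monomialIdeal (.x_yRight (i := i) (by omega) (by simp) (by simp))
  · exact X_mul_X_mem_monomialIdeal (.xLeft_y hj (by simp) (by simp))
  · exact X_mul_X_mul_X_mem_monomialIdeal
      (.x_xRight_y (i := i) (by omega) hj (hfst _ _ _) (hsnd _ _ _) (hthd _ _ _))
  · exact X_mul_X_mul_X_mem_monomialIdeal
      (.x_yLeft_y (i := i) (by omega) hj (hfst _ _ _) (hsnd _ _ _) (hthd _ _ _))
  · rcases eq_or_ne i κ with rfl | hne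
    · exact X_mul_X_mul_X_mem_monomialIdeal (.yLeft_sq_z (by simp) (hthd _ _ _))
    · exact X_mul_X_mul_X_mem_monomialIdeal
        (.y_yLeft_z (i := i) (by omega) (hfst _ _ _) (hsnd _ _ _) (hthd _ _ _))
  · exact X_mul_X_mem_monomialIdeal (.xRight_z (by simp) (by simp))

theorem monomialIdeal_le_lkInitialIdeal (h : IsLabelling xs ys z) (hκl : (κ : ℕ) + 1 = l) :
    monomialIdeal K (lkExponents xs ys z κ l) ≤ lkInitialIdeal K xs ys z κ l := by
  have hlt {i} (hi : i < κ) : (i : ℕ) + 1 < l := by omega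
  rw [monomialIdeal, Ideal.span_le]
  rintro _ ⟨m, hm, rfl⟩
  rcases hm with ⟨hij, hx, hy⟩ | ⟨hi, hx, hy⟩ | ⟨hj, hx, hy⟩ | ⟨hi, hj, hx, hxl, hy⟩ |
    ⟨hi, hj, hx, hyκ, hy⟩ | ⟨hi, hy, hyκ, hz⟩ | ⟨hyκ, hz⟩ | ⟨hx, hz⟩
  · exact monomial_mem_of_X_mul_X_mem (h.x_ne_y _ _) hx hy <| Ideal.subset_span <|
      .inl <| .inl <| .inl <| .inl <| .inl <| .inl ⟨_, _, hij, rfl⟩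
  · exact monomial_mem_of_X_mul_X_mem (h.x_ne_y _ _) hx hy <| Ideal.subset_span <|
      .inl <| .inl <| .inl <| .inl <| .inl <| .inr ⟨_, hlt hi, rfl⟩
  · exact monomial_mem_of_X_mul_X_mem (h.x_ne_y _ _) hx hy <| Ideal.subset_span <|
      .inl <| .inl <| .inl <| .inl <| .inr ⟨_, hj, rfl⟩
  · exact monomial_mem_of_X_mul_X_mul_X_mem (h.x_injective.ne (by omega)) (h.x_ne_y _ _)
      (h.x_ne_y _ _) hx hxl hy <| Ideal.subset_span <|
      .inl <| .inl <| .inl <| .inr ⟨_, _, hlt hi, hj, rfl⟩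
  · exact monomial_mem_of_X_mul_X_mul_X_mem (h.x_ne_y _ _) (h.x_ne_y _ _)
      (h.y_injective.ne (by omega)) hx hyκ hy <| Ideal.subset_span <|
      .inl <| .inl <| .inr ⟨_, _, hlt hi, hj, rfl⟩
  · exact monomial_mem_of_X_mul_X_mul_X_mem (h.y_injective.ne hi.ne) (h.y_ne_z _) (h.y_ne_z _)
      hy hyκ hz <| Ideal.subset_span <| .inl <| .inr ⟨_, by omega, rfl⟩
  · exact monomial_mem_of_X_mul_X_self_mul_X_mem (h.y_ne_z _) hyκ hz <| Ideal.subset_span <|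
      .inl <| .inr ⟨κ, by omega, rfl⟩
  · exact monomial_mem_of_X_mul_X_mem (h.x_ne_z _) hx hz <| Ideal.subset_span <| .inr rfl

theorem lkInitialIdeal_eq_monomialIdeal (h : IsLabelling xs ys z) (hκl : (κ : ℕ) + 1 = l) :
    lkInitialIdeal K xs ys z κ l = monomialIdeal K (lkExponents xs ys z κ l) :=
  (lkInitialIdeal_le_monomialIdeal hκl).antisymm (monomialIdeal_le_lkInitialIdeal h hκl)

theorem isHomogeneous_lkInitialIdeal (h : IsLabelling xs ys z) (hκl : (κ : ℕ) + 1 = l) :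
    (lkInitialIdeal K xs ys z κ l).IsHomogeneous (homogeneousSubmodule σ K) :=
  lkInitialIdeal_eq_monomialIdeal (K := K) h hκl ▸ isHomogeneous_monomialIdeal _

theorem quotRegLE_lkInitialIdeal [Finite σ] (h : IsLabelling xs ys z) (hκl : (κ : ℕ) + 1 = l) :
    QuotRegLE (lkInitialIdeal K xs ys z κ l) 3 :=
  lkInitialIdeal_eq_monomialIdeal (K := K) h hκl ▸ quotRegLE_lkExponents h hκl

end InitialIdealGenerators

section ToricParametrization

universe u v

variable {σ : Type u} {K : Type v} [CommRing K] {n : ℕ} {xs ys : Fin n → σ} {z : σ} {U : Set σ}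

/-- The ideal generated by the `2 × 2` minors of the matrix with rows `xs` and `ys`, together with
the variables in `U`. -/
noncomputable def minorsVarsIdeal (K : Type v) [CommRing K] (xs ys : Fin n → σ) (U : Set σ) :
    Ideal (MvPolynomial σ K) :=
  Ideal.span ({f | ∃ i j, f = X (xs j) * X (ys i) - X (xs i) * X (ys j)} ∪ X '' U)

theorem minor_mem_minorsVarsIdeal (U : Set σ) (i j : Fin n) :
    X (xs j) * X (ys i) - X (xs i) * X (ys j) ∈ minorsVarsIdeal K xs ys U :=
  Ideal.subset_span (.inl ⟨i, j, rfl⟩)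

theorem X_mem_minorsVarsIdeal {v : σ} (hv : v ∈ U) : X v ∈ minorsVarsIdeal K xs ys U :=
  Ideal.subset_span (.inr ⟨v, hv, rfl⟩)

/-- The exponents of the monomials `x_j ↦ e_j s`, `y_j ↦ e_j t`, `z ↦ u` parametrizing the
`2 × 2` minors: `Sum.inl j` stands for `e_j`, and `Sum.inr 0, 1, 2` stand for `s`, `t`, `u`. -/
structure IsToricWeight (xs ys : Fin n → σ) (z : σ) (w : σ → Fin n ⊕ Fin 3 →₀ ℕ) : Prop where
  map_x : ∀ j, w (xs j) = Finsupp.single (.inl j) 1 + Finsupp.single (.inr 0) 1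
  map_y : ∀ j, w (ys j) = Finsupp.single (.inl j) 1 + Finsupp.single (.inr 1) 1
  map_z : w z = Finsupp.single (.inr 2) 1

theorem IsLabelling.exists_isToricWeight (h : IsLabelling xs ys z) :
    ∃ w, IsToricWeight xs ys z w := by
  obtain ⟨w, hx, hy, hz⟩ := h.exists_extend
    (fun j => Finsupp.single (Sum.inl j) 1 + Finsupp.single (Sum.inr (0 : Fin 3)) 1)
    (fun j => Finsupp.single (Sum.inl j) 1 + Finsupp.single (Sum.inr (1 : Fin 3)) 1)
    (Finsupp.single (Sum.inr (2 : Fin 3)) 1)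
  exact ⟨w, hx, hy, hz⟩

variable {w : σ → Fin n ⊕ Fin 3 →₀ ℕ}

namespace IsToricWeight

theorem apply_inl_ne_zero (hw : IsToricWeight xs ys z w) (h : IsLabelling xs ys z) {j : Fin n} :
    ∀ v, w v (.inl j) ≠ 0 → v = xs j ∨ v = ys j := by
  refine h.forall_of (fun i => ?_) (fun i => ?_) ?_
  · rcases eq_or_ne i j with rfl | hij <;> simp [hw.map_x, *]
  · rcases eq_or_ne i j with rfl | hij <;> simp [hw.map_y, *]
  · simp [hw.map_z]

theorem apply_inr_zero_ne_zero (hw : IsToricWeight xs ys z w) (h : IsLabelling xs ys z) :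
    ∀ v, w v (.inr 0) ≠ 0 → ∃ i, v = xs i :=
  h.forall_of (fun i _ => ⟨i, rfl⟩) (by simp [hw.map_y]) (by simp [hw.map_z])

theorem apply_inr_one_ne_zero (hw : IsToricWeight xs ys z w) (h : IsLabelling xs ys z) :
    ∀ v, w v (.inr 1) ≠ 0 → ∃ i, v = ys i :=
  h.forall_of (by simp [hw.map_x]) (fun i _ => ⟨i, rfl⟩) (by simp [hw.map_z])

theorem apply_inr_two_ne_zero (hw : IsToricWeight xs ys z w) (h : IsLabelling xs ys z) :
    ∀ v, w v (.inr 2) ≠ 0 → v = z :=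
  h.forall_of (by simp [hw.map_x]) (by simp [hw.map_y]) fun _ => rfl

theorem ne_zero (hw : IsToricWeight xs ys z w) (h : IsLabelling xs ys z) : ∀ v, w v ≠ 0 :=
  h.forall_of (fun i => by simp [hw.map_x]) (fun i => by simp [hw.map_y]) (by simp [hw.map_z])

theorem map_x_add_map_y (hw : IsToricWeight xs ys z w) (i j : Fin n) :
    w (xs j) + w (ys i) = w (xs i) + w (ys j) := by
  rw [hw.map_x, hw.map_y, hw.map_x, hw.map_y]
  abel

end IsToricWeight

theorem exists_eq_single_add {m : σ →₀ ℕ} {v : σ} (hv : 1 ≤ m v) :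
    ∃ m', m = Finsupp.single v 1 + m' :=
  ⟨m - Finsupp.single v 1, (add_tsub_cancel_of_le (Finsupp.single_le_iff.2 hv)).symm⟩

theorem exists_eq_single_add_single_add {m : σ →₀ ℕ} {v v' : σ} (hne : v ≠ v') (hv : 1 ≤ m v)
    (hv' : 1 ≤ m v') : ∃ m', m = Finsupp.single v 1 + (Finsupp.single v' 1 + m') := by
  obtain ⟨m, rfl⟩ := exists_eq_single_add hv
  rw [Finsupp.add_apply, Finsupp.single_eq_of_ne hne.symm, zero_add] at hv'
  obtain ⟨m, rfl⟩ := exists_eq_single_add hv'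
  exact ⟨m, rfl⟩

theorem X_mul_monomial_one (v : σ) (m : σ →₀ ℕ) :
    (X v * monomial m 1 : MvPolynomial σ K) = monomial (Finsupp.single v 1 + m) 1 := by
  rw [X, monomial_mul, one_mul]

theorem exists_apply_ne_zero_of_linearCombination {τ : Type*} {w : σ → τ →₀ ℕ} {m : σ →₀ ℕ}
    {t : τ} (h : Finsupp.linearCombination ℕ w m t ≠ 0) : ∃ v, w v t ≠ 0 ∧ 1 ≤ m v := by
  rw [Finsupp.linearCombination_apply, Finsupp.sum_apply] at h
  obtain ⟨v, hv, hne⟩ := Finset.exists_ne_zero_of_sum_ne_zero h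
  exact ⟨v, fun h0 => hne (by simp [h0]),
    Nat.one_le_iff_ne_zero.2 (Finsupp.mem_support_iff.1 hv)⟩

theorem eq_zero_of_linearCombination_eq_zero {τ : Type*} {w : σ → τ →₀ ℕ} (hw : ∀ v, w v ≠ 0)
    {m : σ →₀ ℕ} (h : Finsupp.linearCombination ℕ w m = 0) : m = 0 := by
  ext v
  by_contra hv
  obtain ⟨m, rfl⟩ := exists_eq_single_add (Nat.one_le_iff_ne_zero.2 hv)
  rw [map_add, Finsupp.linearCombination_single, one_smul] at h
  exact hw v (add_eq_zero.1 h).1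

/- Replacing `b_j a_i` by `a_j b_i` changes the monomial by a multiple of a minor. -/
theorem exists_exchange {ι τ : Type*} {a b : ι → σ} {w : σ → τ →₀ ℕ}
    {J : Ideal (MvPolynomial σ K)} {i j : ι} (hJ : X (a j) * X (b i) - X (a i) * X (b j) ∈ J)
    (hw : w (a j) + w (b i) = w (a i) + w (b j)) (hne : b j ≠ a i) {m : σ →₀ ℕ}
    (hj : 1 ≤ m (b j)) (hi : 1 ≤ m (a i)) :
    ∃ m', Finsupp.linearCombination ℕ w m' = Finsupp.linearCombination ℕ w m ∧
      1 ≤ m' (a j) ∧ monomial m' (1 : K) - monomial m 1 ∈ J := by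
  obtain ⟨m, rfl⟩ := exists_eq_single_add_single_add hne hj hi
  refine ⟨Finsupp.single (a j) 1 + (Finsupp.single (b i) 1 + m), ?_, by simp, ?_⟩
  · simp only [map_add, Finsupp.linearCombination_single, one_smul, ← add_assoc, hw]
    abel
  · convert J.mul_mem_right (monomial m 1) hJ using 1
    simp only [← X_mul_monomial_one]
    ring

section Congruence

variable (h : IsLabelling xs ys z) (hw : IsToricWeight xs ys z w) {J : Ideal (MvPolynomial σ K)}
  (hJ : ∀ i j, X (xs j) * X (ys i) - X (xs i) * X (ys j) ∈ J)
include h hw hJ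

theorem exists_congr_of_weight_le {m : σ →₀ ℕ} (v : σ)
    (hv : w v ≤ Finsupp.linearCombination ℕ w m) :
    ∃ m', Finsupp.linearCombination ℕ w m' = Finsupp.linearCombination ℕ w m ∧
      1 ≤ m' v ∧ monomial m' (1 : K) - monomial m 1 ∈ J := by
  by_cases hmv : 1 ≤ m v
  · exact ⟨m, rfl, hmv, by simp⟩
  have hex (t) (ht : w v t ≠ 0) : ∃ v', w v' t ≠ 0 ∧ 1 ≤ m v' :=
    exists_apply_ne_zero_of_linearCombination
      (Nat.pos_iff_ne_zero.1 ((Nat.pos_of_ne_zero ht).trans_le (hv t)))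
  rcases h.cases v with ⟨j, rfl⟩ | ⟨j, rfl⟩ | rfl
  · obtain ⟨v₁, h₁, hm₁⟩ := hex (.inl j) (by simp [hw.map_x])
    obtain ⟨v₂, h₂, hm₂⟩ := hex (.inr 0) (by simp [hw.map_x])
    obtain ⟨i, rfl⟩ := hw.apply_inr_zero_ne_zero h v₂ h₂
    obtain rfl | rfl := hw.apply_inl_ne_zero h v₁ h₁
    · exact absurd hm₁ hmv
    exact exists_exchange (hJ i j) (hw.map_x_add_map_y i j) (h.x_ne_y i j).symm hm₁ hm₂
  · obtain ⟨v₁, h₁, hm₁⟩ := hex (.inl j) (by simp [hw.map_y])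
    obtain ⟨v₂, h₂, hm₂⟩ := hex (.inr 1) (by simp [hw.map_y])
    obtain ⟨i, rfl⟩ := hw.apply_inr_one_ne_zero h v₂ h₂
    obtain rfl | rfl := hw.apply_inl_ne_zero h v₁ h₁
    · exact exists_exchange (by simpa only [mul_comm] using hJ j i)
        (by rw [add_comm, hw.map_x_add_map_y j i, add_comm]) (h.x_ne_y j i) hm₁ hm₂
    exact absurd hm₁ hmv
  · obtain ⟨v', h', hm'⟩ := hex (.inr 2) (by simp [hw.map_z])
    exact absurd (hw.apply_inr_two_ne_zero h v' h' ▸ hm') hmv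

theorem monomial_sub_monomial_mem_of_weight_eq (m m' : σ →₀ ℕ)
    (hmm' : Finsupp.linearCombination ℕ w m = Finsupp.linearCombination ℕ w m') :
    monomial m (1 : K) - monomial m' 1 ∈ J := by
  induction hd : m.degree generalizing m m' with
  | zero =>
    obtain rfl := (Finsupp.degree_eq_zero_iff m).1 hd
    obtain rfl : m' = 0 :=
      eq_zero_of_linearCombination_eq_zero (hw.ne_zero h) (by rw [← hmm', map_zero])
    rw [sub_self]
    exact J.zero_mem
  | succ d ih =>
    have hm : m ≠ 0 := by
      rintro rfl
      simp at hd
    obtain ⟨v, hv⟩ := Finsupp.ne_iff.1 hm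
    obtain ⟨m, rfl⟩ := exists_eq_single_add (Nat.one_le_iff_ne_zero.2 hv)
    rw [map_add, Finsupp.linearCombination_single, one_smul] at hmm'
    obtain ⟨m'', hweight, hv'', hmem⟩ :=
      exists_congr_of_weight_le h hw hJ v (m := m') (hmm' ▸ le_self_add)
    obtain ⟨m'', rfl⟩ := exists_eq_single_add hv''
    rw [← hmm', map_add, Finsupp.linearCombination_single, one_smul] at hweight
    have hrest := ih m m'' (add_left_cancel hweight).symm
      (by rw [map_add, Finsupp.degree_single] at hd; omega)
    rw [← sub_add_sub_cancel _ (monomial (Finsupp.single v 1 + m'') 1)]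
    refine J.add_mem ?_ hmem
    rw [← X_mul_monomial_one, ← X_mul_monomial_one, ← mul_sub]
    exact J.mul_mem_left _ hrest

end Congruence

open Classical in
/-- The homomorphism of `K`-algebras that sends the variables in `U` to zero and every other
variable `v` to the monomial with exponent `w v`. -/
noncomputable def toricHom {τ : Type*} (K : Type v) [CommRing K] (w : σ → τ →₀ ℕ) (U : Set σ) :
    MvPolynomial σ K →ₐ[K] MvPolynomial τ K :=
  aeval fun v => if v ∈ U then 0 else monomial (w v) 1

theorem toricHom_X_of_mem {τ : Type*} {w : σ → τ →₀ ℕ} {v : σ} (hv : v ∈ U) :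
    toricHom K w U (X v) = 0 := by
  simp [toricHom, hv]

theorem toricHom_X_of_notMem {τ : Type*} {w : σ → τ →₀ ℕ} {v : σ} (hv : v ∉ U) :
    toricHom K w U (X v) = monomial (w v) 1 := by
  simp [toricHom, hv]

theorem toricHom_monomial {τ : Type*} {w : σ → τ →₀ ℕ} {m : σ →₀ ℕ} (hm : ∀ v, 1 ≤ m v → v ∉ U) :
    toricHom K w U (monomial m 1) = monomial (Finsupp.linearCombination ℕ w m) 1 := by
  rw [toricHom, aeval_monomial, map_one, one_mul, Finsupp.linearCombination_apply, Finsupp.prod,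
    Finsupp.sum, monomial_sum_one]
  refine Finset.prod_congr rfl fun v hv => ?_
  rw [if_neg (hm v (Nat.one_le_iff_ne_zero.2 (Finsupp.mem_support_iff.1 hv))), monomial_pow,
    one_pow]

theorem minorsVarsIdeal_le_ker_toricHom (hw : IsToricWeight xs ys z w)
    (hU : ∀ i, xs i ∈ U ↔ ys i ∈ U) :
    minorsVarsIdeal K xs ys U ≤ RingHom.ker (toricHom K w U) := by
  rw [minorsVarsIdeal, Ideal.span_le]
  rintro _ (⟨i, j, rfl⟩ | ⟨v, hv, rfl⟩)
  · rw [SetLike.mem_coe, RingHom.mem_ker, map_sub, map_mul, map_mul]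
    by_cases hi : xs i ∈ U
    · simp [toricHom_X_of_mem hi, toricHom_X_of_mem ((hU i).1 hi)]
    by_cases hj : xs j ∈ U
    · simp [toricHom_X_of_mem hj, toricHom_X_of_mem ((hU j).1 hj)]
    rw [toricHom_X_of_notMem hi, toricHom_X_of_notMem hj,
      toricHom_X_of_notMem (mt (hU i).2 hi), toricHom_X_of_notMem (mt (hU j).2 hj), monomial_mul,
      monomial_mul, hw.map_x_add_map_y i j, sub_self]
  · exact toricHom_X_of_mem hv

/- Sending a monomial to the class of any monomial of the given weight is well defined by the
congruence above, and it recovers the quotient map from `toricHom`. -/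
theorem ker_toricHom_le_minorsVarsIdeal (h : IsLabelling xs ys z) (hw : IsToricWeight xs ys z w)
    (U : Set σ) : RingHom.ker (toricHom K w U) ≤ minorsVarsIdeal K xs ys U := by
  classical
  let lift : MvPolynomial (Fin n ⊕ Fin 3) K →ₗ[K] MvPolynomial σ K :=
    (basisMonomials _ K).constr K fun e =>
      monomial (Function.invFun (Finsupp.linearCombination ℕ w) e) 1
  have hlift (e) : lift (monomial e 1) =
      monomial (Function.invFun (Finsupp.linearCombination ℕ w) e) 1 := by
    simpa using (basisMonomials (Fin n ⊕ Fin 3) K).constr_basis K _ e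
  have hcomp : (Ideal.Quotient.mkₐ K (minorsVarsIdeal K xs ys U)).toLinearMap ∘ₗ lift ∘ₗ
      (toricHom K w U).toLinearMap =
      (Ideal.Quotient.mkₐ K (minorsVarsIdeal K xs ys U)).toLinearMap := by
    refine (basisMonomials σ K).ext fun m => Ideal.Quotient.eq.2 ?_
    simp only [coe_basisMonomials, LinearMap.comp_apply, AlgHom.toLinearMap_apply]
    by_cases hm : ∀ v, 1 ≤ m v → v ∉ U
    · rw [toricHom_monomial hm, hlift]
      exact monomial_sub_monomial_mem_of_weight_eq h hw (minor_mem_minorsVarsIdeal U) _ _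
        (Function.invFun_eq ⟨m, rfl⟩)
    · push Not at hm
      obtain ⟨v, hv, hvU⟩ := hm
      obtain ⟨m, rfl⟩ := exists_eq_single_add hv
      rw [← X_mul_monomial_one, map_mul, toricHom_X_of_mem hvU, zero_mul, map_zero, zero_sub]
      exact neg_mem (Ideal.mul_mem_right _ _ (X_mem_minorsVarsIdeal hvU))
  intro p hp
  have hpcomp := LinearMap.congr_fun hcomp p
  rw [LinearMap.comp_apply, LinearMap.comp_apply, AlgHom.toLinearMap_apply (toricHom K w U),
    RingHom.mem_ker.1 hp, map_zero, map_zero] at hpcomp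
  exact Ideal.Quotient.eq_zero_iff_mem.1 hpcomp.symm

theorem mem_minorsVarsIdeal_of_X_mul_mem [IsDomain K] (h : IsLabelling xs ys z)
    (hU : ∀ i, xs i ∈ U ↔ ys i ∈ U) {v : σ} (hv : v ∉ U) {p : MvPolynomial σ K}
    (hp : X v * p ∈ minorsVarsIdeal K xs ys U) : p ∈ minorsVarsIdeal K xs ys U := by
  obtain ⟨w, hw⟩ := h.exists_isToricWeight
  have hp' := minorsVarsIdeal_le_ker_toricHom hw hU hp
  rw [RingHom.mem_ker, map_mul, toricHom_X_of_notMem hv] at hp'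
  exact ker_toricHom_le_minorsVarsIdeal h hw U ((mul_eq_zero.1 hp').resolve_left (by simp))

end ToricParametrization

section VariableIdeals

universe u v

variable {σ : Type u} {K : Type v} [CommRing K] {S : Set σ}

theorem span_X_image_eq_monomialIdeal (S : Set σ) :
    Ideal.span (X '' S) = monomialIdeal K (varExponents S) := by
  ext p
  rw [mem_ideal_span_X_image, mem_monomialIdeal (isUpperSet_varExponents S)]
  simp only [varExponents, Set.mem_ofPred_eq, Nat.one_le_iff_ne_zero]

theorem isHomogeneous_span_X_image (S : Set σ) :
    (Ideal.span (X '' S)).IsHomogeneous (homogeneousSubmodule σ K) :=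
  span_X_image_eq_monomialIdeal (K := K) S ▸ isHomogeneous_monomialIdeal _

theorem quotRegLE_span_X_image [Finite σ] (S : Set σ) :
    QuotRegLE (Ideal.span (X '' S) : Ideal (MvPolynomial σ K)) 0 :=
  span_X_image_eq_monomialIdeal (K := K) S ▸ quotRegLE_varExponents S

theorem mem_span_X_image_of_X_mul_mem {v : σ} (hv : v ∉ S) {p : MvPolynomial σ K}
    (hp : X v * p ∈ Ideal.span (X '' S)) : p ∈ Ideal.span (X '' S) := by
  rw [span_X_image_eq_monomialIdeal] at hp ⊢
  rwa [← mem_monomialIdeal_colonVar (isUpperSet_varExponents S), colonVar_varExponents hv] at hp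

theorem mul_X_divMonomial_single {u v : σ} (huv : u ≠ v) (c : MvPolynomial σ K) :
    (c * X u).divMonomial (Finsupp.single v 1) = c.divMonomial (Finsupp.single v 1) * X u := by
  classical
  ext m
  rw [coeff_divMonomial, coeff_mul_X', coeff_mul_X', coeff_divMonomial]
  have hmem : u ∈ (Finsupp.single v 1 + m).support ↔ u ∈ m.support := by simp [huv]
  rw [if_congr hmem rfl rfl]
  split_ifs with h
  · rw [add_tsub_assoc_of_le (Finsupp.single_le_iff.2
      (Nat.one_le_iff_ne_zero.2 (Finsupp.mem_support_iff.1 h)))]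
  · rfl

theorem mul_divMonomial_single_of_mem_supported {v : σ} {g : MvPolynomial σ K}
    (hg : g ∈ supported K {v}ᶜ) (c : MvPolynomial σ K) :
    (c * g).divMonomial (Finsupp.single v 1) = c.divMonomial (Finsupp.single v 1) * g := by
  rw [supported_eq_adjoin_X] at hg
  induction hg using Algebra.adjoin_induction generalizing c with
  | mem _ h =>
    obtain ⟨u, hu, rfl⟩ := h
    exact mul_X_divMonomial_single hu c
  | algebraMap r =>
    ext m
    rw [coeff_divMonomial, algebraMap_eq, mul_comm, mul_comm _ (C r), coeff_C_mul, coeff_C_mul,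
      coeff_divMonomial]
  | add _ _ _ _ ha hb => rw [mul_add, add_divMonomial, ha, hb, mul_add]
  | mul a b _ _ ha hb => rw [← mul_assoc, hb, ha, mul_assoc]

theorem mem_span_of_mul_X_mem {s : Set (MvPolynomial σ K)} {v : σ}
    (hs : ∀ g ∈ s, g ∈ supported K {v}ᶜ) {p : MvPolynomial σ K}
    (hp : p * X v ∈ Ideal.span s) : p ∈ Ideal.span s := by
  suffices hdiv : ∀ q ∈ Ideal.span s, q.divMonomial (Finsupp.single v 1) ∈ Ideal.span s by
    simpa only [mul_X_divMonomial] using hdiv _ hp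
  intro q hq
  induction hq using Submodule.closure_induction with
  | zero => simp
  | add a b _ _ ha hb => rw [add_divMonomial]; exact add_mem ha hb
  | smul_mem c g hg =>
    rw [smul_eq_mul, mul_divMonomial_single_of_mem_supported (hs g hg)]
    exact Ideal.mul_mem_left _ _ (Ideal.subset_span hg)

end VariableIdeals

section Minors

universe u v

variable {σ : Type u} {K : Type v} {n : ℕ} {xs ys : Fin n → σ} {z : σ} {U : Set σ}

section CommRing

variable [CommRing K]

theorem isHomogeneous_minorsVarsIdeal (xs ys : Fin n → σ) (U : Set σ) :
    (minorsVarsIdeal K xs ys U).IsHomogeneous (homogeneousSubmodule σ K) := by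
  apply isHomogeneous_span_of_mem_polyGr
  rintro _ (⟨i, j, rfl⟩ | ⟨v, -, rfl⟩)
  · exact ⟨1 + 1, sub_mem (SetLike.mul_mem_graded (X_mem_polyGr _) (X_mem_polyGr _))
      (SetLike.mul_mem_graded (X_mem_polyGr _) (X_mem_polyGr _))⟩
  · exact ⟨1, X_mem_polyGr v⟩

theorem minorsVarsIdeal_union (U V : Set σ) :
    minorsVarsIdeal K xs ys (U ∪ V) = minorsVarsIdeal K xs ys U ⊔ Ideal.span (X '' V) := by
  rw [minorsVarsIdeal, minorsVarsIdeal, ← Ideal.span_union, Set.image_union, Set.union_assoc]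

theorem minorsVarsIdeal_insert (v : σ) (U : Set σ) :
    minorsVarsIdeal K xs ys (insert v U) = minorsVarsIdeal K xs ys U ⊔ Ideal.span {X v} := by
  rw [Set.insert_eq, Set.union_comm, minorsVarsIdeal_union, Set.image_singleton]

theorem minorsVarsIdeal_swap (U : Set σ) :
    minorsVarsIdeal K ys xs U = minorsVarsIdeal K xs ys U := by
  have hset : {f : MvPolynomial σ K | ∃ i j, f = X (ys j) * X (xs i) - X (ys i) * X (xs j)} =
      {f | ∃ i j, f = X (xs j) * X (ys i) - X (xs i) * X (ys j)} := by
    ext f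
    refine exists_comm.trans (exists₂_congr fun j i => ?_)
    rw [mul_comm (X (ys _)), mul_comm (X (ys _))]
  rw [minorsVarsIdeal, hset, minorsVarsIdeal]

theorem minorsVarsIdeal_le_span_X_image {S : Set σ} (hS : U ⊆ S)
    (h : ∀ i j, xs j ∈ S ∨ ys i ∈ S) : minorsVarsIdeal K xs ys U ≤ Ideal.span (X '' S) := by
  have hX (v) (hv : v ∈ S) : (X v : MvPolynomial σ K) ∈ Ideal.span (X '' S) :=
    Ideal.subset_span ⟨v, hv, rfl⟩
  have hmul (i j) : (X (xs j) * X (ys i) : MvPolynomial σ K) ∈ Ideal.span (X '' S) :=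
    (h i j).elim (fun hx => Ideal.mul_mem_right _ _ (hX _ hx))
      fun hy => Ideal.mul_mem_left _ _ (hX _ hy)
  rw [minorsVarsIdeal, Ideal.span_le]
  rintro _ (⟨i, j, rfl⟩ | ⟨v, hv, rfl⟩)
  · exact sub_mem (hmul i j) (hmul j i)
  · exact hX v (hS hv)

theorem mem_span_X_image_iff_X_mul_mem (hxy : ∀ i j, xs i ≠ ys j) {i : Fin n} (hx : xs i ∉ U)
    (hy : ys i ∈ U) (p : MvPolynomial σ K) :
    p ∈ Ideal.span (X '' (U ∪ Set.range ys)) ↔ X (xs i) * p ∈ minorsVarsIdeal K xs ys U := by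
  constructor
  · suffices hle : Ideal.span (X '' (U ∪ Set.range ys)) ≤
        Submodule.comap (LinearMap.mulLeft _ (X (xs i))) (minorsVarsIdeal K xs ys U) from
      fun hp => hle hp
    rw [Ideal.span_le]
    rintro _ ⟨v, hv | ⟨j, rfl⟩, rfl⟩
    · exact Ideal.mul_mem_left _ _ (X_mem_minorsVarsIdeal hv)
    · have hminor := sub_mem (Ideal.mul_mem_left _ (X (xs j)) (X_mem_minorsVarsIdeal (K := K) hy))
        (minor_mem_minorsVarsIdeal (xs := xs) (ys := ys) U i j)
      rwa [sub_sub_cancel] at hminor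
  · refine fun hp => mem_span_X_image_of_X_mul_mem ?_
      (minorsVarsIdeal_le_span_X_image Set.subset_union_left
        (fun i _ => .inr (.inr (Set.mem_range_self i))) hp)
    rintro (h | ⟨j, hj⟩)
    exacts [hx h, hxy i j hj.symm]

theorem quotRegLE_minorsVarsIdeal_of_insert [Finite σ] (hxy : ∀ i j, xs i ≠ ys j) {i : Fin n}
    (hx : xs i ∉ U) (hy : ys i ∈ U)
    (hins : QuotRegLE (minorsVarsIdeal K xs ys (insert (xs i) U)) 1) :
    QuotRegLE (minorsVarsIdeal K xs ys U) 1 :=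
  .of_colon_of_sup (X_mem_polyGr _) (isHomogeneous_minorsVarsIdeal xs ys U)
    (mem_span_X_image_iff_X_mul_mem hxy hx hy) (quotRegLE_span_X_image _)
    (minorsVarsIdeal_insert (K := K) (xs i) U ▸ hins)

theorem mem_minorsVarsIdeal_of_X_sub_X_mul_mem (h : IsLabelling xs ys z) (hz : z ∉ U) {v : σ}
    (hv : v ∈ U) {p : MvPolynomial σ K} (hp : (X z - X v) * p ∈ minorsVarsIdeal K xs ys U) :
    p ∈ minorsVarsIdeal K xs ys U := by
  have hX (u) (hu : u ≠ z) : (X u : MvPolynomial σ K) ∈ supported K {z}ᶜ := by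
    rw [supported_eq_adjoin_X]
    exact Algebra.subset_adjoin ⟨u, hu, rfl⟩
  refine mem_span_of_mul_X_mem (v := z) ?_ ?_
  · rintro _ (⟨i, j, rfl⟩ | ⟨u, hu, rfl⟩)
    · exact sub_mem (mul_mem (hX _ (h.x_ne_z j)) (hX _ (h.y_ne_z i)))
        (mul_mem (hX _ (h.x_ne_z i)) (hX _ (h.y_ne_z j)))
    · exact hX u (ne_of_mem_of_not_mem hu hz)
  · have hadd := add_mem hp (Ideal.mul_mem_right p _ (X_mem_minorsVarsIdeal hv))
    rwa [← add_mul, sub_add_cancel, mul_comm] at hadd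

end CommRing

theorem quotRegLE_minorsVarsIdeal [Field K] [Finite σ] (h : IsLabelling xs ys z) (U : Set σ) :
    QuotRegLE (minorsVarsIdeal K xs ys U) 1 := by
  induction U using WellFoundedGT.induction with
  | ind U ih =>
  have hins (v) (hv : v ∉ U) := ih (insert v U) (Set.ssubset_insert hv)
  by_cases hxU : ∃ i, xs i ∉ U ∧ ys i ∈ U
  · obtain ⟨i, hx, hy⟩ := hxU
    exact quotRegLE_minorsVarsIdeal_of_insert h.x_ne_y hx hy (hins _ hx)
  by_cases hyU : ∃ i, ys i ∉ U ∧ xs i ∈ U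
  · obtain ⟨i, hy, hx⟩ := hyU
    rw [← minorsVarsIdeal_swap]
    refine quotRegLE_minorsVarsIdeal_of_insert (fun i j => (h.x_ne_y j i).symm) hy hx ?_
    rw [minorsVarsIdeal_swap]
    exact hins _ hy
  push Not at hxU hyU
  have hiff (i) : xs i ∈ U ↔ ys i ∈ U :=
    ⟨fun hx => by_contra fun hy => hyU i hy hx, fun hy => by_contra fun hx => hxU i hx hy⟩
  by_cases hall : ∀ i, ys i ∈ U
  · have heq : minorsVarsIdeal K xs ys U = Ideal.span (X '' U) :=
      (minorsVarsIdeal_le_span_X_image le_rfl fun i _ => .inr (hall i)).antisymm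
        (Ideal.span_mono Set.subset_union_right)
    exact heq ▸ (quotRegLE_span_X_image U).mono zero_le_one
  · obtain ⟨i, hi⟩ := not_forall.1 hall
    exact .of_sup_span_linear_nonZeroDivisor (isHomogeneous_minorsVarsIdeal xs ys U)
      (X_mem_polyGr _) (fun p => mem_minorsVarsIdeal_of_X_mul_mem h hiff hi)
      (minorsVarsIdeal_insert (K := K) (ys i) U ▸ hins _ hi)

end Minors

section IdealColon

variable {R : Type*} [CommRing R] {I P Q : Ideal R} {f g h : R}

theorem mem_sup_sup_iff {s : R} :
    s ∈ I ⊔ P ⊔ Q ↔ ∃ a ∈ I, ∃ b ∈ P, ∃ c ∈ Q, a + b + c = s := by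
  simp only [Submodule.mem_sup, exists_exists_and_exists_and_eq_and]

theorem mem_sup_iff_mul_mem (hg : ∀ s, g * s ∈ I → s ∈ I) (s : R) :
    s ∈ I ⊔ Q ↔ g * s ∈ I ⊔ Q * Ideal.span {g} := by
  simp only [Submodule.mem_sup, Ideal.mem_mul_span_singleton]
  constructor
  · rintro ⟨a, ha, q, hq, rfl⟩
    exact ⟨g * a, I.mul_mem_left _ ha, q * g, ⟨q, hq, rfl⟩, by ring⟩
  · rintro ⟨a, ha, _, ⟨q, hq, rfl⟩, heq⟩
    have hsub : g * (s - q) = a := by linear_combination -heq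
    exact ⟨s - q, hg _ (hsub ▸ ha), q, hq, sub_add_cancel s q⟩

theorem sup_mul_span_singleton_sup (I Q : Ideal R) (g : R) :
    I ⊔ Q * Ideal.span {g} ⊔ Ideal.span {g} = I ⊔ Ideal.span {g} := by
  rw [sup_assoc, sup_eq_right.2 (Ideal.mul_le_right (I := Q) (J := Ideal.span {g}))]

theorem mem_sup_sup_iff_mul_mem (hg : g = f + h) (hf : ∀ s, f * s ∈ I → s ∈ I)
    (hh : ∀ s, h * s ∈ I ⊔ Ideal.span {f} → s ∈ I ⊔ Ideal.span {f})
    (hfQ : ∀ s, f * s ∈ I ⊔ Q → s ∈ I ⊔ Q) (s : R) :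
    s ∈ I ⊔ P ⊔ Q * Ideal.span {g} ↔ f * s ∈ I ⊔ P * Ideal.span {f} ⊔ Q * Ideal.span {g} := by
  simp only [mem_sup_sup_iff, Ideal.mem_mul_span_singleton]
  constructor
  · rintro ⟨a, ha, p, hp, _, ⟨q, hq, rfl⟩, rfl⟩
    exact ⟨f * a, I.mul_mem_left _ ha, p * f, ⟨p, hp, rfl⟩, f * q * g,
      ⟨f * q, Q.mul_mem_left _ hq, rfl⟩, by ring⟩
  rintro ⟨a, ha, _, ⟨p, hp, rfl⟩, _, ⟨q, hq, rfl⟩, heq⟩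
  have hqf : q ∈ I ⊔ Ideal.span {f} := hh q <| Submodule.mem_sup.2
    ⟨-a, I.neg_mem ha, (s - p - q) * f, Ideal.mem_span_singleton'.2 ⟨_, rfl⟩, by
      rw [hg] at heq
      linear_combination -heq⟩
  obtain ⟨a', ha', _, hcf, hq'⟩ := Submodule.mem_sup.1 hqf
  obtain ⟨c, rfl⟩ := Ideal.mem_span_singleton'.1 hcf
  have hc : c ∈ I ⊔ Q := hfQ c <| Submodule.mem_sup.2
    ⟨-a', I.neg_mem ha', q, hq, by linear_combination -hq'⟩
  obtain ⟨a'', ha'', q', hq'', rfl⟩ := Submodule.mem_sup.1 hc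
  have hrest : s - p - (a'' + q') * g ∈ I := by
    apply hf
    have hsub : f * (s - p - (a'' + q') * g) = a + a' * g := by
      linear_combination -heq - g * hq'
    exact hsub ▸ I.add_mem ha (I.mul_mem_right _ ha')
  exact ⟨s - p - (a'' + q') * g + a'' * g, I.add_mem hrest (I.mul_mem_right _ ha''), p, hp,
    q' * g, ⟨q', hq'', rfl⟩, by ring⟩

theorem sup_mul_sup_mul_sup_span_singleton (hg : g = f + h) :
    I ⊔ P * Ideal.span {f} ⊔ Q * Ideal.span {g} ⊔ Ideal.span {f} =
      I ⊔ Ideal.span {f} ⊔ Q * Ideal.span {h} := by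
  have hle {a b : R} (hab : a - b ∈ Ideal.span {f}) :
      Q * Ideal.span {a} ≤ Ideal.span {f} ⊔ Q * Ideal.span {b} := by
    intro s hs
    obtain ⟨q, hq, rfl⟩ := Ideal.mem_mul_span_singleton.1 hs
    exact Submodule.mem_sup.2 ⟨q * (a - b), Ideal.mul_mem_left _ _ hab, q * b,
      Ideal.mem_mul_span_singleton.2 ⟨q, hq, rfl⟩, by ring⟩
  have hgh : Ideal.span {f} ⊔ Q * Ideal.span {g} = Ideal.span {f} ⊔ Q * Ideal.span {h} :=
    le_antisymm (sup_le le_sup_left (hle (by simp [hg])))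
      (sup_le le_sup_left (hle (by simp [hg])))
  rw [sup_right_comm, sup_mul_span_singleton_sup, sup_assoc, hgh, sup_assoc]

end IdealColon

section LinearForms

universe u v

variable {σ : Type u} {K : Type v} [CommRing K] {I Q : Ideal (MvPolynomial σ K)}
  {g : MvPolynomial σ K} {r : ℤ}

theorem X_sub_X_mem_polyGr (a b : σ) : (X a - X b : MvPolynomial σ K) ∈ polyGr σ K 1 :=
  sub_mem (X_mem_polyGr a) (X_mem_polyGr b)

theorem isHomogeneous_span_X_sub_X (a b : σ) :
    (Ideal.span {(X a - X b : MvPolynomial σ K)}).IsHomogeneous (homogeneousSubmodule σ K) :=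
  isHomogeneous_span_of_mem_polyGr fun _ hp => ⟨1, hp ▸ X_sub_X_mem_polyGr a b⟩

section

variable (hI : I.IsHomogeneous (homogeneousSubmodule σ K)) (hg : g ∈ polyGr σ K 1)
  (hreg : ∀ p, g * p ∈ I → p ∈ I) (hr : QuotRegLE I r)
include hI hg hreg hr

theorem QuotRegLE.sup_span_linear_nonZeroDivisor : QuotRegLE (I ⊔ Ideal.span {g}) r :=
  hr.sup_span_singleton hg hI (fun p => ⟨I.mul_mem_left g, hreg p⟩) (by simpa using hr)

theorem QuotRegLE.sup_mul_span_linear_nonZeroDivisor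
    (hQ : Q.IsHomogeneous (homogeneousSubmodule σ K))
    (hspan : (Ideal.span {g}).IsHomogeneous (homogeneousSubmodule σ K))
    (hrQ : QuotRegLE (I ⊔ Q) (r - 1)) : QuotRegLE (I ⊔ Q * Ideal.span {g}) r := by
  refine .of_colon_of_sup hg (hI.sup (hQ.mul hspan)) (mem_sup_iff_mul_mem hreg) hrQ ?_
  rw [sup_mul_span_singleton_sup]
  exact hr.sup_span_linear_nonZeroDivisor hI hg hreg

end

open Classical in
/-- The substitution of the variable `y` for the variable `z`. -/
noncomputable def substVar (K : Type v) [CommRing K] (z y : σ) :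
    MvPolynomial σ K →ₐ[K] MvPolynomial σ K :=
  aeval (Function.update X z (X y))

theorem substVar_X_self (z y : σ) : substVar K z y (X z) = X y := by
  simp [substVar]

theorem substVar_X_of_ne {z v : σ} (hv : v ≠ z) (y : σ) : substVar K z y (X v) = X v := by
  simp [substVar, hv]

theorem sub_substVar_mem (z y : σ) (p : MvPolynomial σ K) :
    p - substVar K z y p ∈ Ideal.span {X z - X y} := by
  have hcomp : (Ideal.Quotient.mkₐ K (Ideal.span {X z - X y})).comp (substVar K z y) =
      Ideal.Quotient.mkₐ K (Ideal.span {X z - X y}) := by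
    refine algHom_ext fun v => ?_
    rw [AlgHom.comp_apply]
    obtain rfl | hv := eq_or_ne v z
    · rw [substVar_X_self]
      exact (Ideal.Quotient.eq.2 (Ideal.mem_span_singleton_self _)).symm
    · rw [substVar_X_of_ne hv]
  exact Ideal.Quotient.eq.1 (DFunLike.congr_fun hcomp p).symm

theorem sup_span_X_sub_X_eq_comap {z y : σ} (hyz : y ≠ z)
    (hI : I ≤ I.comap (substVar K z y)) :
    I ⊔ Ideal.span {X z - X y} = I.comap (substVar K z y) := by
  refine le_antisymm (sup_le hI ?_) fun p hp => ?_
  · rw [Ideal.span_singleton_le_iff_mem, Ideal.mem_comap, map_sub, substVar_X_self,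
      substVar_X_of_ne hyz, sub_self]
    exact I.zero_mem
  · exact Submodule.mem_sup.2 ⟨_, hp, _, sub_substVar_mem z y p, add_sub_cancel _ _⟩

end LinearForms

section BinomialIdeal

universe u v

variable {σ : Type u} {K : Type v} {n : ℕ} {xs ys : Fin n → σ} {z : σ} {κ l : Fin n}

section CommRing

variable [CommRing K] (h : IsLabelling xs ys z)
include h

theorem minorsVarsIdeal_empty_eq_ker {w : σ → Fin n ⊕ Fin 3 →₀ ℕ} (hw : IsToricWeight xs ys z w) :
    minorsVarsIdeal K xs ys ∅ = RingHom.ker (toricHom K w ∅) :=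
  (minorsVarsIdeal_le_ker_toricHom hw fun _ => Iff.rfl).antisymm
    (ker_toricHom_le_minorsVarsIdeal h hw ∅)

theorem isPrime_minorsVarsIdeal_empty [IsDomain K] : (minorsVarsIdeal K xs ys ∅).IsPrime := by
  obtain ⟨w, hw⟩ := h.exists_isToricWeight
  exact minorsVarsIdeal_empty_eq_ker (K := K) h hw ▸ RingHom.ker_isPrime _

theorem X_sub_X_notMem_minorsVarsIdeal_empty [Nontrivial K] {w : σ → Fin n ⊕ Fin 3 →₀ ℕ}
    (hw : IsToricWeight xs ys z w) {a b : σ} (hab : w a ≠ w b) :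
    (X a - X b : MvPolynomial σ K) ∉ minorsVarsIdeal K xs ys ∅ := by
  rw [minorsVarsIdeal_empty_eq_ker h hw, RingHom.mem_ker, map_sub, sub_eq_zero,
    toricHom_X_of_notMem (Set.notMem_empty a), toricHom_X_of_notMem (Set.notMem_empty b)]
  exact fun heq => hab (monomial_left_injective one_ne_zero heq)

theorem z_sub_y_notMem_minorsVarsIdeal_empty [Nontrivial K] (i : Fin n) :
    (X z - X (ys i) : MvPolynomial σ K) ∉ minorsVarsIdeal K xs ys ∅ := by
  obtain ⟨w, hw⟩ := h.exists_isToricWeight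
  refine X_sub_X_notMem_minorsVarsIdeal_empty h hw fun heq => ?_
  simpa [hw.map_y, hw.map_z] using DFunLike.congr_fun heq (Sum.inr 1)

theorem y_sub_x_notMem_minorsVarsIdeal_empty [Nontrivial K] (i j : Fin n) :
    (X (ys i) - X (xs j) : MvPolynomial σ K) ∉ minorsVarsIdeal K xs ys ∅ := by
  obtain ⟨w, hw⟩ := h.exists_isToricWeight
  refine X_sub_X_notMem_minorsVarsIdeal_empty h hw fun heq => ?_
  simpa [hw.map_x, hw.map_y] using DFunLike.congr_fun heq (Sum.inr 1)

theorem minorsVarsIdeal_empty_sup_eq_comap (i : Fin n) :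
    minorsVarsIdeal K xs ys ∅ ⊔ Ideal.span {X z - X (ys i)} =
      (minorsVarsIdeal K xs ys ∅).comap (substVar K z (ys i)) := by
  refine sup_span_X_sub_X_eq_comap (h.y_ne_z i) (Ideal.span_le.2 ?_)
  rintro _ (⟨i, j, rfl⟩ | ⟨v, ⟨⟩, -⟩)
  simp only [SetLike.mem_coe, Ideal.mem_comap, map_sub, map_mul, substVar_X_of_ne (h.x_ne_z _),
    substVar_X_of_ne (h.y_ne_z _)]
  exact minor_mem_minorsVarsIdeal ∅ i j

section IsDomain

variable [IsDomain K]

theorem mem_of_z_sub_y_mul_mem (i : Fin n) (s : MvPolynomial σ K)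
    (hs : (X z - X (ys i)) * s ∈ minorsVarsIdeal K xs ys ∅) : s ∈ minorsVarsIdeal K xs ys ∅ :=
  ((isPrime_minorsVarsIdeal_empty h).mem_or_mem hs).resolve_left
    (z_sub_y_notMem_minorsVarsIdeal_empty h i)

theorem mem_of_y_sub_x_mul_mem (i j : Fin n) (s : MvPolynomial σ K)
    (hs : (X (ys i) - X (xs j)) * s ∈
      minorsVarsIdeal K xs ys ∅ ⊔ Ideal.span {X z - X (ys i)}) :
    s ∈ minorsVarsIdeal K xs ys ∅ ⊔ Ideal.span {X z - X (ys i)} := by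
  rw [minorsVarsIdeal_empty_sup_eq_comap h, Ideal.mem_comap] at hs ⊢
  rw [map_mul, map_sub, substVar_X_of_ne (h.y_ne_z i), substVar_X_of_ne (h.x_ne_z j)] at hs
  exact ((isPrime_minorsVarsIdeal_empty h).mem_or_mem hs).resolve_left
    (y_sub_x_notMem_minorsVarsIdeal_empty h i j)

end IsDomain

end CommRing

/-- The ideal `I₂ + (xⱼ : j > κ)(z - y_κ) + (yⱼ : j ≤ κ)(z - x_l)`, where `I₂` is generated by the
`2 × 2` minors of the matrix with rows `xs` and `ys`. For `l = κ + 1` it is the join-meet ideal of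
the lattice `L_l` of the paper. -/
noncomputable def lkBinomialIdeal (K : Type v) [CommRing K] (xs ys : Fin n → σ) (z : σ)
    (κ l : Fin n) : Ideal (MvPolynomial σ K) :=
  minorsVarsIdeal K xs ys ∅ ⊔
    Ideal.span (X '' (xs '' {j | κ < j})) * Ideal.span {X z - X (ys κ)} ⊔
    Ideal.span (X '' (ys '' {j | j ≤ κ})) * Ideal.span {X z - X (xs l)}

theorem isHomogeneous_lkBinomialIdeal [CommRing K] (xs ys : Fin n → σ) (z : σ) (κ l : Fin n) :
    (lkBinomialIdeal K xs ys z κ l).IsHomogeneous (homogeneousSubmodule σ K) :=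
  ((isHomogeneous_minorsVarsIdeal xs ys ∅).sup
    ((isHomogeneous_span_X_image _).mul (isHomogeneous_span_X_sub_X z _))).sup
    ((isHomogeneous_span_X_image _).mul (isHomogeneous_span_X_sub_X z _))

section Field

variable [Field K] [Finite σ] (h : IsLabelling xs ys z)
include h

theorem quotRegLE_minorsVarsIdeal_sup_mul {U V : Set σ} {v : σ} (hz : z ∉ U) (hv : v ∈ U) :
    QuotRegLE (minorsVarsIdeal K xs ys U ⊔
      Ideal.span (X '' V) * Ideal.span {X z - X v}) 2 :=
  QuotRegLE.sup_mul_span_linear_nonZeroDivisor (isHomogeneous_minorsVarsIdeal xs ys U)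
    (X_sub_X_mem_polyGr z v) (fun _ => mem_minorsVarsIdeal_of_X_sub_X_mul_mem h hz hv)
    ((quotRegLE_minorsVarsIdeal h U).mono one_le_two) (isHomogeneous_span_X_image V)
    (isHomogeneous_span_X_sub_X z v)
    (minorsVarsIdeal_union (K := K) (xs := xs) (ys := ys) U V ▸ quotRegLE_minorsVarsIdeal h (U ∪ V))

theorem quotRegLE_minorsVarsIdeal_sup_sup_mul {V : Set σ} {i : Fin n} (j : Fin n) (hz : z ∉ V)
    (hi : ys i ∈ V) :
    QuotRegLE (minorsVarsIdeal K xs ys ∅ ⊔ Ideal.span {X z - X (ys i)} ⊔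
      Ideal.span (X '' V) * Ideal.span {X (ys i) - X (xs j)}) 3 := by
  have hI₂ := isHomogeneous_minorsVarsIdeal (K := K) xs ys ∅
  have hspan (a b : σ) := isHomogeneous_span_X_sub_X (K := K) a b
  refine QuotRegLE.sup_mul_span_linear_nonZeroDivisor (hI₂.sup (hspan z _))
    (X_sub_X_mem_polyGr _ _) (mem_of_y_sub_x_mul_mem h i j) ?_ (isHomogeneous_span_X_image V)
    (hspan _ _) ?_
  · exact ((quotRegLE_minorsVarsIdeal h ∅).sup_span_linear_nonZeroDivisor hI₂
      (X_sub_X_mem_polyGr z _) (mem_of_z_sub_y_mul_mem h i)).mono (by norm_num)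
  · rw [sup_right_comm, ← minorsVarsIdeal_union, Set.empty_union]
    exact ((quotRegLE_minorsVarsIdeal h V).sup_span_linear_nonZeroDivisor
      (isHomogeneous_minorsVarsIdeal xs ys V) (X_sub_X_mem_polyGr z _)
      (fun _ => mem_minorsVarsIdeal_of_X_sub_X_mul_mem h hz hi)).mono (by norm_num)

theorem quotRegLE_lkBinomialIdeal (hκl : κ < l) : QuotRegLE (lkBinomialIdeal K xs ys z κ l) 3 := by
  have hzx : z ∉ xs '' {j | κ < j} := fun ⟨j, _, hj⟩ => h.x_ne_z j hj
  have hzy : z ∉ ys '' {j | j ≤ κ} := fun ⟨j, _, hj⟩ => h.y_ne_z j hj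
  have hl : xs l ∈ xs '' {j | κ < j} := ⟨l, hκl, rfl⟩
  have hκ : ys κ ∈ ys '' {j | j ≤ κ} := ⟨κ, le_refl κ, rfl⟩
  have hsum : (X z - X (xs l) : MvPolynomial σ K) = X z - X (ys κ) + (X (ys κ) - X (xs l)) := by
    ring
  refine .of_colon_of_sup (X_sub_X_mem_polyGr z (ys κ)) (isHomogeneous_lkBinomialIdeal xs ys z κ l)
    (mem_sup_sup_iff_mul_mem hsum (mem_of_z_sub_y_mul_mem h κ) (mem_of_y_sub_x_mul_mem h κ l) ?_)
    ?_ ?_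
  · rw [← minorsVarsIdeal_union, Set.empty_union]
    exact fun _ => mem_minorsVarsIdeal_of_X_sub_X_mul_mem h hzy hκ
  · rw [← minorsVarsIdeal_union, Set.empty_union]
    exact quotRegLE_minorsVarsIdeal_sup_mul h hzx hl
  · rw [lkBinomialIdeal, sup_mul_sup_mul_sup_span_singleton hsum]
    exact quotRegLE_minorsVarsIdeal_sup_sup_mul h l hzy hκ

end Field

end BinomialIdeal

section Regularity

universe u v

variable {σ : Type u} {K : Type v} [Field K] {n : ℕ} {xs ys : Fin n → σ} {z : σ} {κ l : Fin n}
  {I : Ideal (MvPolynomial σ K)}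

theorem regEq_of_quotRegLE [Finite σ] {r : ℕ} (hI : I.IsHomogeneous (homogeneousSubmodule σ K))
    (hne : I ≠ ⊤) (hr : QuotRegLE I r)
    (hattained : ∀ F : MinGradedFreeRes K σ I, ∃ i, ∃ b : F.B i, F.deg i b = i + r) :
    RegEq I r := by
  refine ⟨exists_minGradedFreeRes hI hne, fun F => ⟨fun i b => ?_, hattained F⟩⟩
  have hdeg := hr.deg_le hI (F := F) i b
  omega

theorem lkBinomialIdeal_le_iff {K : Type v} [CommRing K] {J : Ideal (MvPolynomial σ K)} :
    lkBinomialIdeal K xs ys z κ l ≤ J ↔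
      (∀ i j, X (xs j) * X (ys i) - X (xs i) * X (ys j) ∈ J) ∧
      (∀ j, κ < j → X (xs j) * (X z - X (ys κ)) ∈ J) ∧
      ∀ j ≤ κ, X (ys j) * (X z - X (xs l)) ∈ J := by
  rw [lkBinomialIdeal, minorsVarsIdeal, Ideal.span_mul_span', Ideal.span_mul_span', sup_le_iff,
    sup_le_iff, Ideal.span_le, Ideal.span_le, Ideal.span_le, and_assoc]
  simp [Set.subset_def, @forall_comm (MvPolynomial σ K)]

theorem lkBinomialIdeal_ne_top {K : Type v} [CommRing K] [Nontrivial K] :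
    lkBinomialIdeal K xs ys z κ l ≠ ⊤ :=
  ne_top_of_le_ne_top (RingHom.ker_ne_top (constantCoeff (R := K) (σ := σ))) <|
    lkBinomialIdeal_le_iff.2 <| by simp [RingHom.mem_ker]

theorem lkInitialIdeal_ne_top {K : Type v} [CommRing K] [Nontrivial K] :
    lkInitialIdeal K xs ys z κ l ≠ ⊤ := by
  refine ne_top_of_le_ne_top (RingHom.ker_ne_top (constantCoeff (R := K) (σ := σ))) ?_
  rw [lkInitialIdeal, Ideal.span_le]
  rintro f ((((((⟨i, j, -, rfl⟩ | ⟨i, -, rfl⟩) | ⟨j, -, rfl⟩) | ⟨i, j, -, -, rfl⟩) |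
    ⟨i, j, -, -, rfl⟩) | ⟨i, -, rfl⟩) | rfl) <;> simp [RingHom.mem_ker]

namespace IsKoszulWeight

variable {T : Type v} [CommRing T] {p q a : T} {w : σ → T}

theorem minor_mem (hw : IsKoszulWeight p q a xs ys z κ l w) {J : Ideal T}
    (ha : a * a - p * q ∈ J) (i j : Fin n) : w (xs j) * w (ys i) - w (xs i) * w (ys j) ∈ J := by
  by_cases hi : i ≠ κ ∧ i ≠ l
  · simp [hw.x_eq_zero i hi.1 hi.2, hw.y_eq_zero i hi.1 hi.2]
  by_cases hj : j ≠ κ ∧ j ≠ l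
  · simp [hw.x_eq_zero j hj.1 hj.2, hw.y_eq_zero j hj.1 hj.2]
  rw [ne_eq, ne_eq, ← not_or, not_not] at hi hj
  rcases hi with rfl | rfl <;> rcases hj with rfl | rfl <;>
    simp only [hw.x_left, hw.x_right, hw.y_left, hw.y_right, sub_self, zero_mem]
  · rwa [← neg_mem_iff, neg_sub]
  · simpa only [mul_comm q] using ha

variable {K : Type*} [CommRing K] [Algebra K T]

theorem lkBinomialIdeal_le_comap (hw : IsKoszulWeight p q a xs ys z κ l w) (hκl : κ < l) :
    lkBinomialIdeal K xs ys z κ l ≤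
      (Ideal.span {p ^ 2, q ^ 2, a ^ 2 - p * q}).comap (aeval w).toRingHom := by
  set J := Ideal.span {p ^ 2, q ^ 2, a ^ 2 - p * q}
  have hp : p * p ∈ J := Ideal.subset_span (.inl (sq _).symm)
  have hq : q * q ∈ J := Ideal.subset_span (.inr <| .inl (sq _).symm)
  have ha : a * a - p * q ∈ J := Ideal.subset_span (.inr <| .inr <| congrArg (· - _) (sq _).symm)
  simp only [lkBinomialIdeal_le_iff, Ideal.mem_comap, AlgHom.toRingHom_eq_coe, RingHom.coe_coe,
    map_sub, map_mul, aeval_X, hw.map_z, hw.x_right, hw.y_left, add_sub_cancel_left,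
    add_sub_cancel_right]
  refine ⟨hw.minor_mem ha, fun j hj => ?_, fun j hj => ?_⟩
  · obtain rfl | hjl := eq_or_ne j l
    · rwa [hw.x_right]
    · simp [hw.x_eq_zero j hj.ne' hjl]
  · obtain rfl | hjκ := eq_or_ne j κ
    · rwa [hw.y_left]
    · simp [hw.y_eq_zero j hjκ (hj.trans_lt hκl).ne]

theorem lkInitialIdeal_le_comap (hw : IsKoszulWeight p q a xs ys z κ l w)
    (hκl : (κ : ℕ) + 1 = l) :
    lkInitialIdeal K xs ys z κ l ≤
      (Ideal.span {p, q ^ 3, a ^ 2}).comap (aeval w).toRingHom := by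
  set J := Ideal.span {p, q ^ 3, a ^ 2}
  have hp : p ∈ J := Ideal.subset_span (.inl rfl)
  have hq : q ^ 3 ∈ J := Ideal.subset_span (.inr <| .inl rfl)
  have ha : a * a ∈ J := Ideal.subset_span (.inr <| .inr (sq _).symm)
  have hx {i : Fin n} (hi : (i : ℕ) + 1 < l) : w (xs i) = 0 := hw.x_eq_zero i (by omega) (by omega)
  rw [lkInitialIdeal, Ideal.span_le]
  rintro f ((((((⟨i, j, hij, rfl⟩ | ⟨i, hi, rfl⟩) | ⟨j, hj, rfl⟩) | ⟨i, j, hi, -, rfl⟩) |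
    ⟨i, j, hi, -, rfl⟩) | ⟨i, hi, rfl⟩) | rfl) <;>
  simp only [SetLike.mem_coe, Ideal.mem_comap, AlgHom.toRingHom_eq_coe, RingHom.coe_coe, map_mul,
    aeval_X, hw.x_left, hw.x_right, hw.y_left, hw.y_right, hw.map_z]
  · obtain hjκ | rfl | hjl := lt_trichotomy j l
    · simp [hw.y_eq_zero i (by omega) (by omega)]
    · rw [hw.x_right]
      exact J.mul_mem_right _ hp
    · simp [hw.x_eq_zero j (by omega) (by omega)]
  · simp [hx hi]
  · obtain rfl | hjl := eq_or_ne j l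
    · rwa [hw.y_right]
    · simp [hw.y_eq_zero j (by omega) hjl]
  · simp [hx hi]
  · simp [hx hi]
  · obtain rfl | hiκ := eq_or_ne i κ
    · rw [hw.y_left, show q * q * (p + q) = q * q * p + q ^ 3 by ring]
      exact J.add_mem (J.mul_mem_left _ hp) hq
    · simp [hw.y_eq_zero i hiκ (by omega)]
  · exact J.mul_mem_right _ hp

end IsKoszulWeight

section

variable [Finite σ] (h : IsLabelling xs ys z)
include h

theorem regEq_lkBinomialIdeal (hκl : κ < l) : RegEq (lkBinomialIdeal K xs ys z κ l) 3 := by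
  obtain ⟨w, hw⟩ := h.exists_isKoszulWeight hκl.ne (Trivariate.p K) (Trivariate.q K)
    (Trivariate.a K)
  obtain ⟨hminor, hx, hy⟩ := lkBinomialIdeal_le_iff.1 (le_refl (lkBinomialIdeal K xs ys z κ l))
  have hI := isHomogeneous_lkBinomialIdeal (K := K) xs ys z κ l
  refine regEq_of_quotRegLE hI lkBinomialIdeal_ne_top (quotRegLE_lkBinomialIdeal h hκl) fun F =>
    ⟨3, hw.exists_deg_eq_six_of_binomials h hI ?_ ?_ ?_ (hw.lkBinomialIdeal_le_comap hκl) F⟩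
  · simpa only [mul_sub] using hx l hκl
  · simpa only [mul_sub, mul_comm (X (xs l))] using hy κ le_rfl
  · exact hminor l κ

theorem regEq_lkInitialIdeal (hκl : (κ : ℕ) + 1 = l) :
    RegEq (lkInitialIdeal K xs ys z κ l) 3 := by
  have hlt : κ < l := by omega
  obtain ⟨w, hw⟩ := h.exists_isKoszulWeight hlt.ne (Trivariate.p K) (Trivariate.q K)
    (Trivariate.a K)
  have hI := isHomogeneous_lkInitialIdeal (K := K) h hκl
  refine regEq_of_quotRegLE hI lkInitialIdeal_ne_top (quotRegLE_lkInitialIdeal h hκl) fun F =>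
    ⟨3, hw.exists_deg_eq_six_of_monomials h hI ?_ ?_ ?_ (hw.lkInitialIdeal_le_comap hκl) F⟩
  · exact Ideal.subset_span (.inl <| .inl <| .inl <| .inl <| .inr ⟨l, le_rfl, rfl⟩)
  · exact Ideal.subset_span (.inl <| .inl <| .inl <| .inl <| .inl <| .inl ⟨κ, l, hlt, rfl⟩)
  · exact Ideal.subset_span (.inl <| .inr ⟨κ, hlt, rfl⟩)

end

end Regularity

section JoinMeetIdeal

universe u v

/-- The lattice `L_l` of the paper, given by its order relation: two chains `xs` and `ys` with
`xs i ≤ ys j ↔ i ≤ j`, and an element `z` which forms a diamond with `xs l`, `ys (l - 1)` and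
their bounds. Indices count from `0`. -/
structure IsLk {L : Type u} [Lattice L] {n : ℕ} (xs ys : Fin n → L) (z : L) (l : Fin n) :
    Prop where
  x_le_x : ∀ i j, xs i ≤ xs j ↔ i ≤ j
  y_le_y : ∀ i j, ys i ≤ ys j ↔ i ≤ j
  x_le_y : ∀ i j, xs i ≤ ys j ↔ i ≤ j
  not_y_le_x : ∀ i j, ¬ys i ≤ xs j
  x_le_z : ∀ i, xs i ≤ z ↔ i < l
  not_z_le_x : ∀ i, ¬z ≤ xs i
  z_le_y : ∀ i, z ≤ ys i ↔ l ≤ i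
  not_y_le_z : ∀ i, ¬ys i ≤ z
  cases : ∀ w, (∃ i, w = xs i) ∨ (∃ i, w = ys i) ∨ w = z

namespace IsLk

variable {L : Type u} [Lattice L] {n : ℕ} {xs ys : Fin n → L} {z : L} {κ l : Fin n}
  (h : IsLk xs ys z l)
include h

theorem isLabelling : IsLabelling xs ys z where
  x_injective i j hij := le_antisymm ((h.x_le_x i j).1 hij.le) ((h.x_le_x j i).1 hij.ge)
  y_injective i j hij := le_antisymm ((h.y_le_y i j).1 hij.le) ((h.y_le_y j i).1 hij.ge)
  x_ne_y i j hij := h.not_y_le_x j i hij.ge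
  x_ne_z i hi := h.not_z_le_x i hi.ge
  y_ne_z i hi := h.not_y_le_z i hi.le
  cases := h.cases

theorem x_inf_y {i j : Fin n} (hij : i ≤ j) : xs j ⊓ ys i = xs i := by
  refine eq_of_forall_le_iff (h.isLabelling.forall_of (fun m => ?_) (fun m => ?_) ?_) <;>
    simp only [le_inf_iff, h.x_le_x, h.y_le_y, h.x_le_y, h.not_y_le_x, h.not_z_le_x, h.z_le_y,
      false_and]
  all_goals grind

theorem x_sup_y {i j : Fin n} (hij : i ≤ j) : xs j ⊔ ys i = ys j := by
  refine eq_of_forall_ge_iff (h.isLabelling.forall_of (fun m => ?_) (fun m => ?_) ?_) <;>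
    simp only [sup_le_iff, h.x_le_x, h.y_le_y, h.x_le_y, h.not_y_le_x, h.x_le_z, h.not_y_le_z,
      and_false]
  all_goals grind

theorem x_inf_z (hκl : (κ : ℕ) + 1 = l) {j : Fin n} (hj : l ≤ j) : xs j ⊓ z = xs κ := by
  refine eq_of_forall_le_iff (h.isLabelling.forall_of (fun m => ?_) (fun m => ?_) ?_) <;>
    simp only [le_inf_iff, h.x_le_x, h.not_y_le_x, h.x_le_z, h.not_z_le_x, h.not_y_le_z, le_refl,
      and_self, and_true]
  all_goals grind

theorem x_sup_z {j : Fin n} (hj : l ≤ j) : xs j ⊔ z = ys j := by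
  refine eq_of_forall_ge_iff (h.isLabelling.forall_of (fun m => ?_) (fun m => ?_) ?_) <;>
    simp only [sup_le_iff, h.x_le_x, h.y_le_y, h.x_le_y, h.not_y_le_x, h.x_le_z, h.not_z_le_x,
      h.z_le_y, h.not_y_le_z, le_refl, and_false, and_true]
  all_goals grind

theorem y_inf_z {i : Fin n} (hi : i < l) : ys i ⊓ z = xs i := by
  refine eq_of_forall_le_iff (h.isLabelling.forall_of (fun m => ?_) (fun m => ?_) ?_) <;>
    simp only [le_inf_iff, h.x_le_x, h.y_le_y, h.x_le_y, h.not_y_le_x, h.x_le_z, h.not_z_le_x,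
      h.z_le_y, h.not_y_le_z, le_refl, and_false, and_true]
  all_goals grind

theorem y_sup_z {i : Fin n} (hi : i < l) : ys i ⊔ z = ys l := by
  refine eq_of_forall_ge_iff (h.isLabelling.forall_of (fun m => ?_) (fun m => ?_) ?_) <;>
    simp only [sup_le_iff, h.y_le_y, h.not_y_le_x, h.not_z_le_x, h.z_le_y, h.not_y_le_z, le_refl,
      and_self, and_true]
  all_goals grind

theorem forall_incomparable_iff {P : L → L → Prop} (hP : ∀ a b, P a b → P b a) :
    (∀ a b, ¬a ≤ b → ¬b ≤ a → P a b) ↔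
      (∀ i j, i < j → P (xs j) (ys i)) ∧ (∀ j, l ≤ j → P (xs j) z) ∧
        ∀ i, i < l → P (ys i) z := by
  refine ⟨fun H => ⟨fun i j hij => H _ _ (by simpa [h.x_le_y]) (h.not_y_le_x i j),
    fun j hj => H _ _ (by simpa [h.x_le_z]) (h.not_z_le_x j),
    fun i hi => H _ _ (h.not_y_le_z i) (by simpa [h.z_le_y])⟩, ?_⟩
  rintro ⟨hxy, hxz, hyz⟩ a b hab hba
  rcases h.cases a with ⟨i, rfl⟩ | ⟨i, rfl⟩ | rfl <;>
    rcases h.cases b with ⟨j, rfl⟩ | ⟨j, rfl⟩ | rfl <;>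
    simp only [h.x_le_x, h.x_le_y, h.x_le_z, h.y_le_y, h.z_le_y, not_le, not_lt, le_refl,
      not_true_eq_false] at hab hba
  all_goals grind

theorem joinMeetIdeal_eq {K : Type v} [Field K] (hκl : (κ : ℕ) + 1 = l) :
    joinMeetIdeal K L = lkBinomialIdeal K xs ys z κ l := by
  refine eq_of_forall_ge_iff fun J => ?_
  let P (a b : L) : Prop := X a * X b - X (a ⊓ b) * X (a ⊔ b) ∈ J
  have hP (a b : L) (hab : P a b) : P b a := by
    simpa only [P, mul_comm (X b), inf_comm b, sup_comm b] using hab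
  have hspan : joinMeetIdeal K L ≤ J ↔ ∀ a b, ¬a ≤ b → ¬b ≤ a → P a b := by
    rw [joinMeetIdeal, Ideal.span_le]
    exact ⟨fun H a b hab hba => H ⟨a, b, hab, hba, rfl⟩,
      fun H f ⟨a, b, hab, hba, hf⟩ => hf ▸ H a b hab hba⟩
  have hminor : (∀ i j, i < j → P (xs j) (ys i)) ↔
      ∀ i j, X (xs j) * X (ys i) - X (xs i) * X (ys j) ∈ J := by
    refine ⟨fun H i j => ?_, fun H i j hij => ?_⟩
    · obtain hij | rfl | hji := lt_trichotomy i j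
      · simpa only [P, h.x_inf_y hij.le, h.x_sup_y hij.le] using H i j hij
      · simp
      · rw [← neg_mem_iff, neg_sub]
        simpa only [P, h.x_inf_y hji.le, h.x_sup_y hji.le] using H j i hji
    · simpa only [P, h.x_inf_y hij.le, h.x_sup_y hij.le] using H i j
  rw [hspan, h.forall_incomparable_iff hP, lkBinomialIdeal_le_iff, hminor]
  refine and_congr_right fun hmin => and_congr (forall_congr' fun j =>
    imp_congr_ctx (by omega) fun hj => ?_) (forall_congr' fun j =>
      imp_congr_ctx (by omega) fun hj => ?_)
  · simp only [P, h.x_inf_z hκl (show l ≤ j by omega), h.x_sup_z (show l ≤ j by omega)]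
    rw [← J.sub_mem_iff_left (hmin κ j)]
    congr! 1
    ring
  · simp only [P, h.y_inf_z (show j < l by omega), h.y_sup_z (show j < l by omega)]
    rw [← J.sub_mem_iff_left (hmin j l)]
    congr! 1
    ring

end IsLk

end JoinMeetIdeal

end LkRegularity

/-- The lattice `L_k` of the paper: `2n+1` elements `x_1 < ⋯ < x_n`, `y_1 < ⋯ < y_n`, `z`,
with `x_i ≤ y_j ↔ i ≤ j`, no `y` below any `x`, and `z` satisfying `x_i ≤ z ↔ i ≤ k`,
`z ≤ y_j ↔ j ≥ k+1`, `z` below no `x` and above no `y` (so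
`{x_k, x_{k+1}, y_k, z, y_{k+1}}` is a diamond).  Here `xs i = x_{i+1}`, `ys i = y_{i+1}`.
For its join-meet ideal `I = I_{L_k} ⊆ S = K[x_1,…,x_n,y_1,…,y_n,z]` we have
`reg(S/I) = reg(S/in_<(I)) = 3`, where `in_<(I)` is the initial ideal w.r.t. the
lexicographic order induced by `x_1 > ⋯ > x_n > y_1 > ⋯ > y_n > z`, which is generated by
the explicit monomials below. -/
theorem reg_three_of_Lk (K : Type*) [Field K] (n k : ℕ) (hn : 2 ≤ n)
    (hk1 : 1 ≤ k) (hk2 : k ≤ n - 1)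
    (L : Type*) [Lattice L] [Fintype L] (xs ys : Fin n → L) (z : L)
    (hxx : ∀ i j : Fin n, xs i ≤ xs j ↔ i ≤ j)
    (hyy : ∀ i j : Fin n, ys i ≤ ys j ↔ i ≤ j)
    (hxy : ∀ i j : Fin n, xs i ≤ ys j ↔ i ≤ j)
    (hyx : ∀ i j : Fin n, ¬ ys i ≤ xs j)
    (hxz : ∀ i : Fin n, xs i ≤ z ↔ (i : ℕ) < k)
    (hzx : ∀ i : Fin n, ¬ z ≤ xs i)
    (hzy : ∀ i : Fin n, z ≤ ys i ↔ k ≤ (i : ℕ))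
    (hyz : ∀ i : Fin n, ¬ ys i ≤ z)
    (hall : ∀ w : L, (∃ i, w = xs i) ∨ (∃ i, w = ys i) ∨ w = z) :
    RegEq (joinMeetIdeal K L) 3 ∧
      RegEq (Ideal.span
        ({f | ∃ i j : Fin n, i < j ∧ f = (X (xs j) * X (ys i) : MvPolynomial L K)} ∪
          {f | ∃ i : Fin n, (i : ℕ) + 1 < k ∧ f = X (xs i) * X (ys ⟨k, by omega⟩)} ∪
          {f | ∃ j : Fin n, k ≤ (j : ℕ) ∧ f = X (xs ⟨k - 1, by omega⟩) * X (ys j)} ∪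
          {f | ∃ i j : Fin n, (i : ℕ) + 1 < k ∧ k < (j : ℕ) ∧
            f = X (xs i) * X (xs ⟨k, by omega⟩) * X (ys j)} ∪
          {f | ∃ i j : Fin n, (i : ℕ) + 1 < k ∧ k < (j : ℕ) ∧
            f = X (xs i) * X (ys ⟨k - 1, by omega⟩) * X (ys j)} ∪
          {f | ∃ i : Fin n, (i : ℕ) < k ∧ f = X (ys i) * X (ys ⟨k - 1, by omega⟩) * X z} ∪
          {X (xs ⟨k, by omega⟩) * X z})) 3 := by
  let κ : Fin n := ⟨k - 1, by omega⟩
  let l : Fin n := ⟨k, by omega⟩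
  have hκl : (κ : ℕ) + 1 = l := Nat.sub_add_cancel hk1
  have hL : LkRegularity.IsLk xs ys z l := ⟨hxx, hyy, hxy, hyx, hxz, hzx, hzy, hyz, hall⟩
  have hjoinMeet := LkRegularity.regEq_lkBinomialIdeal (K := K) hL.isLabelling (show κ < l by omega)
  have hinitial := LkRegularity.regEq_lkInitialIdeal (K := K) hL.isLabelling hκl
  rw [← hL.joinMeetIdeal_eq hκl] at hjoinMeet
  exact ⟨hjoinMeet, hinitial⟩
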